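/- arXiv:1509.03871 — 4 statements merged into one kernel-verified Lean document; each statement's English description precedes it below -/
import Mathlib

section
/- Let 0 < α < 1/2 and ε > 0. For all sufficiently large n there exists a set F of 3-element subsets of {1,…,n} with |F| ≥ n^{2+α} such that every nontrivial Z/2 2-cycle Z ⊆ F satisfies |Z| ≥ n^{2−2α−ε}; that is, there exist simplicial complexes on n vertices with at least n^{2+α} faces and 2-girth at least n^{2−2α−ε}. -/
/-- A `Z/2` 2-cycle: a finite set `Z` of 3-element subsets of the vertex type `V`
such that every 2-element subset of `V` is contained in an even number of members of `Z`. -/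
def IsTwoCycle {V : Type} [DecidableEq V] (Z : Finset (Finset V)) : Prop :=
  (∀ t ∈ Z, t.card = 3) ∧
  ∀ e : Finset V, e.card = 2 → Even ((Z.filter (fun t => e ⊆ t)).card)

namespace GirthAux

section trees
variable {V : Type} [DecidableEq V]

/-- labels of the boundary edges of the polygon encoded by a tree glued on the edge `(u,w)` -/
def edgesT : BinaryTree V → V → V → List (Sym2 V)
  | .nil, u, w => [s(u, w)]
  | .node x l r, u, w => edgesT l u x ++ edgesT r x w

/-- faces of the polygon encoded by a tree glued on `(u,w)` -/
def facesT : BinaryTree V → V → V → List (Finset V)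
  | .nil, _, _ => []
  | .node x l r, u, w => {u, w, x} :: (facesT l u x ++ facesT r x w)

theorem length_facesT (T : BinaryTree V) (u w : V) : (facesT T u w).length = T.numNodes := by
  induction T generalizing u w with
  | nil => simp [facesT, BinaryTree.numNodes]
  | node x l r ihl ihr => simp [facesT, BinaryTree.numNodes, ihl, ihr]

theorem extendT (T : BinaryTree V) (u w a b x : V) (h : s(a, b) ∈ edgesT T u w) :
    ∃ T', (facesT T' u w).Perm ({a, b, x} :: facesT T u w) := by
  induction T generalizing u w with
  | nil =>
    refine ⟨.node x .nil .nil, ?_⟩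
    simp only [edgesT, List.mem_singleton, Sym2.eq_iff] at h
    rcases h with ⟨rfl, rfl⟩ | ⟨rfl, rfl⟩
    · simp [facesT]
    · have : ({b, a, x} : Finset V) = {a, b, x} := by
        ext; simp; tauto
      simp [facesT, this]
  | node y l r ihl ihr =>
    simp only [edgesT, List.mem_append] at h
    rcases h with h | h
    · obtain ⟨T', hT'⟩ := ihl _ _ h
      refine ⟨.node y T' r, ?_⟩
      simp only [facesT]
      refine (List.Perm.cons _ (List.Perm.append_right _ hT')).trans ?_
      simp only [List.cons_append]
      exact List.Perm.swap _ _ _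
    · obtain ⟨T', hT'⟩ := ihr _ _ h
      refine ⟨.node y l T', ?_⟩
      simp only [facesT]
      refine (List.Perm.cons _ ((List.Perm.append_left _ hT').trans List.perm_middle)).trans ?_
      exact List.Perm.swap _ _ _

/-- indicator that the pair `a ≠ b` lies in the face `t` -/
def bd (a b : V) (t : Finset V) : ZMod 2 := if a ≠ b ∧ a ∈ t ∧ b ∈ t then 1 else 0

theorem bd_triple (a b u w x : V) (h : ({u, w, x} : Finset V).card = 3) :
    bd a b {u, w, x} = (if s(u, w) = s(a, b) then 1 else 0) + (if s(u, x) = s(a, b) then 1 else 0)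
      + (if s(x, w) = s(a, b) then 1 else 0) := by
  rw [Finset.card_eq_three] at h
  have h1 : u ≠ w ∧ u ≠ x ∧ w ≠ x := by
    have h' : ({u, w, x} : Finset V).card = 3 := by rw [Finset.card_eq_three]; exact h
    refine ⟨?_, ?_, ?_⟩
    · rintro rfl
      have := Finset.card_le_two (a := u) (b := x)
      simp at h'
      omega
    · rintro rfl
      have := Finset.card_le_two (a := u) (b := w)
      have e : ({u, w, u} : Finset V) = {u, w} := by ext; simp; tauto
      rw [e] at h'
      omega
    · rintro rfl
      have := Finset.card_le_two (a := u) (b := w)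
      simp at h'
      omega
  obtain ⟨h1, h2, h3⟩ := h1
  unfold bd
  simp only [Finset.mem_insert, Finset.mem_singleton, Sym2.eq_iff]
  by_cases e1 : a = u <;> by_cases e2 : a = w <;> by_cases e3 : a = x <;>
  by_cases e4 : b = u <;> by_cases e5 : b = w <;> by_cases e6 : b = x <;>
  first
  | (exfalso; subst_vars; simp_all; done)
  | grind

theorem parityT (T : BinaryTree V) (u w a b : V) (h : ∀ t ∈ facesT T u w, t.card = 3) :
    ((edgesT T u w).count s(a, b) : ZMod 2) =
      (if s(u, w) = s(a, b) then 1 else 0) + ((facesT T u w).map (bd a b)).sum := by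
  induction T generalizing u w with
  | nil => simp [edgesT, facesT, List.count_singleton]
  | node x l r ihl ihr =>
    simp only [facesT, List.mem_cons, List.mem_append] at h
    have hl := ihl u x (fun t ht => h t (Or.inr (Or.inl ht)))
    have hr := ihr x w (fun t ht => h t (Or.inr (Or.inr ht)))
    have h0 := bd_triple a b u w x (h _ (Or.inl rfl))
    simp only [edgesT, facesT, List.count_append, Nat.cast_add, hl, hr, List.map_cons,
      List.sum_cons, List.map_append, List.sum_append, h0]
    have h2 : (2 : ZMod 2) = 0 := rfl
    linear_combination (- (if s(u, w) = s(a, b) then (1 : ZMod 2) else 0)) * h2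

theorem sum_bd (l : List (Finset V)) (hl : l.Nodup) (a b : V) (hab : a ≠ b) :
    (l.map (bd a b)).sum = ((l.toFinset.filter (fun t => ({a, b} : Finset V) ⊆ t)).card : ZMod 2) := by
  rw [← List.sum_toFinset _ hl, Finset.card_filter]
  push_cast
  refine Finset.sum_congr rfl fun t _ => ?_
  simp [bd, hab, Finset.insert_subset_iff]

theorem sum_bd_diag (l : List (Finset V)) (a : V) :
    (l.map (bd a a)).sum = 0 := by
  apply List.sum_eq_zero
  simp [bd]

/-- minimal nonempty cycles -/
def MinCycle (Z : Finset (Finset V)) : Prop :=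
  Z.Nonempty ∧ IsTwoCycle Z ∧ ∀ Y ⊆ Z, Y.Nonempty → IsTwoCycle Y → Y = Z

theorem exists_minCycle (Z : Finset (Finset V)) (h : Z.Nonempty) (hc : IsTwoCycle Z) :
    ∃ Y ⊆ Z, MinCycle Y := by
  induction Z using Finset.strongInduction with
  | H Z ih =>
    by_cases hm : ∀ Y ⊆ Z, Y.Nonempty → IsTwoCycle Y → Y = Z
    · exact ⟨Z, subset_rfl, h, hc, hm⟩
    · push Not at hm
      obtain ⟨Y, hY, hn, hcY, hne⟩ := hm
      obtain ⟨X, hX, hmX⟩ := ih Y (hY.ssubset_of_ne hne) hn hcY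
      exact ⟨X, hX.trans hY, hmX⟩

theorem exists_pair (Z : Finset (Finset V)) (hZ : MinCycle Z) :
    ∃ u w : V, ∃ T₁ T₂ : BinaryTree V,
      (facesT T₁ w u ++ facesT T₂ u w).Nodup ∧
      (facesT T₁ w u ++ facesT T₂ u w).toFinset = Z := by
  obtain ⟨⟨t0, ht0⟩, ⟨hc3, hce⟩, hmin⟩ := hZ
  obtain ⟨u, w, x0, huw, -, -, ht0e⟩ := Finset.card_eq_three.1 (hc3 t0 ht0)
  refine ⟨u, w, ?_⟩
  have key : ∀ k ≤ Z.card, ∃ T₁ T₂ : BinaryTree V,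
      (facesT T₁ w u ++ facesT T₂ u w).Nodup ∧
      (facesT T₁ w u ++ facesT T₂ u w).toFinset ⊆ Z ∧
      (facesT T₁ w u ++ facesT T₂ u w).length = k := by
    intro k
    induction k with
    | zero => intro _; exact ⟨.nil, .nil, by simp [facesT], by simp [facesT], by simp [facesT]⟩
    | succ k ih =>
      intro hk
      obtain ⟨T₁, T₂, hnd, hsub, hlen⟩ := ih (by omega)
      set l := facesT T₁ w u ++ facesT T₂ u w with hl
      have hcard : l.toFinset.card = k := by rw [List.toFinset_card_of_nodup hnd, hlen]
      have hne : l.toFinset ≠ Z := by intro h; rw [h] at hcard; omega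
      have hmem : ∀ t ∈ l, t ∈ Z := fun t ht => hsub (List.mem_toFinset.2 ht)
      have claim : ∃ a b : V, a ≠ b ∧ s(a, b) ∈ edgesT T₁ w u ++ edgesT T₂ u w ∧
          ∃ t ∈ Z, t ∉ l ∧ ({a, b} : Finset V) ⊆ t := by
        by_cases h0 : l = []
        · have h1 : T₁ = .nil := by
            cases T₁ with
            | nil => rfl
            | node => simp [facesT, hl] at h0
          subst h1
          refine ⟨u, w, huw, by simp [edgesT, Sym2.eq_swap], t0, ht0, by simp [h0], ?_⟩
          rw [ht0e]; intro y; simp; tauto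
        · have hYn : l.toFinset.Nonempty := by
            rw [List.toFinset_nonempty_iff]; exact h0
          have hnc : ¬ IsTwoCycle l.toFinset := fun h => hne (hmin _ hsub hYn h)
          have h3 : ∀ t ∈ l.toFinset, t.card = 3 := fun t ht => hc3 t (hsub ht)
          unfold IsTwoCycle at hnc
          push Not at hnc
          obtain ⟨e, he2, hodd⟩ := hnc h3
          obtain ⟨a, b, hab, rfl⟩ := Finset.card_eq_two.1 he2
          refine ⟨a, b, hab, ?_, ?_⟩
          · have p1 := parityT T₁ w u a b (fun t ht => hc3 t (hmem t (by simp [hl, ht])))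
            have p2 := parityT T₂ u w a b (fun t ht => hc3 t (hmem t (by simp [hl, ht])))
            have p3 := sum_bd l hnd a b hab
            rw [← List.count_pos_iff]
            by_contra hcon
            have hz : List.count s(a, b) (edgesT T₁ w u ++ edgesT T₂ u w) = 0 := by omega
            have hz' := congrArg (Nat.cast (R := ZMod 2)) hz
            rw [List.count_append, Nat.cast_add, p1, p2, Sym2.eq_swap (a := w)] at hz'
            rw [hl, List.map_append, List.sum_append, ← hl] at p3
            have h2 : (2 : ZMod 2) = 0 := rfl
            have : ((l.toFinset.filter (fun t => ({a, b} : Finset V) ⊆ t)).card : ZMod 2) = 0 := by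
              rw [← p3]
              push_cast at hz'
              linear_combination hz' - (if s(u, w) = s(a, b) then (1 : ZMod 2) else 0) * h2
            rw [ZMod.natCast_eq_zero_iff_even] at this
            exact (Nat.not_even_iff_odd.2 (by simpa using hodd)) this
          · by_contra hcon
            push Not at hcon
            apply (Nat.not_even_iff_odd.2 (by simpa using hodd))
            have : l.toFinset.filter (fun t => ({a, b} : Finset V) ⊆ t)
                = Z.filter (fun t => ({a, b} : Finset V) ⊆ t) := by
              ext t
              simp only [Finset.mem_filter, List.mem_toFinset]
              constructor
              · rintro ⟨h1, h2⟩; exact ⟨hmem t h1, h2⟩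
              · rintro ⟨h1, h2⟩
                refine ⟨?_, h2⟩
                by_contra h3
                exact hcon t h1 h3 h2
            rw [this]
            exact hce _ he2
      obtain ⟨a, b, hab, hedge, t, htZ, htl, habt⟩ := claim
      have hx : ∃ x, t = {a, b, x} := by
        have hc : (t \ {a, b}).card = 1 := by
          rw [Finset.card_sdiff_of_subset habt, hc3 t htZ, Finset.card_pair hab]
        obtain ⟨x, hx⟩ := Finset.card_eq_one.1 hc
        refine ⟨x, ?_⟩
        rw [← Finset.sdiff_union_of_subset habt, hx]
        ext; simp; tauto
      obtain ⟨x, rfl⟩ := hx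
      have fin : ∀ l' : List (Finset V), l'.Perm (({a, b, x} : Finset V) :: l) → l'.Nodup ∧ l'.toFinset ⊆ Z ∧ l'.length = k + 1 := by
        intro l' hp
        refine ⟨hp.nodup_iff.2 (List.nodup_cons.2 ⟨htl, hnd⟩), ?_, by rw [hp.length_eq]; simp [hlen]⟩
        intro t ht
        rw [List.mem_toFinset, hp.mem_iff, List.mem_cons] at ht
        rcases ht with rfl | ht
        · exact htZ
        · exact hmem t ht
      rcases List.mem_append.1 hedge with h | h
      · obtain ⟨T', hT'⟩ := extendT T₁ w u a b x h
        refine ⟨T', T₂, fin _ ?_⟩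
        exact (List.Perm.append_right _ hT')
      · obtain ⟨T', hT'⟩ := extendT T₂ u w a b x h
        refine ⟨T₁, T', fin _ ?_⟩
        exact (List.Perm.append_left _ hT').trans List.perm_middle
  obtain ⟨T₁, T₂, h1, h2, h3⟩ := key _ le_rfl
  refine ⟨T₁, T₂, h1, Finset.eq_of_subset_of_card_le h2 ?_⟩
  rw [List.toFinset_card_of_nodup h1, h3]

/-- code for a minimal cycle -/
theorem exists_code (Z : Finset (Finset V)) (hZ : MinCycle Z) :
    ∃ (w : V) (T : BinaryTree V), T.numNodes = Z.card + 1 ∧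
      (facesT T w w).tail.toFinset = Z ∧ ∀ e, Even ((edgesT T w w).count e) := by
  obtain ⟨u, w, T₁, T₂, hnd, hZe⟩ := exists_pair Z hZ
  have hlen : T₁.numNodes + T₂.numNodes = Z.card := by
    rw [← hZe, List.toFinset_card_of_nodup hnd, List.length_append, length_facesT, length_facesT]
  refine ⟨w, .node u T₁ T₂, by simp [BinaryTree.numNodes, hlen], by simpa [facesT] using hZe, ?_⟩
  obtain ⟨-, ⟨hc3, hce⟩, -⟩ := hZ
  have hmem : ∀ t ∈ facesT T₁ w u ++ facesT T₂ u w, t ∈ Z := fun t ht => by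
    rw [← hZe]; exact List.mem_toFinset.2 ht
  intro e
  induction e using Sym2.ind with
  | _ a b =>
  have p1 := parityT T₁ w u a b (fun t ht => hc3 t (hmem t (List.mem_append_left _ ht)))
  have p2 := parityT T₂ u w a b (fun t ht => hc3 t (hmem t (List.mem_append_right _ ht)))
  have p3 : ((facesT T₁ w u ++ facesT T₂ u w).map (bd a b)).sum = 0 := by
    by_cases hab : a = b
    · subst hab; exact sum_bd_diag _ _
    · rw [sum_bd _ hnd a b hab, hZe, ZMod.natCast_eq_zero_iff_even]
      exact hce _ (Finset.card_pair hab)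
  rw [← ZMod.natCast_eq_zero_iff_even]
  rw [List.map_append, List.sum_append] at p3
  simp only [edgesT, List.count_append, Nat.cast_add, p1, p2]
  rw [Sym2.eq_swap (a := w)]
  have h2 : (2 : ZMod 2) = 0 := rfl
  linear_combination p3 + (if s(u, w) = s(a, b) then (1 : ZMod 2) else 0) * h2

variable [Fintype V]

/-- all labelled trees with a given number of nodes -/
def treesN : ℕ → Finset (BinaryTree V)
  | 0 => {.nil}
  | k + 1 => (Finset.HasAntidiagonal.antidiagonal k).attach.biUnion fun ij =>
      ((Finset.univ : Finset V) ×ˢ (treesN ij.1.1 ×ˢ treesN ij.1.2)).image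
        fun p => BinaryTree.node p.1 p.2.1 p.2.2
  decreasing_by
    · simp_wf; have := Finset.HasAntidiagonal.mem_antidiagonal.1 ij.2; lia
    · simp_wf; have := Finset.HasAntidiagonal.mem_antidiagonal.1 ij.2; lia

theorem treesN_succ (k : ℕ) : treesN (V := V) (k + 1) = (Finset.HasAntidiagonal.antidiagonal k).biUnion fun ij =>
      ((Finset.univ : Finset V) ×ˢ (treesN ij.1 ×ˢ treesN ij.2)).image
        fun p => BinaryTree.node p.1 p.2.1 p.2.2 := by
  rw [treesN]
  ext
  simp

theorem mem_treesN (T : BinaryTree V) (k : ℕ) : T ∈ treesN k ↔ T.numNodes = k := by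
  induction T generalizing k with
  | nil =>
    cases k with
    | zero => simp [treesN]
    | succ k => simp [treesN_succ, BinaryTree.numNodes]
  | node x l r ihl ihr =>
    cases k with
    | zero => simp [treesN, BinaryTree.numNodes]
    | succ k =>
      simp only [treesN_succ, Finset.mem_biUnion, Finset.mem_image, Finset.mem_product, Prod.exists,
        BinaryTree.numNodes, Finset.HasAntidiagonal.mem_antidiagonal]
      constructor
      · rintro ⟨i, j, hij, y, l', r', ⟨-, h1, h2⟩, h3⟩
        cases h3
        rw [ihl] at h1
        rw [ihr] at h2
        lia
      · intro h
        exact ⟨_, _, by lia, x, l, r, ⟨Finset.mem_univ _, (ihl _).2 rfl, (ihr _).2 rfl⟩, rfl⟩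

theorem sum_treesN (G : Matrix V V ℝ) (g : Sym2 V → ℝ) (hG : ∀ i j, G i j = g s(i, j))
    (k : ℕ) (u w : V) :
    ∑ T ∈ treesN k, ((edgesT T u w).map g).prod = catalan k * (G ^ (k + 1)) u w := by
  induction k using Nat.strong_induction_on generalizing u w with
  | _ k ih =>
  cases k with
  | zero => simp [treesN, edgesT, hG]
  | succ k =>
    rw [treesN_succ, Finset.sum_biUnion, catalan_succ']
    · push_cast
      rw [Finset.sum_mul]
      refine Finset.sum_congr rfl fun ij hij => ?_
      rw [Finset.HasAntidiagonal.mem_antidiagonal] at hij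
      rw [Finset.sum_image]
      · rw [Finset.sum_product]
        have : k + 1 + 1 = (ij.1 + 1) + (ij.2 + 1) := by lia
        rw [this, pow_add, Matrix.mul_apply, Finset.mul_sum]
        refine Finset.sum_congr rfl fun x _ => ?_
        rw [Finset.sum_product]
        simp only [edgesT, List.map_append, List.prod_append]
        simp_rw [← Finset.mul_sum, ← Finset.sum_mul]
        rw [ih _ (by lia), ih _ (by lia)]
        ring
      · rintro ⟨a, b, c⟩ _ ⟨a', b', c'⟩ _ h
        simpa using h
    · intro ij hij ij' hij' hne
      simp only [Function.onFun, Finset.disjoint_left]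
      intro T hT hT'
      simp only [Finset.mem_image, Finset.mem_product, Prod.exists, mem_treesN] at hT hT'
      obtain ⟨a, b, c, ⟨-, h1, h2⟩, rfl⟩ := hT
      obtain ⟨a', b', c', ⟨-, h1', h2'⟩, h3⟩ := hT'
      cases h3
      exact hne (Prod.ext (by lia) (by lia))

/-- signs -/
def sg (b : Bool) : ℝ := if b then 1 else -1

theorem sum_sign (l : List (Sym2 V)) :
    0 ≤ ∑ g : Sym2 V → Bool, (l.map (fun e => sg (g e))).prod ∧
    ((∀ e, Even (l.count e)) → ∑ g : Sym2 V → Bool, (l.map (fun e => sg (g e))).prod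
      = (Fintype.card (Sym2 V → Bool) : ℝ)) := by
  have h1 : ∀ g : Sym2 V → Bool, (l.map (fun e => sg (g e))).prod = ∏ e, sg (g e) ^ l.count e := by
    intro g
    rw [Finset.prod_list_map_count]
    apply Finset.prod_subset (Finset.subset_univ _)
    intro e _ he
    rw [List.mem_toFinset] at he
    simp [List.count_eq_zero_of_not_mem he]
  constructor
  · simp_rw [h1]
    have := Finset.prod_univ_sum (fun _ : Sym2 V => (Finset.univ : Finset Bool))
      (fun e b => sg b ^ l.count e)
    rw [Fintype.piFinset_univ] at this
    rw [← this]
    apply Finset.prod_nonneg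
    intro e _
    simp only [Fintype.sum_bool, sg, if_true, one_pow]
    rcases neg_one_pow_eq_or ℝ (l.count e) with h | h <;> simp [h]
  · intro he
    simp_rw [h1]
    have : ∀ g : Sym2 V → Bool, ∏ e, sg (g e) ^ l.count e = 1 := by
      intro g
      apply Finset.prod_eq_one
      intro e _
      unfold sg
      split_ifs
      · simp
      · exact (he e).neg_one_pow
    simp [this]

/-- random symmetric sign matrix -/
def Gm (g : Sym2 V → Bool) : Matrix V V ℝ := fun i j => sg (g s(i, j))

theorem count_minCycle (B : Finset (Finset (Finset V))) (f : ℕ)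
    (hB : ∀ Z ∈ B, MinCycle Z ∧ Z.card = f) :
    (Fintype.card (Sym2 V → Bool) : ℝ) * B.card ≤
      catalan (f + 1) * ∑ w : V, ∑ g : Sym2 V → Bool, (Gm g ^ (f + 2)) w w := by
  classical
  set D := (Fintype.card (Sym2 V → Bool) : ℝ)
  set C := ((Finset.univ : Finset V) ×ˢ treesN (V := V) (f + 1)).filter
    (fun p => ∀ e, Even ((edgesT p.2 p.1 p.1).count e)) with hC
  have h1 : B.card ≤ C.card := by
    have : B ⊆ C.image (fun p => (facesT p.2 p.1 p.1).tail.toFinset) := by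
      intro Z hZ
      obtain ⟨hm, hc⟩ := hB Z hZ
      obtain ⟨w, T, h1, h2, h3⟩ := exists_code Z hm
      rw [Finset.mem_image]
      refine ⟨(w, T), ?_, h2⟩
      simp only [hC, Finset.mem_filter, Finset.mem_product, Finset.mem_univ, true_and, mem_treesN]
      exact ⟨by rw [h1, hc], h3⟩
    exact (Finset.card_le_card this).trans Finset.card_image_le
  have h2 : D * C.card ≤ ∑ p ∈ (Finset.univ : Finset V) ×ˢ treesN (V := V) (f + 1),
      ∑ g : Sym2 V → Bool, ((edgesT p.2 p.1 p.1).map (fun e => sg (g e))).prod := by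
    have : D * C.card = ∑ p ∈ C, ∑ g : Sym2 V → Bool, ((edgesT p.2 p.1 p.1).map (fun e => sg (g e))).prod := by
      rw [Finset.sum_congr rfl (g := fun _ => D)]
      · simp [mul_comm]
      · intro p hp
        exact (sum_sign _).2 (Finset.mem_filter.1 hp).2
    rw [this]
    exact Finset.sum_le_sum_of_subset_of_nonneg (Finset.filter_subset _ _)
      (fun p _ _ => (sum_sign _).1)
  calc D * B.card ≤ D * C.card := by
        have : (B.card : ℝ) ≤ C.card := by exact_mod_cast h1
        have hD : 0 ≤ D := Nat.cast_nonneg _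
        gcongr
    _ ≤ _ := h2
    _ = _ := by
      rw [Finset.sum_product, Finset.mul_sum]
      refine Finset.sum_congr rfl fun w _ => ?_
      rw [Finset.sum_comm, Finset.mul_sum]
      refine Finset.sum_congr rfl fun g _ => ?_
      exact sum_treesN (Gm g) (fun e => sg (g e)) (fun i j => rfl) (f + 1) w w

end trees

section norm
set_option linter.unusedSectionVars false
variable {V : Type} [DecidableEq V] [Fintype V]

/-- bilinear form -/
def Bf (g : Sym2 V → Bool) (x y : V → ℝ) : ℝ := ∑ i, ∑ j, x i * sg (g s(i, j)) * y j

/-- coefficient -/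
def be (x y : V → ℝ) (e : Sym2 V) : ℝ :=
  ∑ p : V × V with s(p.1, p.2) = e, x p.1 * y p.2

theorem Bf_eq (g : Sym2 V → Bool) (x y : V → ℝ) : Bf g x y = ∑ e, sg (g e) * be x y e := by
  unfold Bf be
  rw [← Fintype.sum_prod_type' (fun i j => x i * sg (g s(i, j)) * y j)]
  rw [← Finset.sum_fiberwise (s := Finset.univ) (g := fun p : V × V => s(p.1, p.2))]
  refine Finset.sum_congr rfl fun e _ => ?_
  rw [Finset.mul_sum]
  refine Finset.sum_congr rfl fun p hp => ?_
  rw [(Finset.mem_filter.1 hp).2]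
  ring

theorem sum_be_sq (x y : V → ℝ) :
    ∑ e, be x y e ^ 2 ≤ 2 * ((∑ i, x i ^ 2) * ∑ j, y j ^ 2) := by
  have h1 : ∀ e, be x y e ^ 2 ≤ 2 * ∑ p : V × V with s(p.1, p.2) = e, (x p.1 * y p.2) ^ 2 := by
    intro e
    unfold be
    refine sq_sum_le_card_mul_sum_sq.trans ?_
    apply mul_le_mul_of_nonneg_right _ (Finset.sum_nonneg fun _ _ => sq_nonneg _)
    induction e using Sym2.ind with
    | _ a b =>
    have : (Finset.univ.filter (fun p : V × V => s(p.1, p.2) = s(a, b))) ⊆ {(a, b), (b, a)} := by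
      rintro ⟨c, d⟩ h
      simp only [Finset.mem_filter, Finset.mem_univ, true_and, Sym2.eq_iff] at h
      simpa using h
    exact_mod_cast (Finset.card_le_card this).trans Finset.card_le_two
  refine (Finset.sum_le_sum fun e _ => h1 e).trans (le_of_eq ?_)
  rw [← Finset.mul_sum, Finset.sum_fiberwise (s := Finset.univ) (g := fun p : V × V => s(p.1, p.2)),
    Fintype.sum_prod_type, Finset.sum_mul_sum]
  simp_rw [mul_pow]

theorem mgf (c : Sym2 V → ℝ) :
    ∑ g : Sym2 V → Bool, Real.exp (∑ e, sg (g e) * c e) ≤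
      Fintype.card (Sym2 V → Bool) * Real.exp ((∑ e, c e ^ 2) / 2) := by
  simp_rw [Real.exp_sum]
  have := Finset.prod_univ_sum (fun _ : Sym2 V => (Finset.univ : Finset Bool))
      (fun e b => Real.exp (sg b * c e))
  rw [Fintype.piFinset_univ] at this
  rw [← this, Finset.sum_div, Real.exp_sum, Fintype.card_fun, Fintype.card_bool]
  push_cast
  rw [← Finset.card_univ (α := Sym2 V), ← Finset.prod_const, ← Finset.prod_mul_distrib]
  apply Finset.prod_le_prod
  · intro e _; positivity
  · intro e _
    have := Real.cosh_le_exp_half_sq (c e)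
    rw [Real.cosh_eq] at this
    simp only [Fintype.sum_bool, sg, if_true, one_mul, Bool.false_eq_true, if_false, neg_one_mul]
    linarith

theorem moment (x y : V → ℝ) (hx : ∑ i, x i ^ 2 ≤ 2) (hy : ∑ i, y i ^ 2 ≤ 2) (k : ℕ) (hk : 1 ≤ k) :
    ∑ g : Sym2 V → Bool, Bf g x y ^ (2 * k) ≤
      2 * Fintype.card (Sym2 V → Bool) * (256 * k : ℝ) ^ k := by
  set D := (Fintype.card (Sym2 V → Bool) : ℝ)
  have hk0 : (0 : ℝ) < k := by exact_mod_cast hk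
  set t := √(k : ℝ) with ht
  have htt : t ^ 2 = k := Real.sq_sqrt hk0.le
  have hb : ∑ e, be x y e ^ 2 ≤ 8 := by
    refine (sum_be_sq x y).trans ?_
    have : (∑ i, x i ^ 2) * ∑ j, y j ^ 2 ≤ 2 * 2 :=
      mul_le_mul hx hy (Finset.sum_nonneg fun _ _ => sq_nonneg _) (by norm_num)
    linarith
  have hm : ∀ r : ℝ, r ^ 2 = k → ∑ g : Sym2 V → Bool, Real.exp (r * Bf g x y) ≤ D * Real.exp (4 * k) := by
    intro r hr
    have := mgf (fun e => r * be x y e)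
    have h2 : ∀ g : Sym2 V → Bool, ∑ e, sg (g e) * (r * be x y e) = r * Bf g x y := by
      intro g
      rw [Bf_eq, Finset.mul_sum]
      exact Finset.sum_congr rfl fun _ _ => by ring
    simp_rw [h2] at this
    refine this.trans ?_
    apply mul_le_mul_of_nonneg_left _ (Nat.cast_nonneg _)
    rw [Real.exp_le_exp]
    simp_rw [mul_pow, hr, ← Finset.mul_sum]
    nlinarith
  have hp : ∀ g : Sym2 V → Bool, Bf g x y ^ (2 * k) ≤
      (4 * k) ^ k * (Real.exp (t * Bf g x y) + Real.exp (-t * Bf g x y)) := by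
    intro g
    set S := Bf g x y
    have h1 : (t * S) ^ (2 * k) ≤ (2 * k).factorial * (Real.exp (t * S) + Real.exp (-t * S)) := by
      have h := Real.pow_div_factorial_le_exp |t * S| (abs_nonneg _) (2 * k)
      have he : Real.exp |t * S| ≤ Real.exp (t * S) + Real.exp (-t * S) := by
        rcases abs_choice (t * S) with h | h <;> rw [h]
        · linarith [Real.exp_pos (-t * S)]
        · rw [← neg_mul]; linarith [Real.exp_pos (t * S)]
      rw [div_le_iff₀ (by positivity), (even_two_mul k).pow_abs] at h
      calc _ ≤ _ := h
        _ ≤ _ := by rw [mul_comm]; gcongr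
    have h2 : ((2 * k).factorial : ℝ) ≤ (4 * k) ^ k * (k : ℝ) ^ k := by
      have : ((2 * k).factorial : ℝ) ≤ ((2 * k : ℕ) : ℝ) ^ (2 * k) := by
        exact_mod_cast Nat.factorial_le_pow _
      refine this.trans (le_of_eq ?_)
      push_cast
      rw [pow_mul, ← mul_pow]
      ring
    rw [mul_pow, pow_mul t, htt] at h1
    have hkk : (0 : ℝ) < (k : ℝ) ^ k := by positivity
    have h3 : (k : ℝ) ^ k * S ^ (2 * k) ≤
        (k : ℝ) ^ k * ((4 * k) ^ k * (Real.exp (t * S) + Real.exp (-t * S))) := by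
      refine h1.trans ?_
      have : (0:ℝ) ≤ Real.exp (t * S) + Real.exp (-t * S) := by positivity
      nlinarith [mul_le_mul_of_nonneg_right h2 this]
    exact le_of_mul_le_mul_left h3 hkk
  have he : Real.exp (4 * k) ≤ 64 ^ k := by
    rw [mul_comm, Real.exp_nat_mul]
    gcongr
    have : Real.exp 4 = Real.exp 1 ^ 4 := by rw [← Real.exp_nat_mul]; norm_num
    rw [this]
    have h := Real.exp_one_lt_d9
    calc Real.exp 1 ^ 4 ≤ 2.75 ^ 4 := by gcongr; linarith
      _ ≤ 64 := by norm_num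
  calc _ ≤ ∑ g : Sym2 V → Bool, (4 * k : ℝ) ^ k * (Real.exp (t * Bf g x y) + Real.exp (-t * Bf g x y)) :=
        Finset.sum_le_sum fun g _ => hp g
    _ = (4 * k : ℝ) ^ k * ((∑ g : Sym2 V → Bool, Real.exp (t * Bf g x y))
          + ∑ g : Sym2 V → Bool, Real.exp (-t * Bf g x y)) := by
        rw [← Finset.mul_sum, Finset.sum_add_distrib]
    _ ≤ (4 * k : ℝ) ^ k * (D * Real.exp (4 * k) + D * Real.exp (4 * k)) := by
        gcongr
        · exact hm t htt
        · exact hm (-t) (by rw [neg_sq, htt])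
    _ ≤ (4 * k : ℝ) ^ k * (D * 64 ^ k + D * 64 ^ k) := by
        have : 0 ≤ D := Nat.cast_nonneg _
        gcongr
    _ = _ := by
        rw [show (256 * k : ℝ) = (4 * k) * 64 by ring, mul_pow (4 * (k:ℝ)) 64]; ring

/-- net -/
noncomputable def Net (V : Type) [DecidableEq V] [Fintype V] : Finset (V → ℤ) :=
  (Fintype.piFinset fun _ : V => Finset.Icc (-(8 * Fintype.card V : ℤ)) (8 * Fintype.card V)).filter
    fun z => ∑ i, z i ^ 2 ≤ 8 * Fintype.card V

theorem sum_geom (R : ℕ) : ∑ k ∈ Finset.Icc (-(R : ℤ)) R, (1 / 2 : ℝ) ^ k.natAbs ≤ 3 := by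
  have : ∑ k ∈ Finset.Icc (-(R : ℤ)) R, (1 / 2 : ℝ) ^ k.natAbs ≤ 3 - 2 * (1 / 2) ^ R := by
    induction R with
    | zero => norm_num
    | succ R ih =>
      have : Finset.Icc (-((R + 1 : ℕ) : ℤ)) ((R + 1 : ℕ) : ℤ) =
          insert (-((R + 1 : ℕ) : ℤ)) (insert ((R + 1 : ℕ) : ℤ) (Finset.Icc (-(R : ℤ)) R)) := by
        ext k
        simp only [Finset.mem_insert, Finset.mem_Icc]
        push_cast
        omega
      rw [this, Finset.sum_insert, Finset.sum_insert, Int.natAbs_neg, Int.natAbs_natCast]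
      · rw [pow_succ]; linarith
      · simp
      · simp only [Finset.mem_insert, Finset.mem_Icc]; push_cast; omega
  have h2 : (0 : ℝ) < (1 / 2) ^ R := by positivity
  linarith

theorem card_Net : ((Net V).card : ℝ) ≤ 1024 ^ Fintype.card V := by
  set n := Fintype.card V with hn
  have h1 : ∀ z ∈ Net V, (1 : ℝ) ≤ 2 ^ (8 * n) * ∏ i, (1 / 2 : ℝ) ^ (z i).natAbs := by
    intro z hz
    have h := (Finset.mem_filter.1 hz).2
    have h2 : ∑ i, (z i).natAbs ≤ 8 * n := by
      have : (∑ i, (z i).natAbs : ℤ) ≤ ∑ i, z i ^ 2 := by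
        refine Finset.sum_le_sum fun i _ => ?_
        rw [← Int.natAbs_sq]
        exact_mod_cast Nat.le_self_pow (by norm_num) _
      zify
      push_cast at this
      linarith
    rw [Finset.prod_pow_eq_pow_sum, one_div, inv_pow, ← div_eq_mul_inv, le_div_iff₀ (by positivity), one_mul]
    exact pow_le_pow_right₀ (by norm_num) h2
  calc ((Net V).card : ℝ) = ∑ z ∈ Net V, 1 := by simp
    _ ≤ ∑ z ∈ Net V, 2 ^ (8 * n) * ∏ i, (1 / 2 : ℝ) ^ (z i).natAbs := Finset.sum_le_sum h1
    _ ≤ ∑ z ∈ Fintype.piFinset fun _ : V => Finset.Icc (-(8 * n : ℤ)) (8 * n),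
          2 ^ (8 * n) * ∏ i, (1 / 2 : ℝ) ^ (z i).natAbs :=
        Finset.sum_le_sum_of_subset_of_nonneg (Finset.filter_subset _ _) (fun _ _ _ => by positivity)
    _ = 2 ^ (8 * n) * (∑ k ∈ Finset.Icc (-(8 * n : ℤ)) (8 * n), (1 / 2 : ℝ) ^ k.natAbs) ^ n := by
        rw [← Finset.mul_sum]
        congr 1
        rw [← Finset.prod_univ_sum (fun _ : V => Finset.Icc (-(8 * n : ℤ)) (8 * n))
          (fun _ k => (1 / 2 : ℝ) ^ k.natAbs), Finset.prod_const, Finset.card_univ]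
    _ ≤ 2 ^ (8 * n) * 3 ^ n := by
        gcongr
        have := sum_geom (8 * n)
        push_cast at this
        exact this
    _ = 768 ^ n := by rw [pow_mul, ← mul_pow]; norm_num
    _ ≤ _ := by gcongr; norm_num

/-- net vector -/
noncomputable def nv (z : V → ℤ) (i : V) : ℝ := z i / (2 * √(Fintype.card V : ℝ))

theorem sum_nv_sq [Nonempty V] (z : V → ℤ) :
    ∑ i, nv z i ^ 2 = (∑ i, (z i : ℝ) ^ 2) / (4 * Fintype.card V) := by
  unfold nv
  simp_rw [div_pow, mul_pow, Real.sq_sqrt (Nat.cast_nonneg (Fintype.card V) : (0 : ℝ) ≤ _)]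
  rw [← Finset.sum_div]
  norm_num

theorem nv_sq [Nonempty V] (z : V → ℤ) (hz : z ∈ Net V) : ∑ i, nv z i ^ 2 ≤ 2 := by
  have h := (Finset.mem_filter.1 hz).2
  have h' : (∑ i, (z i : ℝ) ^ 2) ≤ 8 * Fintype.card V := by exact_mod_cast h
  have hn : (0 : ℝ) < Fintype.card V := by exact_mod_cast Fintype.card_pos
  rw [sum_nv_sq, div_le_iff₀ (by positivity)]
  linarith

theorem exists_net [Nonempty V] (x : EuclideanSpace ℝ V) (hx : ‖x‖ = 1) :
    ∃ z ∈ Net V, ‖x - WithLp.toLp 2 (nv z)‖ ≤ 1 / 4 := by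
  have hn : (0 : ℝ) < Fintype.card V := by exact_mod_cast Fintype.card_pos
  set n := Fintype.card V with hndef
  have hs : 0 < √(n : ℝ) := Real.sqrt_pos.2 hn
  have hss : √(n : ℝ) ^ 2 = n := Real.sq_sqrt hn.le
  set z : V → ℤ := fun i => round (x i * (2 * √(n : ℝ))) with hz
  have hd : ‖x - WithLp.toLp 2 (nv z)‖ ≤ 1 / 4 := by
    have : ‖x - WithLp.toLp 2 (nv z)‖ ^ 2 ≤ (1 / 4) ^ 2 := by
      rw [EuclideanSpace.norm_sq_eq]
      have h1 : ∀ i, ‖(x - WithLp.toLp 2 (nv z)) i‖ ^ 2 ≤ 1 / (16 * n) := by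
        intro i
        have h := abs_sub_round (x i * (2 * √(n : ℝ)))
        have e : (x - WithLp.toLp 2 (nv z)) i = (x i * (2 * √(n : ℝ)) - z i) / (2 * √(n : ℝ)) := by
          simp only [PiLp.sub_apply, nv, ← hndef]
          field_simp
        rw [e, Real.norm_eq_abs, sq_abs, div_pow, mul_pow, hss, ← sq_abs]
        have h2 : |x i * (2 * √(n : ℝ)) - z i| ^ 2 ≤ (1 / 2) ^ 2 := by gcongr
        rw [div_le_div_iff₀ (by positivity) (by positivity)]
        nlinarith
      refine (Finset.sum_le_sum fun i _ => h1 i).trans ?_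
      rw [Finset.sum_const, Finset.card_univ, nsmul_eq_mul, ← hndef]
      field_simp
      norm_num
    exact (abs_le_of_sq_le_sq' this (by norm_num)).2
  refine ⟨z, ?_, hd⟩
  have hnorm : ‖(WithLp.toLp 2 (nv z) : EuclideanSpace ℝ V)‖ ≤ 5 / 4 := by
    have := norm_sub_norm_le (WithLp.toLp 2 (nv z) : EuclideanSpace ℝ V) x
    rw [norm_sub_rev] at this
    linarith
  have h2 : ∑ i, nv z i ^ 2 ≤ 2 := by
    have := EuclideanSpace.norm_sq_eq (WithLp.toLp 2 (nv z) : EuclideanSpace ℝ V)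
    simp only [Real.norm_eq_abs, sq_abs] at this
    rw [← this]
    nlinarith [norm_nonneg (WithLp.toLp 2 (nv z) : EuclideanSpace ℝ V)]
  rw [sum_nv_sq, div_le_iff₀ (by positivity)] at h2
  have h3 : ∑ i, z i ^ 2 ≤ 8 * (n : ℤ) := by
    have : (∑ i, (z i : ℝ) ^ 2) ≤ 8 * n := by linarith
    exact_mod_cast this
  refine Finset.mem_filter.2 ⟨?_, h3⟩
  rw [Fintype.mem_piFinset]
  intro i
  have h4 : z i ^ 2 ≤ 8 * (n : ℤ) :=
    (Finset.single_le_sum (f := fun i => z i ^ 2) (fun _ _ => sq_nonneg _) (Finset.mem_univ i)).trans h3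
  rw [Finset.mem_Icc]
  constructor <;> nlinarith [Int.le_self_sq (z i), Int.le_self_sq (-z i)]

/-- operator -/
noncomputable def Tm (g : Sym2 V → Bool) : EuclideanSpace ℝ V →L[ℝ] EuclideanSpace ℝ V :=
  Matrix.toEuclideanCLM (𝕜 := ℝ) (Gm g)

theorem inner_Tm (g : Sym2 V → Bool) (x y : V → ℝ) :
    inner ℝ (WithLp.toLp 2 x) (Tm g (WithLp.toLp 2 y)) = Bf g x y := by
  unfold Tm
  rw [Matrix.inner_toEuclideanCLM]
  simp only [dotProduct, Matrix.mulVec, Bf, Gm, Finset.mul_sum, mul_assoc]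

theorem norm_Tm [Nonempty V] (g : Sym2 V → Bool) (k : ℕ) :
    ‖Tm g‖ ^ (2 * k) ≤ 9 ^ k * ∑ p ∈ Net V ×ˢ Net V, Bf g (nv p.1) (nv p.2) ^ (2 * k) := by
  have hne : (Net V ×ˢ Net V).Nonempty := by
    have h0 : (0 : V → ℤ) ∈ Net V := by simp [Net]
    exact ⟨(0, 0), Finset.mem_product.2 ⟨h0, h0⟩⟩
  obtain ⟨q, hq, hmax⟩ := Finset.exists_max_image _ (fun p => |Bf g (nv p.1) (nv p.2)|) hne
  set A := |Bf g (nv q.1) (nv q.2)| with hA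
  have hA0 : 0 ≤ A := abs_nonneg _
  set N := ‖Tm g‖ with hN
  have hN0 : 0 ≤ N := norm_nonneg _
  have h1 : N ≤ A + 9 / 16 * N := by
    apply ContinuousLinearMap.opNorm_le_of_unit_norm (by positivity)
    intro x hx
    by_cases h0 : Tm g x = 0
    · rw [h0, norm_zero]; positivity
    have hpos : 0 < ‖Tm g x‖ := norm_pos_iff.2 h0
    set y := (‖Tm g x‖⁻¹) • Tm g x with hy
    have hyn : ‖y‖ = 1 := by
      rw [hy, norm_smul, norm_inv, norm_norm, inv_mul_cancel₀ hpos.ne']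
    have hin : inner ℝ y (Tm g x) = ‖Tm g x‖ := by
      rw [hy, real_inner_smul_left, real_inner_self_eq_norm_sq]
      field_simp
    obtain ⟨z, hz, hzx⟩ := exists_net x hx
    obtain ⟨z', hz', hzy⟩ := exists_net y hyn
    set x' : EuclideanSpace ℝ V := WithLp.toLp 2 (nv z)
    set y' : EuclideanSpace ℝ V := WithLp.toLp 2 (nv z')
    have hy' : ‖y'‖ ≤ 5 / 4 := by
      have := norm_sub_norm_le y' y
      rw [norm_sub_rev] at this
      linarith
    have e : inner ℝ y (Tm g x) = inner ℝ y' (Tm g x') + inner ℝ (y - y') (Tm g x)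
        + inner ℝ y' (Tm g (x - x')) := by
      rw [map_sub, inner_sub_left, inner_sub_right]; ring
    have b1 : inner ℝ y' (Tm g x') ≤ A := by
      rw [inner_Tm]
      exact (le_abs_self _).trans (hmax (z', z) (Finset.mem_product.2 ⟨hz', hz⟩))
    have b2 : inner ℝ (y - y') (Tm g x) ≤ 1 / 4 * N := by
      refine (real_inner_le_norm _ _).trans ?_
      have : ‖Tm g x‖ ≤ N := by simpa [hx] using (Tm g).le_opNorm x
      gcongr
    have b3 : inner ℝ y' (Tm g (x - x')) ≤ 5 / 4 * (N * (1 / 4)) := by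
      refine (real_inner_le_norm _ _).trans ?_
      have : ‖Tm g (x - x')‖ ≤ N * (1 / 4) := ((Tm g).le_opNorm _).trans (by gcongr)
      gcongr
    rw [← hin, e]
    linarith
  have h2 : N ≤ 3 * A := by linarith
  calc N ^ (2 * k) ≤ (3 * A) ^ (2 * k) := by gcongr
    _ = 9 ^ k * Bf g (nv q.1) (nv q.2) ^ (2 * k) := by
        rw [mul_pow, hA, (even_two_mul k).pow_abs, pow_mul 3]; norm_num
    _ ≤ _ := by
        gcongr
        exact Finset.single_le_sum (f := fun p : (V → ℤ) × (V → ℤ) => Bf g (nv p.1) (nv p.2) ^ (2 * k))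
          (fun p _ => (even_two_mul k).pow_nonneg _) hq

theorem entry_le [Nonempty V] (g : Sym2 V → Bool) (L : ℕ) (w : V) : (Gm g ^ L) w w ≤ ‖Tm g‖ ^ L := by
  have h := Matrix.inner_toEuclideanCLM (Gm g ^ L) (EuclideanSpace.single w (1 : ℝ))
    (EuclideanSpace.single w (1 : ℝ))
  have h2 : (Gm g ^ L) w w = inner ℝ (EuclideanSpace.single w (1 : ℝ))
      (Matrix.toEuclideanCLM (𝕜 := ℝ) (Gm g ^ L) (EuclideanSpace.single w (1 : ℝ))) := by
    rw [h]
    simp [Matrix.mulVec_single, EuclideanSpace.single]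
  rw [h2, map_pow]
  refine (real_inner_le_norm _ _).trans ?_
  have := ((Tm g) ^ L).le_opNorm (EuclideanSpace.single w (1 : ℝ))
  simp only [PiLp.norm_single, norm_one, one_mul, mul_one] at this ⊢
  have hnt : Nontrivial (EuclideanSpace ℝ V) := by
    obtain ⟨i⟩ := ‹Nonempty V›
    refine ⟨EuclideanSpace.single i 1, 0, fun h => ?_⟩
    have := congrArg norm h
    simp at this
  exact this.trans (norm_pow_le _ _)

theorem trace_bound [Nonempty V] (k : ℕ) (hk : Fintype.card V ≤ k) (L : ℕ) (hL : L ≤ 2 * k) (w : V) :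
    ∑ g : Sym2 V → Bool, (Gm g ^ L) w w ≤
      3 * Fintype.card (Sym2 V → Bool) * (√(2 ^ 32 * k : ℝ)) ^ L := by
  set D := (Fintype.card (Sym2 V → Bool) : ℝ) with hD
  have hk1 : 1 ≤ k := le_trans Fintype.card_pos hk
  have hk0 : (0 : ℝ) < k := by exact_mod_cast hk1
  set b := √(2 ^ 32 * k : ℝ) with hb
  have hb0 : 0 < b := Real.sqrt_pos.2 (by positivity)
  have hbb : b ^ 2 = 2 ^ 32 * k := Real.sq_sqrt (by positivity)
  have h1 : ∑ g : Sym2 V → Bool, ‖Tm g‖ ^ (2 * k) ≤ 2 * D * b ^ (2 * k) := by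
    calc _ ≤ ∑ g : Sym2 V → Bool, 9 ^ k * ∑ p ∈ Net V ×ˢ Net V, Bf g (nv p.1) (nv p.2) ^ (2 * k) :=
          Finset.sum_le_sum fun g _ => norm_Tm g k
      _ = 9 ^ k * ∑ p ∈ Net V ×ˢ Net V, ∑ g : Sym2 V → Bool, Bf g (nv p.1) (nv p.2) ^ (2 * k) := by
          rw [← Finset.mul_sum, Finset.sum_comm]
      _ ≤ 9 ^ k * ∑ p ∈ Net V ×ˢ Net V, 2 * D * (256 * k : ℝ) ^ k := by
          gcongr with p hp
          obtain ⟨ha, hb⟩ := Finset.mem_product.1 hp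
          exact moment _ _ (nv_sq _ ha) (nv_sq _ hb) k hk1
      _ = 9 ^ k * (((Net V).card * (Net V).card) * (2 * D * (256 * k : ℝ) ^ k)) := by
          rw [Finset.sum_const, Finset.card_product, nsmul_eq_mul]; push_cast; ring
      _ ≤ 16 ^ k * ((1024 ^ k * 1024 ^ k) * (2 * D * (256 * k : ℝ) ^ k)) := by
          have : ((Net V).card : ℝ) ≤ 1024 ^ k :=
            card_Net.trans (pow_le_pow_right₀ (by norm_num) hk)
          have hD0 : 0 ≤ D := Nat.cast_nonneg _
          gcongr
          norm_num
      _ = 2 * D * b ^ (2 * k) := by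
          rw [pow_mul b, hbb, ← mul_pow]
          rw [show (2 ^ 32 * k : ℝ) = 16 * (1024 * 1024) * (256 * k) by ring, mul_pow _ (256 * (k:ℝ)), mul_pow 16]
          ring
  have h2 : ∀ g : Sym2 V → Bool, (Gm g ^ L) w w ≤ b ^ L * (1 + ‖Tm g‖ ^ (2 * k) / b ^ (2 * k)) := by
    intro g
    refine (entry_le g L w).trans ?_
    have : (‖Tm g‖ / b) ^ L ≤ 1 + (‖Tm g‖ / b) ^ (2 * k) := by
      rcases le_total (‖Tm g‖ / b) 1 with h | h
      · have := pow_le_one₀ (n := L) (by positivity) h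
        have : 0 ≤ (‖Tm g‖ / b) ^ (2 * k) := by positivity
        linarith
      · have := pow_le_pow_right₀ h hL
        linarith
    rw [div_pow, div_pow, div_le_iff₀ (by positivity)] at this
    linarith
  calc _ ≤ ∑ g : Sym2 V → Bool, b ^ L * (1 + ‖Tm g‖ ^ (2 * k) / b ^ (2 * k)) :=
        Finset.sum_le_sum fun g _ => h2 g
    _ = b ^ L * (D + (∑ g : Sym2 V → Bool, ‖Tm g‖ ^ (2 * k)) / b ^ (2 * k)) := by
        rw [← Finset.mul_sum, Finset.sum_add_distrib, Finset.sum_div]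
        simp [hD]
    _ ≤ b ^ L * (D + 2 * D) := by
        gcongr
        rw [div_le_iff₀ (by positivity)]
        exact h1
    _ = _ := by ring

theorem count_bound [Nonempty V] (B : Finset (Finset (Finset V))) (f k : ℕ)
    (hB : ∀ Z ∈ B, MinCycle Z ∧ Z.card = f) (hk : Fintype.card V ≤ k) (hf : f + 2 ≤ 2 * k) :
    (B.card : ℝ) ≤ 12 * Fintype.card V * (2 ^ 32 * k) * (4 * √(2 ^ 32 * k : ℝ)) ^ f := by
  have h := count_minCycle B f hB
  set D := (Fintype.card (Sym2 V → Bool) : ℝ) with hD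
  have hD0 : 0 < D := by rw [hD]; exact_mod_cast Fintype.card_pos
  have hbb : √(2 ^ 32 * k : ℝ) ^ 2 = 2 ^ 32 * k := Real.sq_sqrt (by positivity)
  have hc : (catalan (f + 1) : ℝ) ≤ 4 ^ (f + 1) := by
    have : catalan (f + 1) ≤ 4 ^ (f + 1) := by
      rw [catalan_eq_centralBinom_div]
      exact (Nat.div_le_self _ _).trans (Nat.centralBinom_le_four_pow _)
    exact_mod_cast this
  refine le_of_mul_le_mul_left (h.trans ?_) hD0
  calc _ ≤ (catalan (f + 1) : ℝ) * ∑ w : V, 3 * D * (√(2 ^ 32 * k : ℝ)) ^ (f + 2) := by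
        gcongr with w
        exact trace_bound k hk (f + 2) hf w
    _ ≤ 4 ^ (f + 1) * ∑ w : V, 3 * D * (√(2 ^ 32 * k : ℝ)) ^ (f + 2) := by
        gcongr
    _ = _ := by
        rw [Finset.sum_const, Finset.card_univ, nsmul_eq_mul, pow_add _ f 2, hbb, mul_pow]
        ring

end norm

theorem deletion {X : Type} [DecidableEq X] [Fintype X] (P : Finset X) (B : Finset (Finset X))
    (q : ℕ) (hq : 1 ≤ q) (hB : ∀ Z ∈ B, Z.Nonempty) :
    ∃ F ⊆ P, (∀ Z ∈ B, ¬ Z ⊆ F) ∧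
      (P.card : ℝ) / q - ∑ Z ∈ B, (1 / q : ℝ) ^ Z.card ≤ F.card := by
  classical
  obtain ⟨q, rfl⟩ : ∃ q', q = q' + 1 := ⟨q - 1, by omega⟩
  set Q : ℝ := ((q + 1 : ℕ) : ℝ) with hQ
  have hQ0 : 0 < Q := by rw [hQ]; positivity
  set D : ℝ := (Fintype.card (X → Fin (q + 1)) : ℝ) with hD
  have hDQ : D = Q ^ Fintype.card X := by rw [hD, Fintype.card_fun, Fintype.card_fin]; push_cast [hQ]; rfl
  have hD0 : 0 < D := by rw [hDQ]; positivity
  have hcount : ∀ Z : Finset X,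
      ((Finset.univ.filter (fun c : X → Fin (q + 1) => ∀ t ∈ Z, c t = 0)).card : ℝ)
        = D * (1 / Q) ^ Z.card := by
    intro Z
    have e : Finset.univ.filter (fun c : X → Fin (q + 1) => ∀ t ∈ Z, c t = 0)
        = Fintype.piFinset (fun t => if t ∈ Z then ({0} : Finset (Fin (q + 1))) else Finset.univ) := by
      ext c
      simp only [Finset.mem_filter, Finset.mem_univ, true_and, Fintype.mem_piFinset]
      refine forall_congr' fun t => ?_
      by_cases h : t ∈ Z <;> simp [h]
    rw [e, Fintype.card_piFinset]
    push_cast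
    have : ∀ t, (((if t ∈ Z then ({0} : Finset (Fin (q + 1))) else Finset.univ).card : ℕ) : ℝ)
        = Q * (if t ∈ Z then 1 / Q else 1) := by
      intro t
      by_cases h : t ∈ Z
      · simp only [h, if_true, Finset.card_singleton]
        field_simp
        simp
      · simp [h, hQ]
    simp_rw [this]
    rw [Finset.prod_mul_distrib, Finset.prod_const, Finset.card_univ, hDQ, Finset.prod_ite_mem,
      Finset.univ_inter, Finset.prod_const]
  have havg : ∑ c : X → Fin (q + 1), ((P.card : ℝ) / Q - ∑ Z ∈ B, (1 / Q : ℝ) ^ Z.card) ≤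
      ∑ c : X → Fin (q + 1), (((P.filter (fun t => c t = 0)).card : ℝ)
        - ((B.filter (fun Z => ∀ t ∈ Z, c t = 0)).card : ℝ)) := by
    apply le_of_eq
    rw [Finset.sum_const, Finset.sum_sub_distrib, Finset.card_univ, nsmul_eq_mul, ← hD, mul_sub]
    congr 1
    · simp_rw [Finset.card_filter]
      push_cast
      rw [Finset.sum_comm]
      have : ∀ t ∈ P, ∑ c : X → Fin (q + 1), (if c t = 0 then (1 : ℝ) else 0) = D * (1 / Q) := by
        intro t _
        have := hcount {t}
        simp only [Finset.mem_singleton, forall_eq, Finset.card_singleton, pow_one,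
          Finset.card_filter] at this
        push_cast at this
        exact this
      rw [Finset.sum_congr rfl this, Finset.sum_const, nsmul_eq_mul]
      ring
    · simp_rw [Finset.card_filter]
      push_cast
      rw [Finset.sum_comm, Finset.mul_sum]
      refine Finset.sum_congr rfl fun Z _ => ?_
      have := hcount Z
      rw [Finset.card_filter] at this
      push_cast at this
      exact this.symm
  obtain ⟨c, -, hc⟩ := Finset.exists_le_of_sum_le Finset.univ_nonempty havg
  set F0 := P.filter (fun t => c t = 0)
  set B0 := B.filter (fun Z => ∀ t ∈ Z, c t = 0)
  have hB0 : ∀ Z : B0, Z.1.Nonempty := fun Z => hB Z.1 (Finset.mem_filter.1 Z.2).1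
  choose r hr using hB0
  set R := B0.attach.image r with hR
  refine ⟨F0 \ R, Finset.sdiff_subset.trans (Finset.filter_subset _ _), ?_, ?_⟩
  · intro Z hZ hsub
    have hZ0 : Z ∈ B0 := Finset.mem_filter.2 ⟨hZ, fun t ht =>
      (Finset.mem_filter.1 (Finset.mem_sdiff.1 (hsub ht)).1).2⟩
    exact (Finset.mem_sdiff.1 (hsub (hr ⟨Z, hZ0⟩))).2
      (Finset.mem_image_of_mem _ (Finset.mem_attach _ _))
  · refine hc.trans ?_
    have h1 := Finset.le_card_sdiff R F0
    have h2 : R.card ≤ B0.card := Finset.card_image_le.trans (by simp)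
    have h3 : F0.card ≤ (F0 \ R).card + B0.card := by omega
    have h4 : (F0.card : ℝ) ≤ (F0 \ R).card + B0.card := by exact_mod_cast h3
    linarith

theorem bad_sum (n : ℕ) (hn : 1 ≤ n) (m : ℝ) (q : ℕ) (hq : 1 ≤ q)
    (h : 576 * (2 ^ 32 * (n + m + 2)) ≤ (q : ℝ) ^ 2)
    (B : Finset (Finset (Finset (Fin n)))) (hB : ∀ Z ∈ B, MinCycle Z ∧ (Z.card : ℝ) < m) :
    ∑ Z ∈ B, (1 / q : ℝ) ^ Z.card ≤ 24 * 2 ^ 32 * (n : ℝ) ^ 2 := by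
  classical
  have hne : Nonempty (Fin n) := ⟨⟨0, hn⟩⟩
  have hq0 : (0 : ℝ) < q := by exact_mod_cast hq
  have hn1 : (1 : ℝ) ≤ n := by exact_mod_cast hn
  set M := B.sup Finset.card with hM
  have hmaps : ∀ Z ∈ B, Z.card ∈ Finset.range (M + 1) := fun Z hZ => by
    rw [Finset.mem_range]
    have : Z.card ≤ M := Finset.le_sup (f := Finset.card) hZ
    omega
  rw [← Finset.sum_fiberwise_of_maps_to hmaps]
  have key : ∀ f ∈ Finset.range (M + 1), ∑ Z ∈ B with Z.card = f, (1 / q : ℝ) ^ Z.card ≤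
      12 * 2 ^ 32 * (n : ℝ) ^ 2 * (1 / 2) ^ f := by
    intro f _
    set Bf := B.filter (fun Z => Z.card = f) with hBf
    rcases Bf.eq_empty_or_nonempty with h0 | ⟨Z0, hZ0⟩
    · rw [h0, Finset.sum_empty]; positivity
    obtain ⟨hZB, hZf⟩ := Finset.mem_filter.1 hZ0
    have hf1 : 1 ≤ f := by rw [← hZf]; exact (hB Z0 hZB).1.1.card_pos
    have hfm : (f : ℝ) < m := by rw [← hZf]; exact (hB Z0 hZB).2
    set k := max n (f + 2) with hk
    have hcb := count_bound Bf f k (fun Z hZ => by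
      obtain ⟨h1, h2⟩ := Finset.mem_filter.1 hZ
      exact ⟨(hB Z h1).1, h2⟩) (by rw [Fintype.card_fin]; exact le_max_left _ _) (by
        have := le_max_right n (f + 2)
        omega)
    rw [Fintype.card_fin] at hcb
    have hsum : ∑ Z ∈ Bf, (1 / q : ℝ) ^ Z.card = Bf.card * (1 / q : ℝ) ^ f := by
      rw [Finset.sum_congr rfl (g := fun _ => (1 / q : ℝ) ^ f)]
      · simp
      · intro Z hZ; rw [(Finset.mem_filter.1 hZ).2]
    rw [hsum]
    have hkm : (k : ℝ) ≤ n + m + 2 := by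
      rw [hk]; push_cast
      apply max_le <;> [linarith [Nat.cast_nonneg (α := ℝ) f]; linarith]
    have hsq : 4 * √(2 ^ 32 * k : ℝ) ≤ q / 6 := by
      have : √(2 ^ 32 * k : ℝ) ≤ q / 24 := by
        apply Real.sqrt_le_iff.2 ⟨by positivity, ?_⟩
        rw [div_pow]
        linarith
      linarith
    have hkn : (k : ℝ) ≤ n * 3 ^ f := by
      have h3 : f + 2 ≤ 3 ^ f := by
        clear * - hf1
        induction f, hf1 using Nat.le_induction with
        | base => norm_num
        | succ f hf ih => rw [pow_succ]; omega
      have : k ≤ n * 3 ^ f := by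
        rw [hk]
        apply max_le
        · exact Nat.le_mul_of_pos_right _ (by positivity)
        · exact h3.trans (Nat.le_mul_of_pos_left _ hn)
      exact_mod_cast this
    calc (Bf.card : ℝ) * (1 / q : ℝ) ^ f
        ≤ (12 * n * (2 ^ 32 * k) * (4 * √(2 ^ 32 * k : ℝ)) ^ f) * (1 / q : ℝ) ^ f := by gcongr
      _ ≤ (12 * n * (2 ^ 32 * (n * 3 ^ f)) * (q / 6 : ℝ) ^ f) * (1 / q : ℝ) ^ f := by gcongr
      _ = 12 * 2 ^ 32 * (n : ℝ) ^ 2 * (3 * (q / 6) * (1 / q)) ^ f := by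
          rw [mul_pow, mul_pow]; ring
      _ = _ := by
          congr 2
          field_simp
          norm_num
  refine (Finset.sum_le_sum key).trans ?_
  rw [← Finset.mul_sum]
  have hg : ∑ f ∈ Finset.range (M + 1), (1 / 2 : ℝ) ^ f ≤ 2 := sum_geometric_two_le _
  nlinarith [sq_nonneg (n : ℝ)]

theorem choose_bound (n : ℕ) (hn : 12 ≤ n) : (n : ℝ) ^ 3 / 12 ≤ (n.choose 3 : ℝ) := by
  have h : (12 : ℝ) ≤ n := by exact_mod_cast hn
  rw [Nat.cast_choose_eq_descPochhammer_div]
  simp [descPochhammer_succ_right, Nat.factorial]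
  nlinarith [mul_nonneg (sub_nonneg.2 h) (sub_nonneg.2 h), mul_nonneg (sub_nonneg.2 h) (sq_nonneg (n : ℝ))]

end GirthAux

theorem exists_large_girth_complex (α ε : ℝ) (hα0 : 0 < α) (hα : α < 1 / 2) (hε : 0 < ε) :
    ∃ N : ℕ, ∀ n : ℕ, N ≤ n →
      ∃ F : Finset (Finset (Fin n)),
        (∀ t ∈ F, t.card = 3) ∧
        ((n : ℝ) ^ ((2 : ℝ) + α) ≤ F.card) ∧
        ∀ Z ⊆ F, Z.Nonempty → IsTwoCycle Z →
          (n : ℝ) ^ ((2 : ℝ) - 2 * α - ε) ≤ Z.card := by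
  classical
  have ev : ∀ r : ℝ, 0 < r → ∀ c : ℝ, ∀ᶠ n : ℕ in Filter.atTop, c ≤ (n : ℝ) ^ r := fun r hr c =>
    ((tendsto_rpow_atTop hr).comp tendsto_natCast_atTop_atTop).eventually_ge_atTop c
  set C : ℝ := 576 * 2 ^ 32 * 40000 with hC
  have hev := (((ev α hα0 (24 * 2 ^ 32)).and (ev (1 - 2 * α) (by linarith) (5 * C))).and
    ((ev ε hε (5 * C)).and (ev (1 - α) (by linarith) 200))).and (Filter.eventually_ge_atTop 12)
  obtain ⟨N, hN⟩ := Filter.eventually_atTop.1 hev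
  refine ⟨N, fun n hn => ?_⟩
  obtain ⟨⟨⟨h1, h2⟩, h3, h4⟩, h12⟩ := hN n hn
  have hn12 : (12 : ℝ) ≤ n := by exact_mod_cast h12
  have hn0 : (0 : ℝ) < n := by linarith
  set m := (n : ℝ) ^ ((2 : ℝ) - 2 * α - ε) with hm
  set s := (n : ℝ) ^ (1 - α) with hs
  have hs0 : 0 < s := by linarith
  set q := ⌊s / 100⌋₊ with hqdef
  have hq_le : (q : ℝ) ≤ s / 100 := Nat.floor_le (by positivity)
  have hq_ge : s / 200 ≤ q := by
    have := Nat.lt_floor_add_one (s / 100)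
    rw [← hqdef] at this
    linarith
  have hq1 : 1 ≤ q := by
    have : (0 : ℝ) < q := by linarith
    exact_mod_cast this
  have hq0 : (0 : ℝ) < q := by exact_mod_cast hq1
  have hs2 : s ^ 2 = n * (n : ℝ) ^ (1 - 2 * α) := by
    rw [hs, ← Real.rpow_natCast, ← Real.rpow_mul hn0.le]
    nth_rewrite 2 [← Real.rpow_one (n : ℝ)]
    rw [← Real.rpow_add hn0]
    congr 1
    push_cast
    ring
  have hs2' : s ^ 2 = m * (n : ℝ) ^ ε := by
    rw [hs, hm, ← Real.rpow_natCast, ← Real.rpow_mul hn0.le, ← Real.rpow_add hn0]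
    congr 1
    push_cast
    ring
  have hm0 : 0 < m := Real.rpow_pos_of_pos hn0 _
  have hn2α : (n : ℝ) ^ ((2 : ℝ) + α) = n ^ 2 * (n : ℝ) ^ α := by
    rw [Real.rpow_add hn0]
    norm_num
  have hs3 : (n : ℝ) ^ ((2 : ℝ) + α) * s = n ^ 3 := by
    rw [hs, ← Real.rpow_add hn0, ← Real.rpow_natCast]
    congr 1
    push_cast
    ring
  have hnum : 576 * (2 ^ 32 * (n + m + 2)) ≤ (q : ℝ) ^ 2 := by
    have a1 : 5 * C * n ≤ s ^ 2 := by rw [hs2, mul_comm]; gcongr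
    have a2 : 5 * C * m ≤ s ^ 2 := by rw [hs2', mul_comm]; gcongr
    have a3 : (s / 200) ^ 2 ≤ (q : ℝ) ^ 2 := by gcongr
    rw [div_pow] at a3
    rw [hC] at a1 a2
    linarith
  set P : Finset (Finset (Fin n)) := Finset.powersetCard 3 Finset.univ with hP
  set B := P.powerset.filter (fun Z => GirthAux.MinCycle Z ∧ (Z.card : ℝ) < m) with hB
  have hBp : ∀ Z ∈ B, GirthAux.MinCycle Z ∧ (Z.card : ℝ) < m := fun Z hZ => (Finset.mem_filter.1 hZ).2
  obtain ⟨F, hFP, hFB, hFc⟩ := GirthAux.deletion P B q hq1 (fun Z hZ => (hBp Z hZ).1.1)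
  have hbad := GirthAux.bad_sum n (by omega) m q hq1 hnum B hBp
  have hP3 : ∀ t ∈ F, t.card = 3 := fun t ht => (Finset.mem_powersetCard.1 (hFP ht)).2
  refine ⟨F, hP3, ?_, ?_⟩
  · refine le_trans ?_ hFc
    have hPc : (n : ℝ) ^ 3 / 12 ≤ P.card := by
      rw [hP, Finset.card_powersetCard, Finset.card_univ, Fintype.card_fin]
      exact GirthAux.choose_bound n h12
    have b1 : 2 * (n : ℝ) ^ ((2 : ℝ) + α) ≤ P.card / q := by
      rw [le_div_iff₀ hq0]
      refine le_trans ?_ hPc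
      rw [← hs3]
      have : 0 < (n : ℝ) ^ ((2 : ℝ) + α) := Real.rpow_pos_of_pos hn0 _
      nlinarith
    have b2 : 24 * 2 ^ 32 * (n : ℝ) ^ 2 ≤ (n : ℝ) ^ ((2 : ℝ) + α) := by
      rw [hn2α, mul_comm]
      gcongr
    linarith
  · intro Z hZF hZn hZc
    by_contra hlt
    push Not at hlt
    obtain ⟨Y, hYZ, hY⟩ := GirthAux.exists_minCycle Z hZn hZc
    refine hFB Y ?_ (hYZ.trans hZF)
    refine Finset.mem_filter.2 ⟨Finset.mem_powerset.2 ((hYZ.trans hZF).trans hFP), hY, ?_⟩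
    have : (Y.card : ℝ) ≤ Z.card := by exact_mod_cast Finset.card_le_card hYZ
    linarith
end

section
/- For every δ > 0 there is a constant C_δ such that for all sufficiently large f and v, Z(f,v) ≤ C_δ^f · f^{f/2} · v^{δ f}. -/
/-- An inclusion-minimal (nontrivial) `Z/2` 2-cycle: a nonempty 2-cycle no nonempty
proper subset of which is a 2-cycle. -/
def IsMinCycle {V : Type} [DecidableEq V] (Z : Finset (Finset V)) : Prop :=
  IsTwoCycle Z ∧ Z.Nonempty ∧ ∀ Z' ⊂ Z, Z'.Nonempty → ¬ IsTwoCycle Z'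

/-- `Zcount f v` is the number of inclusion-minimal `Z/2` 2-cycles consisting of exactly
`f` 3-element subsets of a `v`-element vertex set (realized as `Finset.range v`)
whose members together cover all `v` vertices. -/
noncomputable def Zcount (f v : ℕ) : ℕ :=
  Nat.card {Z : Finset (Finset ℕ) //
    IsMinCycle Z ∧ Z.card = f ∧ Z.biUnion id = Finset.range v}

open BinaryTree

namespace ZB

def arcs {α : Type} : α → List α → List (α × α)
  | _, [] => []
  | x, y :: L => (x, y) :: arcs y L

def sy {α : Type} (p : α × α) : Sym2 α := s(p.1, p.2)

def fc : BinaryTree ℕ → ℕ → ℕ → List (Finset ℕ)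
  | .nil, _, _ => []
  | .node c l r, a, b => {a, c, b} :: (fc l a c ++ fc r c b)

def ino : BinaryTree ℕ → List ℕ
  | .nil => []
  | .node c l r => ino l ++ c :: ino r

def sd : BinaryTree ℕ → ℕ → ℕ → List (ℕ × ℕ)
  | .nil, a, b => [(a, b)]
  | .node c l r, a, b => sd l a c ++ sd r c b

lemma arcs_append {α : Type} (L : List α) (x c : α) (M : List α) :
    arcs x (L ++ c :: M) = arcs x (L ++ [c]) ++ arcs c M := by
  induction L generalizing x with
  | nil => simp [arcs]
  | cons y L ih => simp only [List.cons_append, arcs, ih y]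

lemma sd_eq (T : BinaryTree ℕ) (a b : ℕ) : sd T a b = arcs a (ino T ++ [b]) := by
  induction T generalizing a b with
  | nil => simp [sd, arcs, ino]
  | node c l r hl hr =>
    rw [sd, hl, hr, ino, List.append_assoc, List.cons_append, arcs_append (ino l) a c (ino r ++ [b])]

lemma ino_length (T : BinaryTree ℕ) : (ino T).length = T.numNodes := by
  induction T with
  | nil => rfl
  | node c l r hl hr => simp [ino, hl, hr]; omega

lemma fc_length (T : BinaryTree ℕ) (a b : ℕ) : (fc T a b).length = T.numNodes := by
  induction T generalizing a b with
  | nil => rfl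
  | node c l r hl hr => simp [fc, hl, hr]

lemma numNodes_map (T : BinaryTree ℕ) : (T.map (fun _ => ())).numNodes = T.numNodes := by
  induction T with
  | nil => rfl
  | node c l r hl hr => simp [BinaryTree.map, hl, hr]

lemma tree_inj (T T' : BinaryTree ℕ) (h : T.map (fun _ => ()) = T'.map (fun _ => ()))
    (h2 : ino T = ino T') : T = T' := by
  induction T generalizing T' with
  | nil => cases T' with
    | nil => rfl
    | node c l r => simp [BinaryTree.map] at h
  | node c l r hl hr => cases T' with
    | nil => simp [BinaryTree.map] at h
    | node c' l' r' =>
      simp only [BinaryTree.map, BinaryTree.node.injEq, true_and] at h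
      simp only [ino] at h2
      have hlen : (ino l).length = (ino l').length := by
        rw [ino_length, ino_length, ← numNodes_map, h.1, numNodes_map]
      obtain ⟨e1, e2⟩ := List.append_inj h2 hlen
      simp only [List.cons.injEq] at e2
      rw [hl _ h.1 e1, hr _ h.2 e2.2, e2.1]

lemma card3 {a c b : ℕ} (h : ({a, c, b} : Finset ℕ).card = 3) : a ≠ c ∧ a ≠ b ∧ c ≠ b := by
  refine ⟨?_, ?_, ?_⟩ <;> rintro rfl
  · have := Finset.card_le_two (a := a) (b := b)
    simp at h; omega
  · have := Finset.card_le_two (a := c) (b := a)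
    rw [Finset.insert_eq_of_mem (by simp)] at h; omega
  · have := Finset.card_le_two (a := a) (b := c)
    simp at h; omega

lemma face_ind {a c b x y : ℕ} (hxy : x ≠ y) (h : a ≠ c ∧ a ≠ b ∧ c ≠ b) :
    (if ({x, y} : Finset ℕ) ⊆ {a, c, b} then 1 else 0 : ℕ) =
      (if s(a, b) = s(x, y) then 1 else 0) + (if s(a, c) = s(x, y) then 1 else 0) +
      (if s(c, b) = s(x, y) then 1 else 0) := by
  simp only [Finset.insert_subset_iff, Finset.singleton_subset_iff, Finset.mem_insert,
    Finset.mem_singleton, Sym2.eq_iff]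
  obtain ⟨h1, h2, h3⟩ := h
  grind

lemma parity {x y : ℕ} (hxy : x ≠ y) (T : BinaryTree ℕ) (a b : ℕ)
    (h : ∀ t ∈ fc T a b, t.card = 3) :
    Even ((fc T a b).countP (fun t => ({x, y} : Finset ℕ) ⊆ t) +
      ((sd T a b).map sy).count s(x, y) + (if s(a, b) = s(x, y) then 1 else 0)) := by
  induction T generalizing a b with
  | nil =>
    simp only [fc, sd, sy, List.map, List.count_cons, List.countP_nil, List.count_nil, beq_iff_eq]
    split_ifs <;> decide
  | node c l r hl hr =>
    have h3 := card3 (h {a, c, b} (by simp [fc]))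
    have e1 := hl a c (fun t ht => h t (by simp [fc, ht]))
    have e2 := hr c b (fun t ht => h t (by simp [fc, ht]))
    have e3 := face_ind hxy h3
    simp only [fc, sd, List.countP_cons, List.countP_append, List.map_append, List.count_append,
      decide_eq_true_eq, e3]
    rw [Nat.even_iff] at *
    omega

lemma noloop (T : BinaryTree ℕ) (a b : ℕ) (hab : a ≠ b)
    (h : ∀ t ∈ fc T a b, t.card = 3) : ∀ p ∈ sd T a b, p.1 ≠ p.2 := by
  induction T generalizing a b with
  | nil => simpa [sd] using hab
  | node c l r hl hr =>
    have h3 := card3 (h {a, c, b} (by simp [fc]))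
    intro p hp
    simp only [sd, List.mem_append] at hp
    rcases hp with hp | hp
    · exact hl a c h3.1 (fun t ht => h t (by simp [fc, ht])) p hp
    · exact hr c b h3.2.2 (fun t ht => h t (by simp [fc, ht])) p hp

lemma extend (T : BinaryTree ℕ) (a b : ℕ) (p : ℕ × ℕ) (hp : p ∈ sd T a b) (z : ℕ) :
    ∃ T', (fc T' a b).Perm ({p.1, z, p.2} :: fc T a b) := by
  induction T generalizing a b with
  | nil =>
    simp only [sd, List.mem_singleton] at hp
    subst hp
    exact ⟨.node z .nil .nil, by simp [fc]⟩
  | node c l r hl hr =>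
    simp only [sd, List.mem_append] at hp
    rcases hp with hp | hp
    · obtain ⟨T', hT⟩ := hl a c hp
      refine ⟨.node c T' r, ?_⟩
      simp only [fc]
      refine List.Perm.trans ?_ (List.Perm.swap _ _ _)
      exact (hT.append_right _).cons _
    · obtain ⟨T', hT⟩ := hr c b hp
      refine ⟨.node c l T', ?_⟩
      simp only [fc]
      refine List.Perm.trans ?_ (List.Perm.swap _ _ _)
      refine List.Perm.cons _ ?_
      exact (hT.append_left _).trans List.perm_middle

lemma ino_mem (T : BinaryTree ℕ) (a b x : ℕ) (hx : x ∈ ino T) : ∃ t ∈ fc T a b, x ∈ t := by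
  induction T generalizing a b with
  | nil => simp [ino] at hx
  | node c l r hl hr =>
    simp only [ino, List.mem_append, List.mem_cons] at hx
    rcases hx with hx | hx | hx
    · obtain ⟨t, ht, h⟩ := hl a c hx
      exact ⟨t, by simp [fc, ht], h⟩
    · exact ⟨{a, c, b}, by simp [fc], by simp [hx]⟩
    · obtain ⟨t, ht, h⟩ := hr c b hx
      exact ⟨t, by simp [fc, ht], h⟩

lemma countP_eq_card (l : List (Finset ℕ)) (hl : l.Nodup) (e : Finset ℕ) :
    (l.toFinset.filter (fun t => e ⊆ t)).card = l.countP (fun t => e ⊆ t) := by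
  rw [List.countP_eq_length_filter, ← List.toFinset_card_of_nodup (hl.filter _)]
  congr 1
  ext t
  simp

lemma step (Z : Finset (Finset ℕ)) (hZ : IsMinCycle Z) (T : BinaryTree ℕ) (a b : ℕ)
    (hT : 0 < T.numNodes) (hn : (fc T a b).Nodup) (hs : ∀ t ∈ fc T a b, t ∈ Z)
    (hlt : T.numNodes < Z.card) :
    ∃ T' a' b', T'.numNodes = T.numNodes + 1 ∧ (fc T' a' b').Nodup ∧
      ∀ t ∈ fc T' a' b', t ∈ Z := by
  obtain ⟨⟨h3, hev⟩, -, hmin⟩ := hZ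
  set S := (fc T a b).toFinset with hS
  have hcard : S.card = T.numNodes := by
    rw [hS, List.toFinset_card_of_nodup hn, fc_length]
  have hsub : S ⊂ Z := by
    rw [Finset.ssubset_iff_subset_ne]
    refine ⟨fun t ht => hs t (by simpa [hS] using ht), ?_⟩
    intro h; rw [h] at hcard; omega
  have hnc := hmin S hsub (by rw [← Finset.card_pos]; omega)
  have : ∃ e : Finset ℕ, e.card = 2 ∧ ¬ Even ((S.filter (fun t => e ⊆ t)).card) := by
    by_contra! hc
    exact hnc ⟨fun t ht => h3 t (hsub.1 ht), hc⟩
  obtain ⟨e, he2, hodd⟩ := this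
  have hZe := hev e he2
  have : ∃ t ∈ Z, t ∉ S ∧ e ⊆ t := by
    by_contra! hc
    apply hodd
    have : S.filter (fun t => e ⊆ t) = Z.filter (fun t => e ⊆ t) := by
      ext t
      simp only [Finset.mem_filter]
      constructor
      · rintro ⟨h1, h2⟩; exact ⟨hsub.1 h1, h2⟩
      · rintro ⟨h1, h2⟩
        refine ⟨?_, h2⟩
        by_contra h
        exact hc t h1 h h2
    rwa [this]
  obtain ⟨t, htZ, htS, het⟩ := this
  have htf : t ∉ fc T a b := by simpa [hS] using htS
  obtain ⟨x, y, hxy, rfl⟩ := Finset.card_eq_two.1 he2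
  have hpar := parity hxy T a b (fun t ht => h3 t (hs t ht))
  rw [hS, countP_eq_card _ hn] at hodd
  have ht3 := h3 t htZ
  obtain ⟨z, hz⟩ : ∃ z, t = {x, z, y} := by
    have hc : (t \ {x, y}).card = 1 := by
      rw [Finset.card_sdiff_of_subset het, ht3, he2]
    obtain ⟨z, hz⟩ := Finset.card_eq_one.1 hc
    refine ⟨z, ?_⟩
    rw [← Finset.sdiff_union_of_subset het, hz]
    ext w; simp
  suffices H : ∃ T' a' b', (fc T' a' b').Perm (t :: fc T a b) by
    obtain ⟨T', a', b', hp⟩ := H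
    refine ⟨T', a', b', ?_, ?_, ?_⟩
    · rw [← fc_length T' a' b', hp.length_eq, List.length_cons, fc_length]
    · rw [hp.nodup_iff]; simp [htf, hn]
    · intro u hu
      have := hp.mem_iff.1 hu
      simp only [List.mem_cons] at this
      rcases this with rfl | h
      · exact htZ
      · exact hs _ h
  by_cases hab : s(a, b) = s(x, y)
  · refine ⟨.node b T .nil, a, z, ?_⟩
    simp only [fc, List.append_nil]
    have : ({a, b, z} : Finset ℕ) = t := by
      rw [hz]
      rcases Sym2.eq_iff.1 hab with ⟨rfl, rfl⟩ | ⟨rfl, rfl⟩ <;> (ext w; simp; tauto)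
    rw [this]
  · rw [if_neg hab] at hpar
    have hpos : 0 < ((sd T a b).map sy).count s(x, y) := by
      rw [Nat.even_iff] at *
      omega
    obtain ⟨p, hp, hpe⟩ := List.mem_map.1 (List.count_pos_iff.1 hpos)
    obtain ⟨T', hT'⟩ := extend T a b p hp z
    refine ⟨T', a, b, ?_⟩
    have : ({p.1, z, p.2} : Finset ℕ) = t := by
      rw [hz]
      obtain ⟨p1, p2⟩ := p
      rcases Sym2.eq_iff.1 hpe with ⟨rfl, rfl⟩ | ⟨rfl, rfl⟩ <;> (ext w; simp; try tauto)
    rwa [this] at hT'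

lemma build (Z : Finset (Finset ℕ)) (hZ : IsMinCycle Z) (k : ℕ) (hk : k + 1 ≤ Z.card) :
    ∃ T a b, T.numNodes = k + 1 ∧ (fc T a b).Nodup ∧ ∀ t ∈ fc T a b, t ∈ Z := by
  induction k with
  | zero =>
    obtain ⟨t, ht⟩ := hZ.2.1
    obtain ⟨x, y, z, -, -, -, rfl⟩ := Finset.card_eq_three.1 (hZ.1.1 t ht)
    exact ⟨.node y .nil .nil, x, z, by simp, by simp [fc], by simpa [fc] using ht⟩
  | succ k ih =>
    obtain ⟨T, a, b, h1, h2, h3⟩ := ih (by omega)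
    obtain ⟨T', a', b', h⟩ := step Z hZ T a b (by omega) h2 h3 (by omega)
    exact ⟨T', a', b', by rw [h.1, h1], h.2⟩

/-- closed words all of whose edges are traversed an even number of times -/
def EvenW {α : Type} [DecidableEq α] (L : List α) : Prop :=
  ∃ b, L.getLast? = some b ∧ ∀ e : Sym2 α, Even (((arcs b L).map sy).count e)

lemma encode (Z : Finset (Finset ℕ)) (hZ : IsMinCycle Z) (v : ℕ)
    (hv : Z.biUnion id = Finset.range v) :
    ∃ T a b, (fc T a b).toFinset = Z ∧ T.numNodes = Z.card ∧
      EvenW (a :: (ino T ++ [b])) ∧ ∀ x ∈ a :: (ino T ++ [b]), x < v := by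
  have hpos : 0 < Z.card := Finset.card_pos.2 hZ.2.1
  obtain ⟨T, a, b, h1, h2, h3⟩ := build Z hZ (Z.card - 1) (by omega)
  have h1' : T.numNodes = Z.card := by omega
  have hc3 : ∀ t ∈ fc T a b, t.card = 3 := fun t ht => hZ.1.1 t (h3 t ht)
  have hSZ : (fc T a b).toFinset = Z := by
    apply Finset.eq_of_subset_of_card_le
    · intro t ht; exact h3 t (by simpa using ht)
    · rw [List.toFinset_card_of_nodup h2, fc_length, h1']
  have hroot : ∃ t ∈ fc T a b, a ∈ t ∧ b ∈ t ∧ a ≠ b := by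
    cases T with
    | nil => simp at h1
    | node c l r =>
      exact ⟨{a, c, b}, by simp [fc], by simp, by simp, (card3 (hc3 {a, c, b} (by simp [fc]))).2.1⟩
  obtain ⟨t0, ht0, hat, hbt, hab⟩ := hroot
  refine ⟨T, a, b, hSZ, h1', ⟨b, List.getLast?_eq_some_iff.2 ⟨a :: ino T, by simp⟩, ?_⟩, ?_⟩
  · intro e
    induction e with | _ x y =>
    rw [arcs, ← sd_eq]
    by_cases hxy : x = y
    · subst hxy
      suffices h0 : List.count s(x, x) (List.map sy ((b, a) :: sd T a b)) = 0 by
        rw [h0]; exact Even.zero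
      rw [List.count_eq_zero]
      intro hm
      obtain ⟨p, hp, hpe⟩ := List.mem_map.1 hm
      have : p.1 ≠ p.2 := by
        rcases List.mem_cons.1 hp with rfl | hp
        · exact hab.symm
        · exact noloop T a b hab hc3 p hp
      rcases Sym2.eq_iff.1 hpe with ⟨h, h'⟩ | ⟨h, h'⟩ <;> exact this (h.trans h'.symm)
    · have hpar := parity hxy T a b hc3
      have hz := hZ.1.2 {x, y} (Finset.card_pair hxy)
      rw [← hSZ, countP_eq_card _ h2] at hz
      simp only [List.map_cons, List.count_cons, beq_iff_eq, sy]
      rw [Sym2.eq_swap (a := b)]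
      rw [Nat.even_iff] at *
      omega
  · intro x hx
    have : ∃ t ∈ fc T a b, x ∈ t := by
      simp only [List.mem_cons, List.mem_append, List.not_mem_nil, or_false] at hx
      rcases hx with rfl | hx | rfl
      · exact ⟨t0, ht0, hat⟩
      · exact ino_mem T a b x hx
      · exact ⟨t0, ht0, hbt⟩
    obtain ⟨t, ht, hxt⟩ := this
    rw [← Finset.mem_range, ← hv, Finset.mem_biUnion]
    exact ⟨t, h3 t ht, hxt⟩

section count
set_option linter.unusedSectionVars false
variable {α : Type} [Fintype α] [DecidableEq α]

def words : ℕ → Finset (List α)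
  | 0 => {[]}
  | n + 1 => (Finset.univ ×ˢ words n).image (fun q => q.1 :: q.2)

lemma mem_words (L : List α) (n : ℕ) : L ∈ words n ↔ L.length = n := by
  induction n generalizing L with
  | zero => simp [words]
  | succ n ih =>
    cases L with
    | nil => simp [words]
    | cons x L => simp [words, ih]

lemma markov (p : α → α → ℝ) (hp0 : ∀ x y, 0 ≤ p x y) (hp : ∀ x, ∑ y, p x y ≤ 1) (n : ℕ) (x : α) :
    ∑ L ∈ words n, ((arcs x L).map (fun q => p q.1 q.2)).prod ≤ 1 := by
  induction n generalizing x with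
  | zero => simp [words, arcs]
  | succ n ih =>
    rw [words, Finset.sum_image (by
      rintro ⟨a, b⟩ _ ⟨c, d⟩ _ h
      simpa using h), Finset.sum_product]
    simp only [arcs, List.map_cons, List.prod_cons]
    calc _ = ∑ y, p x y * ∑ L ∈ words n, ((arcs y L).map (fun q => p q.1 q.2)).prod := by
          simp [Finset.mul_sum]
      _ ≤ ∑ y, p x y * 1 := by
          gcongr with y _
          · exact hp0 x y
          · exact ih y
      _ ≤ 1 := by simpa using hp x

lemma arcs_snd (x : α) (L : List α) : (arcs x L).map Prod.snd = L := by
  induction L generalizing x with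
  | nil => rfl
  | cons y L ih => simp [arcs, ih]

lemma arcs_fst (x b : α) (L : List α) : (arcs x (L ++ [b])).map Prod.fst = x :: L := by
  induction L generalizing x with
  | nil => rfl
  | cons y L ih => simp [arcs, ih]

lemma arcs_fst_perm (b : α) (L : List α) (h : L.getLast? = some b) :
    ((arcs b L).map Prod.fst).Perm L := by
  obtain ⟨M, rfl⟩ := List.getLast?_eq_some_iff.1 h
  rw [arcs_fst]
  exact (List.perm_append_singleton b M).symm

lemma rowsum (A : List (α × α)) (x : α) :
    ∑ y, (A.map sy).count s(x, y) ≤ (A.map Prod.fst).count x + (A.map Prod.snd).count x := by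
  induction A with
  | nil => simp
  | cons a A ih =>
    obtain ⟨u, w⟩ := a
    simp only [List.map_cons, List.count_cons, beq_iff_eq, Finset.sum_add_distrib, sy]
    have : ∑ y, (if s(u, w) = s(x, y) then 1 else 0) ≤
        (if u = x then 1 else 0) + (if w = x then 1 else 0) := by
      calc ∑ y, (if s(u, w) = s(x, y) then 1 else 0)
          ≤ ∑ y, ((if w = y then (if u = x then 1 else 0) else 0)
              + (if u = y then (if w = x then 1 else 0) else 0)) := by
            apply Finset.sum_le_sum
            intro y _
            simp only [Sym2.eq_iff]
            grind
        _ = _ := by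
            rw [Finset.sum_add_distrib]
            simp
    omega

lemma prod_count {β : Type} [Fintype β] [DecidableEq β] (l : List β) (g : β → ℝ) :
    (l.map g).prod = ∏ e, g e ^ l.count e := by
  rw [Finset.prod_list_map_count]
  apply Finset.prod_subset (Finset.subset_univ _)
  intro e _ he
  rw [List.count_eq_zero_of_not_mem (by simpa using he), pow_zero]

def DD (d : α → ℕ) (e : Sym2 α) : ℝ :=
  Sym2.lift ⟨fun x y => (d x : ℝ) * d y, fun _ _ => mul_comm _ _⟩ e

lemma DD_nonneg (d : α → ℕ) (e : Sym2 α) : 0 ≤ DD d e := by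
  induction e with | _ x y => simp only [DD, Sym2.lift_mk]; positivity

def Cls (n : ℕ) (b : α) (d : α → ℕ) (j : Sym2 α → ℕ) : Finset (List α) :=
  (words n).filter (fun L => L.getLast? = some b ∧ (∀ x, L.count x = d x) ∧
    ∀ e, ((arcs b L).map sy).count e = 2 * j e)

lemma arcs_length (x : α) (L : List α) : (arcs x L).length = L.length := by
  rw [← List.length_map (f := Prod.snd), arcs_snd]

lemma cls_prod (n : ℕ) (b : α) (d : α → ℕ) (j : Sym2 α → ℕ) (L : List α) (hL : L ∈ Cls n b d j) :
    (L.map (fun x => (d x : ℝ))).prod = ∏ e, DD d e ^ j e := by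
  simp only [Cls, Finset.mem_filter] at hL
  obtain ⟨hn, hb, hd, hj⟩ := hL
  have h1 : (((arcs b L).map sy).map (DD d)).prod = (∏ e, DD d e ^ j e) ^ 2 := by
    rw [prod_count, ← Finset.prod_pow]
    refine Finset.prod_congr rfl fun e _ => ?_
    rw [hj, mul_comm, pow_mul]
  have h2 : (((arcs b L).map sy).map (DD d)).prod = (L.map (fun x => (d x : ℝ))).prod ^ 2 := by
    have e1 : ((arcs b L).map sy).map (DD d) =
        (arcs b L).map (fun q => (d q.1 : ℝ) * (d q.2 : ℝ)) := by
      rw [List.map_map]; rfl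
    rw [e1, List.prod_map_mul, sq]
    have e2 : (arcs b L).map (fun q => (d q.1 : ℝ)) =
      ((arcs b L).map Prod.fst).map (fun x => (d x : ℝ)) := by rw [List.map_map]; rfl
    have e3 : (arcs b L).map (fun q => (d q.2 : ℝ)) =
      ((arcs b L).map Prod.snd).map (fun x => (d x : ℝ)) := by rw [List.map_map]; rfl
    rw [e2, e3, arcs_snd, ((arcs_fst_perm b L hb).map _).prod_eq]
  have h0 : 0 ≤ (L.map (fun x => (d x : ℝ))).prod := by
    apply List.prod_nonneg
    intro a ha
    obtain ⟨x, _, rfl⟩ := List.mem_map.1 ha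
    positivity
  have h0' : 0 ≤ ∏ e, DD d e ^ j e :=
    Finset.prod_nonneg fun e _ => pow_nonneg (DD_nonneg d e) _
  exact (pow_left_inj₀ h0 h0' two_ne_zero).1 (h2.symm.trans h1)

lemma cls_card (n : ℕ) (b : α) (d : α → ℕ) (j : Sym2 α → ℕ) :
    ((Cls n b d j).card : ℝ) ≤ ∏ e, DD d e ^ j e / (j e).factorial := by
  have h0' : 0 ≤ ∏ e, DD d e ^ j e / (j e).factorial :=
    Finset.prod_nonneg fun e _ => div_nonneg (pow_nonneg (DD_nonneg d e) _) (by positivity)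
  rcases (Cls n b d j).eq_empty_or_nonempty with h | ⟨L0, hL0⟩
  · rw [h]; simpa using h0'
  have hL0' := hL0
  simp only [Cls, Finset.mem_filter] at hL0
  obtain ⟨hn, hb, hd, hj⟩ := hL0
  set p : α → α → ℝ := fun x y => (j s(x, y) : ℝ) / d x with hpdef
  have hrow : ∀ x, ∑ y, p x y ≤ 1 := by
    intro x
    have := rowsum (arcs b L0) x
    rw [arcs_snd, (arcs_fst_perm b L0 hb).count_eq, hd] at this
    simp only [hj, ← Finset.mul_sum] at this
    rw [hpdef, ← Finset.sum_div]
    apply div_le_one_of_le₀ _ (by positivity)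
    have h2 : ∑ y, j s(x, y) ≤ d x := by omega
    exact_mod_cast h2
  have hm := markov p (fun x y => by positivity) hrow n b
  set Q := ∏ e, DD d e ^ j e with hQ
  have hQpos : 0 < Q := by
    rw [hQ, ← cls_prod n b d j L0 hL0']
    apply List.prod_pos
    intro a ha
    obtain ⟨x, hx, rfl⟩ := List.mem_map.1 ha
    rw [← hd]
    exact_mod_cast List.count_pos_iff.2 hx
  have hF : (0 : ℝ) < ∏ e, ((j e).factorial : ℝ) :=
    Finset.prod_pos fun e _ => by positivity
  have hwt : ∀ L ∈ Cls n b d j, (∏ e, ((j e).factorial : ℝ)) / Q ≤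
      ((arcs b L).map (fun q => p q.1 q.2)).prod := by
    intro L hL
    have hp1 := cls_prod n b d j L hL
    simp only [Cls, Finset.mem_filter] at hL
    obtain ⟨hn, hb, hd, hj⟩ := hL
    have e1 : ((arcs b L).map (fun q => p q.1 q.2)).prod * Q = ∏ e, (j e : ℝ) ^ (2 * j e) := by
      rw [hQ, ← hp1, ← ((arcs_fst_perm b L hb).map (fun x => (d x : ℝ))).prod_eq, List.map_map,
        ← List.prod_map_mul]
      have : ∀ q ∈ arcs b L, p q.1 q.2 * ((fun x => (d x : ℝ)) ∘ Prod.fst) q =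
          ((fun e => (j e : ℝ)) ∘ sy) q := by
        intro q hq
        have : 0 < d q.1 := by
          rw [← hd]
          apply List.count_pos_iff.2
          rw [← (arcs_fst_perm b L hb).mem_iff]
          exact List.mem_map_of_mem hq
        simp only [hpdef, Function.comp, sy]
        field_simp
      rw [List.map_congr_left this, ← List.map_map, prod_count]
      simp only [hj]
    rw [div_le_iff₀ hQpos, e1]
    apply Finset.prod_le_prod
    · intro e _; positivity
    · intro e _
      have : (j e).factorial ≤ (j e) ^ (2 * j e) := by
        calc (j e).factorial ≤ (j e) ^ (j e) := Nat.factorial_le_pow _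
          _ ≤ _ := by
            rcases Nat.eq_zero_or_pos (j e) with h | h
            · simp [h]
            · exact Nat.pow_le_pow_right h (by omega)
      exact_mod_cast this
  have hsum : ((Cls n b d j).card : ℝ) * ((∏ e, ((j e).factorial : ℝ)) / Q) ≤ 1 := by
    rw [← nsmul_eq_mul, ← Finset.sum_const]
    refine (Finset.sum_le_sum hwt).trans (le_trans ?_ hm)
    apply Finset.sum_le_sum_of_subset_of_nonneg (Finset.filter_subset _ _)
    intro L _ _
    apply List.prod_nonneg
    intro a ha
    obtain ⟨x, _, rfl⟩ := List.mem_map.1 ha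
    positivity
  rw [Finset.prod_div_distrib, ← hQ, le_div_iff₀ hF]
  rw [mul_div_assoc', div_le_one hQpos] at hsum
  exact hsum

lemma cls_card2 (n : ℕ) (hn : 0 < n) (b : α) (d : α → ℕ) (j : Sym2 α → ℕ) :
    ((Cls n b d j).card : ℝ) ≤
      Real.sqrt n ^ n * ∏ e, (DD d e / n) ^ j e / (j e).factorial := by
  have h0' : 0 ≤ Real.sqrt n ^ n * ∏ e, (DD d e / n) ^ j e / (j e).factorial := by
    apply mul_nonneg (by positivity)
    exact Finset.prod_nonneg fun e _ =>
      div_nonneg (pow_nonneg (div_nonneg (DD_nonneg d e) (by positivity)) _) (by positivity)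
  rcases (Cls n b d j).eq_empty_or_nonempty with h | ⟨L0, hL0⟩
  · rw [h]; simpa using h0'
  refine (cls_card n b d j).trans (le_of_eq ?_)
  simp only [Cls, Finset.mem_filter, mem_words] at hL0
  obtain ⟨hl, hb, hd, hj⟩ := hL0
  have h1 : Real.sqrt n ^ n = ∏ e, (n : ℝ) ^ j e := by
    have := prod_count ((arcs b L0).map sy) (fun _ => Real.sqrt n)
    rw [List.map_const', List.prod_replicate, List.length_map, arcs_length, hl] at this
    rw [this]
    refine Finset.prod_congr rfl fun e _ => ?_
    rw [hj, pow_mul, Real.sq_sqrt (by positivity)]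
  rw [h1, ← Finset.prod_mul_distrib]
  refine Finset.prod_congr rfl fun e _ => ?_
  rw [div_pow]
  field_simp

lemma sum_DD (d : α → ℕ) : ∑ e, DD d e ≤ (∑ x, (d x : ℝ)) ^ 2 := by
  have : (∑ x, (d x : ℝ)) ^ 2 = ∑ q : α × α, DD d (sy q) := by
    rw [sq, Finset.sum_mul_sum, Fintype.sum_prod_type]
    rfl
  rw [this, ← Finset.sum_fiberwise Finset.univ (sy : α × α → Sym2 α)]
  apply Finset.sum_le_sum
  intro e _
  induction e with | _ x y =>
  exact Finset.single_le_sum (f := fun q => DD d (sy q)) (fun q _ => DD_nonneg d _)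
    (show (x, y) ∈ _ by simp [sy])

lemma sum_cls (n : ℕ) (hn : 0 < n) (b : α) (d : α → ℕ) (hd : ∑ x, d x = n) :
    ∑ j ∈ Fintype.piFinset (fun _ : Sym2 α => Finset.range (n + 1)), ((Cls n b d j).card : ℝ) ≤
      Real.sqrt n ^ n * Real.exp n := by
  refine (Finset.sum_le_sum fun j _ => cls_card2 n hn b d j).trans ?_
  rw [← Finset.mul_sum]
  refine mul_le_mul_of_nonneg_left ?_ (by positivity)
  rw [← Finset.prod_univ_sum (fun _ : Sym2 α => Finset.range (n + 1))
    (fun e i => (DD d e / n) ^ i / (i.factorial : ℝ))]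
  have hnn : ∀ e, 0 ≤ DD d e / n := fun e => div_nonneg (DD_nonneg d e) (by positivity)
  calc _ ≤ ∏ e, Real.exp (DD d e / n) := by
        apply Finset.prod_le_prod
        · intro e _
          exact Finset.sum_nonneg fun i _ => div_nonneg (pow_nonneg (hnn e) _) (by positivity)
        · intro e _
          exact Real.sum_le_exp_of_nonneg (hnn e) _
    _ = Real.exp (∑ e, DD d e / n) := (Real.exp_sum _ _).symm
    _ ≤ Real.exp n := by
        apply Real.exp_le_exp.2
        rw [← Finset.sum_div, div_le_iff₀ (by positivity)]
        refine (sum_DD d).trans (le_of_eq ?_)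
        rw [← hd]; push_cast; ring

lemma card_d (n : ℕ) :
    (((Fintype.piFinset (fun _ : α => Finset.range (n + 1))).filter
      (fun d => ∑ x, d x = n)).card : ℝ) ≤ 2 ^ n * 2 ^ Fintype.card α := by
  have h1 : ∀ d ∈ (Fintype.piFinset (fun _ : α => Finset.range (n + 1))).filter
      (fun d => ∑ x, d x = n), (1 : ℝ) ≤ 2 ^ n * ∏ x, (1 / 2 : ℝ) ^ d x := by
    intro d hd
    rw [Finset.mem_filter] at hd
    rw [Finset.prod_pow_eq_pow_sum, hd.2, ← mul_pow]
    norm_num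
  rw [Finset.card_eq_sum_ones, Nat.cast_sum, Nat.cast_one]
  refine (Finset.sum_le_sum h1).trans ?_
  rw [← Finset.mul_sum]
  refine mul_le_mul_of_nonneg_left ?_ (by positivity)
  refine (Finset.sum_le_sum_of_subset_of_nonneg (Finset.filter_subset _ _)
    (fun d _ _ => by positivity)).trans ?_
  rw [← Finset.prod_univ_sum (fun _ : α => Finset.range (n + 1))
    (fun _ i => (1 / 2 : ℝ) ^ i), Finset.prod_const, Finset.card_univ]
  exact pow_le_pow_left₀ (Finset.sum_nonneg fun _ _ => by positivity) (sum_geometric_two_le _) _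

open Classical in
lemma even_count (n : ℕ) (hn : 0 < n) :
    (((words n).filter (fun L : List α => EvenW L)).card : ℝ) ≤
      Fintype.card α * (2 ^ n * 2 ^ Fintype.card α * (Real.sqrt n ^ n * Real.exp n)) := by
  set DS := (Fintype.piFinset (fun _ : α => Finset.range (n + 1))).filter
      (fun d => ∑ x, d x = n) with hDS
  set JS := Fintype.piFinset (fun _ : Sym2 α => Finset.range (n + 1)) with hJS
  have hsub : (words n).filter (fun L : List α => EvenW L) ⊆
      Finset.univ.biUnion (fun b => DS.biUnion (fun d => JS.biUnion (fun j => Cls n b d j))) := by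
    intro L hL
    rw [Finset.mem_filter] at hL
    obtain ⟨hw, b, hb, hev⟩ := hL
    have hl := (mem_words L n).1 hw
    simp only [Finset.mem_biUnion, Finset.mem_univ, true_and]
    refine ⟨b, fun x => L.count x, ?_, fun e => ((arcs b L).map sy).count e / 2, ?_, ?_⟩
    · simp only [hDS, Finset.mem_filter, Fintype.mem_piFinset, Finset.mem_range]
      refine ⟨fun x => ?_, ?_⟩
      · have := List.count_le_length (a := x) (l := L); omega
      · rw [← hl]
        have := Multiset.sum_count_eq_card (s := Finset.univ) (m := (L : Multiset α))
          (fun a _ => Finset.mem_univ a)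
        simpa using this
    · simp only [hJS, Fintype.mem_piFinset, Finset.mem_range]
      intro e
      have := List.count_le_length (a := e) (l := (arcs b L).map sy)
      rw [List.length_map, arcs_length] at this
      omega
    · simp only [Cls, Finset.mem_filter]
      refine ⟨hw, hb, fun _ => trivial, fun e => ?_⟩
      have := hev e
      rw [Nat.even_iff] at this
      omega
  have h1 : ((words n).filter (fun L : List α => EvenW L)).card ≤
      ∑ b : α, ∑ d ∈ DS, ∑ j ∈ JS, (Cls n b d j).card := by
    refine (Finset.card_le_card hsub).trans ?_
    refine Finset.card_biUnion_le.trans (Finset.sum_le_sum fun b _ => ?_)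
    refine Finset.card_biUnion_le.trans (Finset.sum_le_sum fun d _ => ?_)
    exact Finset.card_biUnion_le
  have h2 : (((words n).filter (fun L : List α => EvenW L)).card : ℝ) ≤
      ∑ b : α, ∑ d ∈ DS, ∑ j ∈ JS, ((Cls n b d j).card : ℝ) := by exact_mod_cast h1
  refine h2.trans ?_
  calc _ ≤ ∑ b : α, ∑ d ∈ DS, Real.sqrt n ^ n * Real.exp n := by
        refine Finset.sum_le_sum fun b _ => Finset.sum_le_sum fun d hd => ?_
        exact sum_cls n hn b d (Finset.mem_filter.1 hd).2
    _ = Fintype.card α * (DS.card * (Real.sqrt n ^ n * Real.exp n)) := by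
        simp [Finset.sum_const, Finset.card_univ]
    _ ≤ _ := by
        gcongr
        exact card_d n

end count

lemma arcs_map {α β : Type} (g : α → β) (x : α) (L : List α) :
    arcs (g x) (L.map g) = (arcs x L).map (Prod.map g g) := by
  induction L generalizing x with
  | nil => rfl
  | cons y L ih => simp [arcs, ih]

lemma evenW_map {v : ℕ} (L : List (Fin v)) (h : EvenW (L.map Fin.val)) : EvenW L := by
  obtain ⟨b, hb, he⟩ := h
  rw [List.getLast?_map, Option.map_eq_some_iff] at hb
  obtain ⟨b', hb', rfl⟩ := hb
  refine ⟨b', hb', fun e => ?_⟩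
  have := he (e.map Fin.val)
  have h2 : (arcs b'.val (L.map Fin.val)).map sy =
      ((arcs b' L).map sy).map (Sym2.map Fin.val) := by
    rw [arcs_map, List.map_map, List.map_map]
    rfl
  rwa [h2, List.count_map_of_injective _ _ (Sym2.map.injective Fin.val_injective)] at this

open Classical in
lemma Zcount_le (f v : ℕ) : Zcount f v ≤ 4 ^ f *
    ((words (f + 2)).filter (fun L : List (Fin v) => EvenW L)).card := by
  set X := treesOfNumNodesEq f ×ˢ ((words (f + 2)).filter (fun L : List (Fin v) => EvenW L)) with hX
  have key : ∀ Z : {Z : Finset (Finset ℕ) //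
      IsMinCycle Z ∧ Z.card = f ∧ Z.biUnion id = Finset.range v},
      ∃ c : X, ∃ T a b, (fc T a b).toFinset = Z.1 ∧ T.map (fun _ => ()) = c.1.1 ∧
        c.1.2.map Fin.val = a :: (ino T ++ [b]) := by
    rintro ⟨Z, hZ, hf, hv⟩
    obtain ⟨T, a, b, h1, h2, h3, h4⟩ := encode Z hZ v hv
    obtain ⟨L, hL⟩ : ∃ L : List (Fin v), L.map Fin.val = a :: (ino T ++ [b]) := by
      generalize a :: (ino T ++ [b]) = M at h4
      lift M to List (Fin v) using h4
      exact ⟨M, rfl⟩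
    refine ⟨⟨(T.map (fun _ => ()), L), ?_⟩, T, a, b, h1, rfl, hL⟩
    rw [hX, Finset.mem_product, Finset.mem_filter, mem_treesOfNumNodesEq, mem_words, numNodes_map]
    refine ⟨h2.trans hf, ?_, ?_⟩
    · have := congrArg List.length hL
      simp [ino_length] at this
      rw [this, h2, hf]
    · rw [← hL] at h3
      exact evenW_map L h3
  choose c T a b h1 h2 h3 using key
  have hinj : Function.Injective c := by
    intro Z Z' h
    have e3 := h3 Z
    rw [h, h3 Z'] at e3
    simp only [List.cons.injEq] at e3
    obtain ⟨ea, e⟩ := e3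
    have e' := List.append_inj' e rfl
    have eb : b Z' = b Z := by simpa using e'.2
    have eT : T Z' = T Z := tree_inj _ _ (by rw [h2, h2, h]) e'.1
    apply Subtype.ext
    rw [← h1, ← h1, ea, eb, eT]
  have hle := Nat.card_le_card_of_injective c hinj
  rw [Zcount]
  refine hle.trans ?_
  rw [Nat.card_eq_fintype_card, Fintype.card_coe, hX, Finset.card_product,
    treesOfNumNodesEq_card_eq_catalan]
  refine Nat.mul_le_mul_right _ ?_
  rw [catalan_eq_centralBinom_div]
  exact (Nat.div_le_self _ _).trans (Nat.centralBinom_le_four_pow f)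

lemma Zcount_v (f v : ℕ) (h : Zcount f v ≠ 0) : v ≤ 3 * f := by
  have : Nonempty {Z : Finset (Finset ℕ) //
    IsMinCycle Z ∧ Z.card = f ∧ Z.biUnion id = Finset.range v} := by
    by_contra hc
    rw [not_nonempty_iff] at hc
    exact h Nat.card_of_isEmpty
  obtain ⟨Z, hZ, hf, hv⟩ := this
  have := Finset.card_biUnion_le_card_mul Z id 3 (fun t ht => (hZ.1.1 t ht).le)
  rw [hv, Finset.card_range, hf] at this
  omega

lemma numeric (f v : ℕ) (hf : 2 ≤ f) (hv : v ≤ 3 * f) :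
    (4 : ℝ) ^ f * (v * (2 ^ (f + 2) * 2 ^ v *
      (Real.sqrt ((f + 2 : ℕ) : ℝ) ^ (f + 2) * Real.exp ((f + 2 : ℕ) : ℝ)))) ≤
      (4 * (8 * (4 * 8 * (2 * 4 * Real.exp 2)))) ^ f * (f : ℝ) ^ ((f : ℝ) / 2) := by
  have a1 : (v : ℝ) ≤ 8 ^ f := by
    have h1 : v ≤ 2 ^ v := Nat.lt_two_pow_self.le
    have h2 : 2 ^ v ≤ 2 ^ (3 * f) := Nat.pow_le_pow_right (by norm_num) hv
    rw [pow_mul] at h2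
    exact_mod_cast h1.trans h2
  have a2 : (2 : ℝ) ^ (f + 2) ≤ 4 ^ f := by
    have : (4 : ℝ) ^ f = 2 ^ (2 * f) := by rw [pow_mul]; norm_num
    rw [this]
    exact pow_le_pow_right₀ (by norm_num) (by omega)
  have a3 : (2 : ℝ) ^ v ≤ 8 ^ f := by
    have : (8 : ℝ) ^ f = 2 ^ (3 * f) := by rw [pow_mul]; norm_num
    rw [this]
    exact pow_le_pow_right₀ (by norm_num) hv
  have a4 : Real.exp ((f + 2 : ℕ) : ℝ) ≤ Real.exp 2 ^ f := by
    rw [← Real.exp_nat_mul]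
    apply Real.exp_le_exp.2
    push_cast
    have : (2 : ℝ) ≤ f := by exact_mod_cast hf
    linarith
  have a5 : Real.sqrt ((f + 2 : ℕ) : ℝ) ^ (f + 2) ≤ (2 * 4) ^ f * (f : ℝ) ^ ((f : ℝ) / 2) := by
    have hs : Real.sqrt ((f + 2 : ℕ) : ℝ) ≤ 2 * Real.sqrt f := by
      apply Real.sqrt_le_iff.2
      refine ⟨by positivity, ?_⟩
      rw [mul_pow, Real.sq_sqrt (by positivity)]
      push_cast
      have : (2 : ℝ) ≤ f := by exact_mod_cast hf
      linarith
    have hq : Real.sqrt f ^ f = (f : ℝ) ^ ((f : ℝ) / 2) := by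
      rw [Real.sqrt_eq_rpow, ← Real.rpow_natCast, ← Real.rpow_mul (by positivity)]
      congr 1; ring
    have hn : ((f + 2 : ℕ) : ℝ) ≤ 4 ^ f := by
      refine le_trans ?_ a2
      exact_mod_cast (Nat.lt_two_pow_self (n := f + 2)).le
    rw [pow_add, Real.sq_sqrt (by positivity)]
    calc _ ≤ (2 * Real.sqrt f) ^ f * 4 ^ f := by gcongr
      _ = _ := by rw [mul_pow, hq, mul_pow]; ring
  calc _ ≤ (4 : ℝ) ^ f * (8 ^ f * (4 ^ f * 8 ^ f *
      (((2 * 4) ^ f * (f : ℝ) ^ ((f : ℝ) / 2)) * Real.exp 2 ^ f))) := by gcongr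
    _ = _ := by simp only [mul_pow]; ring

end ZB

/-- **Theorem (upper bound on the number of minimal 2-cycles).**
For every `δ > 0` there is a constant `C_δ` such that for all sufficiently large `f`
and `v`, `Z(f,v) ≤ C_δ^f · f^(f/2) · v^(δf)`. -/
theorem Zcount_upper_bound (δ : ℝ) (hδ : 0 < δ) :
    ∃ C : ℝ, 0 < C ∧ ∃ N : ℕ, ∀ f v : ℕ, N ≤ f → N ≤ v →
      (Zcount f v : ℝ) ≤ C ^ f * (f : ℝ) ^ ((f : ℝ) / 2) * (v : ℝ) ^ (δ * f) := by
  refine ⟨4 * (8 * (4 * 8 * (2 * 4 * Real.exp 2))), by positivity, 2, fun f v hf hv => ?_⟩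
  have hv1 : (1 : ℝ) ≤ (v : ℝ) ^ (δ * f) := by
    apply Real.one_le_rpow
    · have : 1 ≤ v := by omega
      exact_mod_cast this
    · positivity
  by_cases h0 : Zcount f v = 0
  · rw [h0, Nat.cast_zero]
    positivity
  have hv3 := ZB.Zcount_v f v h0
  classical
  have h1 : (Zcount f v : ℝ) ≤ 4 ^ f *
      (((ZB.words (f + 2)).filter (fun L : List (Fin v) => ZB.EvenW L)).card : ℝ) := by
    have := ZB.Zcount_le f v
    refine le_trans (Nat.cast_le.2 this) (le_of_eq ?_)
    push_cast
    congr!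
  have h2 := ZB.even_count (α := Fin v) (f + 2) (by omega)
  rw [Fintype.card_fin] at h2
  have h3 := ZB.numeric f v hf hv3
  have h4 : (Zcount f v : ℝ) ≤
      (4 * (8 * (4 * 8 * (2 * 4 * Real.exp 2)))) ^ f * (f : ℝ) ^ ((f : ℝ) / 2) := by
    refine h1.trans (le_trans ?_ h3)
    refine mul_le_mul_of_nonneg_left (le_trans (le_of_eq ?_) h2) (by positivity)
    congr!
  exact h4.trans (le_mul_of_one_le_right (by positivity) hv1)
end

section
/- For all positive integers f and v, Z(f,v) ≤ Σ_{w = v}^{3f} |T(f,w)| · v^w, i.e. the number of inclusion-minimal 2-cycles on vertex set {1,…,v} with f faces is at most the sum over w ≥ v of the number of isomorphism classes of connected triangulated closed surfaces with f faces and w vertices, times v^w. -/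
/-- A connected triangulated closed surface on the vertex set `Fin w`, given by its
(nonempty) set `F` of 3-element faces: every edge lies in exactly two faces, the link
of every vertex is connected, any two faces are joined by a chain of faces in which
consecutive faces share an edge, and every vertex lies in some face. -/
def IsClosedSurface {w : ℕ} (F : Finset (Finset (Fin w))) : Prop :=
  F.Nonempty ∧
  (∀ t ∈ F, t.card = 3) ∧
  (∀ e : Finset (Fin w), e.card = 2 → (∃ t ∈ F, e ⊆ t) →
    (F.filter (fun t => e ⊆ t)).card = 2) ∧
  (∀ v : Fin w, ∃ t ∈ F, v ∈ t) ∧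
  (∀ v a b : Fin w,
    (∃ t ∈ F, v ∈ t ∧ a ∈ t ∧ a ≠ v) → (∃ t ∈ F, v ∈ t ∧ b ∈ t ∧ b ≠ v) →
    Relation.ReflTransGen (fun x y => ({v, x, y} : Finset (Fin w)) ∈ F) a b) ∧
  (∀ t ∈ F, ∀ t' ∈ F,
    Relation.ReflTransGen (fun s s' => s ∈ F ∧ s' ∈ F ∧ (s ∩ s').card = 2) t t')

/-- Simplicial isomorphism of two complexes on the vertex set `Fin w`: a bijection of
the vertex set mapping the faces of one bijectively onto the faces of the other. -/
def SurfIso {w : ℕ} (F F' : Finset (Finset (Fin w))) : Prop :=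
  ∃ σ : Equiv.Perm (Fin w), F.image (fun t => t.image σ) = F'

/-- `Tcount f w` is the number of simplicial-isomorphism classes of connected
triangulated closed surfaces with `f` faces and `w` vertices. -/
noncomputable def Tcount (f w : ℕ) : ℕ :=
  Nat.card (Quot (fun (X Y : {F : Finset (Finset (Fin w)) // IsClosedSurface F ∧ F.card = f}) =>
    SurfIso X.1 Y.1))

open Finset in
lemma exists_cycle_of_even {V : Type} [Finite V] (G : SimpleGraph V) {x y : V} (h : G.Adj x y)
    (he : ∀ x, Even (G.neighborSet x).ncard) : ∃ (u : V) (c : G.Walk u u), c.IsCycle := by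
  classical
  by_contra hc
  push Not at hc
  have hac : G.IsAcyclic := fun u c => hc u c
  let C := G.connectedComponentMk x
  have hT := hac.isTree_connectedComponent C
  have hx : x ∈ C := rfl
  have hy : y ∈ C := (SimpleGraph.ConnectedComponent.sound h.symm.reachable)
  have : Fintype C := Fintype.ofFinite _
  have : Nontrivial C := ⟨⟨⟨x, hx⟩, ⟨y, hy⟩, fun hh => h.ne (congrArg Subtype.val hh)⟩⟩
  obtain ⟨⟨z, hz⟩, hd⟩ := hT.exists_vert_degree_one_of_nontrivial
  rw [SimpleGraph.degree_eq_one_iff_existsUnique_adj] at hd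
  obtain ⟨⟨u, hu⟩, hzu, huniq⟩ := hd
  rw [C.toSimpleGraph_adj] at hzu
  have : G.neighborSet z = {u} := by
    ext q
    simp only [SimpleGraph.mem_neighborSet, Set.mem_singleton_iff]
    constructor
    · intro hq
      have hqC : q ∈ C := by
        have : G.connectedComponentMk q = G.connectedComponentMk z :=
          SimpleGraph.ConnectedComponent.sound hq.symm.reachable
        exact this.trans hz
      have := huniq ⟨q, hqC⟩ ((C.toSimpleGraph_adj hz hqC).2 hq)
      exact congrArg Subtype.val this
    · rintro rfl; exact hzu
  have h2 := he z
  rw [this, Set.ncard_singleton] at h2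
  exact absurd h2 (by decide)

/-- link graph -/
def linkGraph {w : ℕ} (F : Finset (Finset (Fin w))) (hF : ∀ t ∈ F, t.card = 3) (a : Fin w) :
    SimpleGraph (Fin w) where
  Adj x y := ({a, x, y} : Finset (Fin w)) ∈ F
  symm := ⟨fun x y h => by
    have : ({a, y, x} : Finset (Fin w)) = {a, x, y} := by ext; simp; tauto
    rw [this]; exact h⟩
  loopless := ⟨fun x h => by
    have h1 := hF _ h
    have h2 : ({a, x, x} : Finset (Fin w)).card ≤ 2 := by
      simpa using Finset.card_le_two (a := a) (b := x)
    omega⟩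

def subStar {w : ℕ} (F : Finset (Finset (Fin w))) (a : Fin w) (H : Fin w → Fin w → Prop) :
    Set (Finset (Fin w)) := {t | t ∈ F ∧ ∃ x y, H x y ∧ t = {a, x, y}}

lemma mem_subStar {w : ℕ} {F : Finset (Finset (Fin w))} {a : Fin w} {H : Fin w → Fin w → Prop}
    {t : Finset (Fin w)} : t ∈ subStar F a H ↔ t ∈ F ∧ ∃ x y, H x y ∧ t = {a, x, y} := Iff.rfl

lemma three_ne {w : ℕ} {a x y : Fin w} (h : ({a, x, y} : Finset (Fin w)).card = 3) :
    a ≠ x ∧ a ≠ y ∧ x ≠ y := by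
  refine ⟨?_, ?_, ?_⟩
  · rintro rfl
    have := Finset.card_le_two (a := a) (b := y)
    simp at h; omega
  · rintro rfl
    have := Finset.card_le_two (a := x) (b := a)
    rw [Finset.insert_eq_of_mem (by simp)] at h; omega
  · rintro rfl
    have := Finset.card_le_two (a := a) (b := x)
    simp at h; omega

lemma star_count {w : ℕ} (F : Finset (Finset (Fin w))) (hF : ∀ t ∈ F, t.card = 3) (a : Fin w)
    (H : SimpleGraph (Fin w)) (hH : H ≤ linkGraph F hF a) (x : Fin w) (hx : x ≠ a) :
    (H.neighborSet x).ncard = {t | t ∈ subStar F a H.Adj ∧ x ∈ t}.ncard := by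
  have : {t | t ∈ subStar F a H.Adj ∧ x ∈ t} =
      (fun y => ({a, x, y} : Finset (Fin w))) '' H.neighborSet x := by
    ext t
    simp only [subStar, Set.mem_ofPred_eq, Set.mem_image, SimpleGraph.mem_neighborSet]
    constructor
    · rintro ⟨⟨htF, p, q, hpq, rfl⟩, hxt⟩
      simp only [Finset.mem_insert, Finset.mem_singleton, hx, false_or] at hxt
      rcases hxt with rfl | rfl
      · exact ⟨q, hpq, rfl⟩
      · exact ⟨p, hpq.symm, by ext; simp; tauto⟩
    · rintro ⟨y, hy, rfl⟩
      exact ⟨⟨hH hy, x, y, hy, rfl⟩, by simp⟩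
  rw [this, Set.InjOn.ncard_image]
  intro y hy z hz hyz
  simp only [SimpleGraph.mem_neighborSet] at hy hz hyz
  have h1 := three_ne (hF _ (hH hy))
  have : y ∈ ({a, x, z} : Finset (Fin w)) := by rw [← hyz]; simp
  simp only [Finset.mem_insert, Finset.mem_singleton] at this
  rcases this with h | h | h
  · exact absurd h.symm h1.2.1
  · exact absurd h.symm h1.2.2
  · exact h

lemma mem_face {w : ℕ} {F : Finset (Finset (Fin w))} (hF : ∀ t ∈ F, t.card = 3) {a : Fin w}
    {t : Finset (Fin w)} (ht : t ∈ F) (ha : a ∈ t) : ∃ x y, t = {a, x, y} := by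
  have h3 := hF t ht
  have : (t.erase a).card = 2 := by rw [Finset.card_erase_of_mem ha, h3]
  obtain ⟨x, y, _, hxy⟩ := Finset.card_eq_two.1 this
  exact ⟨x, y, by rw [← hxy, Finset.insert_erase ha]⟩

lemma mem_face2 {w : ℕ} {F : Finset (Finset (Fin w))} (hF : ∀ t ∈ F, t.card = 3) {a x : Fin w}
    {t : Finset (Fin w)} (ht : t ∈ F) (ha : a ∈ t) (hx : x ∈ t) (hxa : x ≠ a) :
    ∃ y, t = {a, x, y} := by
  obtain ⟨p, q, rfl⟩ := mem_face hF ht ha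
  simp only [Finset.mem_insert, Finset.mem_singleton, hxa, false_or] at hx
  rcases hx with rfl | rfl
  · exact ⟨q, rfl⟩
  · exact ⟨p, by ext; simp; tauto⟩

/-- no proper even part of the star -/
def Irred {w : ℕ} (F : Finset (Finset (Fin w))) : Prop :=
  ∀ (a : Fin w) (S : Finset (Finset (Fin w))), S ⊆ F → (∀ t ∈ S, a ∈ t) → S.Nonempty →
    (∀ x, x ≠ a → Even (S.filter (fun t => x ∈ t)).card) → ∀ t ∈ F, a ∈ t → t ∈ S

lemma star_full {w : ℕ} (F : Finset (Finset (Fin w))) (hF : ∀ t ∈ F, t.card = 3) (a : Fin w) :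
    subStar F a (linkGraph F hF a).Adj = {t | t ∈ F ∧ a ∈ t} := by
  ext t
  simp only [subStar, Set.mem_ofPred_eq]
  constructor
  · rintro ⟨h, p, q, _, rfl⟩
    exact ⟨h, by simp⟩
  · rintro ⟨h, ha⟩
    obtain ⟨x, y, rfl⟩ := mem_face hF h ha
    exact ⟨h, x, y, h, rfl⟩

lemma link_cycle {w : ℕ} (F : Finset (Finset (Fin w))) (hF : IsTwoCycle F) (hirr : Irred F)
    (a : Fin w) (p q : Fin w) (hpq : (linkGraph F hF.1 a).Adj p q) :
    ∃ (u : Fin w) (c : (linkGraph F hF.1 a).Walk u u), c.IsCycle ∧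
      c.toSubgraph.spanningCoe = linkGraph F hF.1 a := by
  classical
  set G := linkGraph F hF.1 a with hG
  have hne : ∀ {x y}, G.Adj x y → a ≠ x ∧ a ≠ y ∧ x ≠ y := fun h => three_ne (hF.1 _ h)
  have heven : ∀ x, Even (G.neighborSet x).ncard := by
    intro x
    by_cases hx : x = a
    · have : G.neighborSet x = ∅ := by
        ext y
        simp only [SimpleGraph.mem_neighborSet, Set.mem_empty_iff_false, iff_false]
        intro h
        exact (hne h).1 hx.symm
      simp [this]
    · rw [star_count F hF.1 a G le_rfl x hx, star_full]
      have h1 := hF.2 {a, x} (Finset.card_pair (Ne.symm hx))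
      rw [← Set.ncard_coe_finset] at h1
      convert h1 using 2
      ext t
      simp [Finset.insert_subset_iff, and_assoc]
  obtain ⟨u, c, hc⟩ := exists_cycle_of_even G hpq heven
  refine ⟨u, c, hc, ?_⟩
  set H := c.toSubgraph.spanningCoe with hH
  have hHG : H ≤ G := c.toSubgraph.spanningCoe_le
  have hcyc : H.IsCycles := hc.isCycles_spanningCoe_toSubgraph
  have hS := hirr a (F.filter (fun t => t ∈ subStar F a H.Adj)) (Finset.filter_subset _ _)
    (by
      intro t ht
      simp only [mem_subStar, Finset.mem_filter] at ht
      obtain ⟨_, _, x, y, _, rfl⟩ := ht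
      simp)
    (by
      have : H.Adj u c.snd := by
        have := c.toSubgraph_adj_snd hc.not_nil
        simpa [hH] using this
      refine ⟨{a, u, c.snd}, ?_⟩
      simp only [mem_subStar, Finset.mem_filter]
      exact ⟨hHG this, hHG this, _, _, this, rfl⟩)
    (by
      intro x hx
      have h1 := star_count F hF.1 a H hHG x hx
      have h2 : (Finset.filter (fun t => x ∈ t)
          (F.filter (fun t => t ∈ subStar F a H.Adj))).card = (H.neighborSet x).ncard := by
        rw [h1, ← Set.ncard_coe_finset]
        congr 1
        ext t
        simp only [Finset.coe_filter, Finset.mem_filter, Set.mem_ofPred_eq, mem_subStar]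
        tauto
      rw [h2]
      rcases (H.neighborSet x).eq_empty_or_nonempty with h | h
      · simp [h]
      · rw [hcyc h]; decide)
  apply le_antisymm hHG
  intro x y hxy
  have h1 := hS {a, x, y} hxy (by simp)
  simp only [mem_subStar, Finset.mem_filter] at h1
  obtain ⟨_, _, x', y', hxy', heq⟩ := h1
  have n1 := hne hxy
  have n2 := hne (hHG hxy')
  have hx : x ∈ ({a, x', y'} : Finset (Fin w)) := by rw [← heq]; simp
  have hy : y ∈ ({a, x', y'} : Finset (Fin w)) := by rw [← heq]; simp
  simp only [Finset.mem_insert, Finset.mem_singleton, n1.1.symm, n1.2.1.symm, false_or] at hx hy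
  rcases hx with rfl | rfl <;> rcases hy with rfl | rfl
  · exact absurd rfl n1.2.2
  · exact hxy'
  · exact hxy'.symm
  · exact absurd rfl n1.2.2

lemma edge_two {w : ℕ} (F : Finset (Finset (Fin w))) (hF : IsTwoCycle F) (hirr : Irred F)
    (e : Finset (Fin w)) (he : e.card = 2) (hex : ∃ t ∈ F, e ⊆ t) :
    (F.filter (fun t => e ⊆ t)).card = 2 := by
  classical
  obtain ⟨a, x, hax, rfl⟩ := Finset.card_eq_two.1 he
  obtain ⟨t, ht, hsub⟩ := hex
  obtain ⟨y, rfl⟩ := mem_face2 hF.1 ht (hsub (by simp : a ∈ _)) (hsub (by simp : x ∈ _)) hax.symm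
  obtain ⟨u, c, hc, hcG⟩ := link_cycle F hF hirr a x y ht
  have hcyc := hc.isCycles_spanningCoe_toSubgraph
  rw [hcG] at hcyc
  have h2 := hcyc (v := x) ⟨y, ht⟩
  rw [star_count F hF.1 a _ le_rfl x hax.symm, star_full] at h2
  rw [← h2, ← Set.ncard_coe_finset]
  congr 1
  ext t
  simp [Finset.insert_subset_iff, and_assoc]

lemma link_conn {w : ℕ} (F : Finset (Finset (Fin w))) (hF : IsTwoCycle F) (hirr : Irred F)
    (v a b : Fin w)
    (ha : ∃ t ∈ F, v ∈ t ∧ a ∈ t ∧ a ≠ v) (hb : ∃ t ∈ F, v ∈ t ∧ b ∈ t ∧ b ≠ v) :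
    Relation.ReflTransGen (fun x y => ({v, x, y} : Finset (Fin w)) ∈ F) a b := by
  classical
  obtain ⟨t, ht, hvt, hat, hav⟩ := ha
  obtain ⟨s, hs, hvs, hbs, hbv⟩ := hb
  obtain ⟨y, rfl⟩ := mem_face2 hF.1 ht hvt hat hav
  obtain ⟨z, rfl⟩ := mem_face2 hF.1 hs hvs hbs hbv
  obtain ⟨u, c, hc, hcG⟩ := link_cycle F hF hirr v a y ht
  have key : ∀ {p q}, (linkGraph F hF.1 v).Adj p q → p ∈ c.support := by
    intro p q h
    rw [← hcG] at h
    exact c.mem_verts_toSubgraph.1 (c.toSubgraph.edge_vert h)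
  have h1 : a ∈ c.support := key (q := y) ht
  have h2 : b ∈ c.support := key (q := z) hs
  have : (linkGraph F hF.1 v).Reachable a b :=
    ((c.takeUntil a h1).reachable.symm).trans (c.takeUntil b h2).reachable
  exact (SimpleGraph.reachable_iff_reflTransGen _ _).1 this

def Cov (Z : Finset (Finset ℕ)) {w : ℕ} (F : Finset (Finset (Fin w))) (φ : Fin w → ℕ) : Prop :=
  IsTwoCycle F ∧ F.image (fun t => t.image φ) = Z ∧ F.card = Z.card ∧ ∀ x, ∃ t ∈ F, x ∈ t

lemma cov_bound {Z : Finset (Finset ℕ)} {w : ℕ} {F : Finset (Finset (Fin w))} {φ : Fin w → ℕ}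
    (h : Cov Z F φ) : w ≤ 3 * Z.card := by
  have h1 : (Finset.univ : Finset (Fin w)) ⊆ F.biUnion id := by
    intro x _
    obtain ⟨t, ht, hx⟩ := h.2.2.2 x
    exact Finset.mem_biUnion.2 ⟨t, ht, hx⟩
  have h2 := Finset.card_le_card h1
  have h3 : (F.biUnion id).card ≤ F.card * 3 :=
    Finset.card_biUnion_le_card_mul _ _ _ (fun t ht => (h.1.1 t ht).le)
  rw [Finset.card_univ, Fintype.card_fin] at h2
  rw [h.2.2.1] at h3
  omega

def splitMap {w : ℕ} (a : Fin w) (x : Fin w) : Fin (w + 1) :=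
  if x = a then Fin.last w else x.castSucc

def splitFace {w : ℕ} (a : Fin w) (S : Finset (Finset (Fin w))) (t : Finset (Fin w)) :
    Finset (Fin (w + 1)) :=
  if t ∈ S then t.image (splitMap a) else t.image Fin.castSucc

lemma splitMap_inj {w : ℕ} (a : Fin w) : Function.Injective (splitMap a) := by
  intro x y h
  unfold splitMap at h
  split_ifs at h with h1 h2 h2
  · rw [h1, h2]
  · exact absurd h (Fin.castSucc_ne_last y).symm
  · exact absurd h (Fin.castSucc_ne_last x)
  · exact Fin.castSucc_injective _ h

lemma castSucc_mem_split {w : ℕ} (a : Fin w) (S : Finset (Finset (Fin w))) (t : Finset (Fin w))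
    (x : Fin w) : x.castSucc ∈ splitFace a S t ↔ x ∈ t ∧ (t ∈ S → x ≠ a) := by
  unfold splitFace
  split_ifs with h
  · simp only [Finset.mem_image, splitMap, h, true_imp_iff]
    constructor
    · rintro ⟨y, hy, hyx⟩
      split_ifs at hyx with h1
      · exact absurd hyx (Fin.castSucc_ne_last x).symm
      · have := Fin.castSucc_injective _ hyx
        subst this
        exact ⟨hy, h1⟩
    · rintro ⟨h1, h2⟩
      exact ⟨x, h1, by simp [h2]⟩
  · simp [h]

lemma last_mem_split {w : ℕ} (a : Fin w) (S : Finset (Finset (Fin w))) (t : Finset (Fin w)) :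
    Fin.last w ∈ splitFace a S t ↔ t ∈ S ∧ a ∈ t := by
  unfold splitFace
  split_ifs with h
  · simp only [Finset.mem_image, splitMap, h, true_and]
    constructor
    · rintro ⟨y, hy, hyx⟩
      split_ifs at hyx with h1
      · exact h1 ▸ hy
      · exact absurd hyx (Fin.castSucc_ne_last y)
    · intro h1
      exact ⟨a, h1, by simp⟩
  · simp only [h, false_and, iff_false, Finset.mem_image, not_exists, not_and]
    intro x _
    exact Fin.castSucc_ne_last x

lemma split_cov {Z : Finset (Finset ℕ)} {w : ℕ} {F : Finset (Finset (Fin w))} {φ : Fin w → ℕ}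
    (h : Cov Z F φ) (hn : ¬ Irred F) :
    ∃ (F' : Finset (Finset (Fin (w + 1)))) (φ' : Fin (w + 1) → ℕ), Cov Z F' φ' := by
  classical
  unfold Irred at hn
  push Not at hn
  obtain ⟨a, S, hSF, hSa, ⟨s0, hs0⟩, hSe, t0, ht0, hat0, ht0S⟩ := hn
  obtain ⟨h2c, him, hcard, hcov⟩ := h
  have hlastφ : ∀ t ∈ F, (splitFace a S t).image (Fin.snoc (α := fun _ => ℕ) φ (φ a)) = t.image φ := by
    intro t ht
    ext n
    simp only [Finset.mem_image]
    constructor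
    · rintro ⟨x, hx, rfl⟩
      induction x using Fin.lastCases with
      | last =>
        rw [last_mem_split] at hx
        exact ⟨a, hx.2, by simp⟩
      | cast x =>
        rw [castSucc_mem_split] at hx
        exact ⟨x, hx.1, by simp⟩
    · rintro ⟨x, hx, rfl⟩
      by_cases hc : t ∈ S ∧ x = a
      · refine ⟨Fin.last w, (last_mem_split _ _ _).2 ⟨hc.1, hc.2 ▸ hx⟩, by simp [hc.2]⟩
      · refine ⟨x.castSucc, (castSucc_mem_split _ _ _ _).2 ⟨hx, fun h1 h2 => hc ⟨h1, h2⟩⟩, by simp⟩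
  have himg : (F.image (splitFace a S)).image
      (fun t => t.image (Fin.snoc (α := fun _ => ℕ) φ (φ a))) = Z := by
    rw [Finset.image_image, ← him]
    exact Finset.image_congr (fun t ht => hlastφ t ht)
  have hcard' : (F.image (splitFace a S)).card = F.card := by
    apply le_antisymm Finset.card_image_le
    rw [hcard, ← himg]
    exact Finset.card_image_le
  have hinj : Set.InjOn (splitFace a S) F := Finset.card_image_iff.1 hcard'
  have hcount : ∀ e, ((F.image (splitFace a S)).filter (fun t => e ⊆ t)).card =
      (F.filter (fun t => e ⊆ splitFace a S t)).card := by
    intro e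
    rw [Finset.filter_image, Finset.card_image_of_injOn]
    exact hinj.mono (by intro t ht; exact (Finset.mem_filter.1 ht).1)
  refine ⟨F.image (splitFace a S), Fin.snoc (α := fun _ => ℕ) φ (φ a), ⟨?_, ?_⟩, himg,
    hcard'.trans hcard, ?_⟩
  · intro t' ht'
    obtain ⟨t, ht, rfl⟩ := Finset.mem_image.1 ht'
    unfold splitFace
    split_ifs
    · rw [Finset.card_image_of_injective _ (splitMap_inj a), h2c.1 t ht]
    · rw [Finset.card_image_of_injective _ (Fin.castSucc_injective _), h2c.1 t ht]
  · have hlast : ∀ y : Fin w, Even (F.filter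
        (fun t => {Fin.last w, y.castSucc} ⊆ splitFace a S t)).card := by
      intro y
      simp only [Finset.insert_subset_iff, Finset.singleton_subset_iff, castSucc_mem_split,
        last_mem_split]
      by_cases hy : y = a
      · rw [Finset.filter_false_of_mem]
        · simp
        · rintro t _ ⟨⟨h1, _⟩, _, h2⟩
          exact h2 h1 hy
      · convert hSe y hy using 2
        ext t
        simp only [Finset.mem_filter]
        constructor
        · rintro ⟨_, ⟨h1, _⟩, h2, _⟩
          exact ⟨h1, h2⟩
        · rintro ⟨h1, h2⟩
          exact ⟨hSF h1, ⟨h1, hSa _ h1⟩, h2, fun _ => hy⟩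
    have hca : ∀ y : Fin w, y ≠ a → Even (F.filter
        (fun t => {a.castSucc, y.castSucc} ⊆ splitFace a S t)).card := by
      intro y hy
      simp only [Finset.insert_subset_iff, Finset.singleton_subset_iff, castSucc_mem_split]
      have h1 := h2c.2 {a, y} (Finset.card_pair hy.symm)
      have h2 := hSe y hy
      have h3 : (F.filter (fun t => {a, y} ⊆ t)).card =
          (F.filter (fun t => (a ∈ t ∧ (t ∈ S → a ≠ a)) ∧ y ∈ t ∧ (t ∈ S → y ≠ a))).card +
            (S.filter (fun t => y ∈ t)).card := by
        rw [← Finset.card_union_of_disjoint]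
        · congr 1
          ext t
          simp only [Finset.mem_filter, Finset.mem_union, Finset.insert_subset_iff,
            Finset.singleton_subset_iff]
          have := hSa t
          have := @hSF t
          tauto
        · rw [Finset.disjoint_left]
          intro t h1 h2
          simp only [Finset.mem_filter] at h1 h2
          exact h1.2.1.2 h2.1 rfl
      rw [h3, Nat.even_add] at h1
      exact h1.2 h2
    intro e he
    rw [hcount]
    obtain ⟨p, q, hpq, rfl⟩ := Finset.card_eq_two.1 he
    induction p using Fin.lastCases with
    | last =>
      induction q using Fin.lastCases with
      | last => exact absurd rfl hpq
      | cast y => exact hlast y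
    | cast x =>
      induction q using Fin.lastCases with
      | last => rw [Finset.pair_comm]; exact hlast x
      | cast y =>
        have hxy : x ≠ y := fun h => hpq (by rw [h])
        by_cases hx : x = a
        · subst hx
          exact hca y hxy.symm
        by_cases hy : y = a
        · subst hy
          rw [Finset.pair_comm]
          exact hca x hxy
        have hE : F.filter (fun t => {x.castSucc, y.castSucc} ⊆ splitFace a S t) =
            F.filter (fun t => {x, y} ⊆ t) := by
          apply Finset.filter_congr
          intro t _
          simp [Finset.insert_subset_iff, castSucc_mem_split, hx, hy]
        rw [hE]
        exact h2c.2 {x, y} (Finset.card_pair hxy)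
  · intro x
    induction x using Fin.lastCases with
    | last =>
      exact ⟨_, Finset.mem_image_of_mem _ (hSF hs0), (last_mem_split _ _ _).2 ⟨hs0, hSa _ hs0⟩⟩
    | cast x =>
      by_cases hx : x = a
      · subst hx
        exact ⟨_, Finset.mem_image_of_mem _ ht0,
          (castSucc_mem_split _ _ _ _).2 ⟨hat0, fun h => absurd h ht0S⟩⟩
      · obtain ⟨t, ht, hxt⟩ := hcov x
        exact ⟨_, Finset.mem_image_of_mem _ ht,
          (castSucc_mem_split _ _ _ _).2 ⟨hxt, fun _ => hx⟩⟩

lemma cov_conn {Z : Finset (Finset ℕ)} (hZ : IsMinCycle Z) {w : ℕ} {F : Finset (Finset (Fin w))}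
    {φ : Fin w → ℕ} (h : Cov Z F φ) :
    ∀ t ∈ F, ∀ t' ∈ F,
      Relation.ReflTransGen (fun s s' => s ∈ F ∧ s' ∈ F ∧ (s ∩ s').card = 2) t t' := by
  classical
  intro t0 ht0
  obtain ⟨h2c, him, hcard, hcov⟩ := h
  set R := Relation.ReflTransGen (fun s s' => s ∈ F ∧ s' ∈ F ∧ (s ∩ s').card = 2) with hR
  set C := F.filter (fun t => R t0 t) with hC
  have hinjF : Set.InjOn (fun t : Finset (Fin w) => t.image φ) F := by
    apply Finset.card_image_iff.1
    rw [him, hcard]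
  have hCF : C ⊆ F := Finset.filter_subset _ _
  have hmemZ : ∀ t ∈ F, t.image φ ∈ Z := fun t ht => him ▸ Finset.mem_image_of_mem _ ht
  have hinjt : ∀ t ∈ F, Set.InjOn φ t := by
    intro t ht
    apply Finset.card_image_iff.1
    rw [h2c.1 t ht, hZ.1.1 _ (hmemZ t ht)]
  have hCe : ∀ e : Finset (Fin w), e.card = 2 → Even (C.filter (fun t => e ⊆ t)).card := by
    intro e he
    rcases (C.filter (fun t => e ⊆ t)).eq_empty_or_nonempty with h0 | ⟨s, hs⟩
    · simp [h0]
    · suffices hE : C.filter (fun t => e ⊆ t) = F.filter (fun t => e ⊆ t) by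
        rw [hE]; exact h2c.2 e he
      ext t
      simp only [hC, Finset.mem_filter] at hs ⊢
      constructor
      · rintro ⟨⟨h1, _⟩, h2⟩
        exact ⟨h1, h2⟩
      · rintro ⟨h1, h2⟩
        refine ⟨⟨h1, ?_⟩, h2⟩
        by_cases hst : s = t
        · exact hst ▸ hs.1.2
        · refine hs.1.2.tail ⟨hs.1.1, h1, ?_⟩
          have k1 : e.card ≤ (s ∩ t).card :=
            Finset.card_le_card (Finset.subset_inter hs.2 h2)
          have k2 : (s ∩ t).card < 3 := by
            by_contra hge
            have e1 : s ∩ t = s := Finset.eq_of_subset_of_card_le Finset.inter_subset_left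
              (by rw [h2c.1 s hs.1.1]; omega)
            have e2 : s ∩ t = t := Finset.eq_of_subset_of_card_le Finset.inter_subset_right
              (by rw [h2c.1 t h1]; omega)
            exact hst (e1.symm.trans e2)
          omega
  have hcyc : IsTwoCycle (C.image (fun t => t.image φ)) := by
    refine ⟨?_, ?_⟩
    · intro s hs
      obtain ⟨t, ht, rfl⟩ := Finset.mem_image.1 hs
      exact hZ.1.1 _ (hmemZ t (hCF ht))
    · intro e he
      rw [Finset.filter_image, Finset.card_image_of_injOn
        (hinjF.mono (by intro t ht; exact hCF (Finset.mem_filter.1 ht).1))]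
      let E : Finset (Finset (Fin w)) :=
        Finset.univ.filter (fun e' => e'.card = 2 ∧ e'.image φ = e)
      have hmap : ∀ t ∈ C.filter (fun t => e ⊆ t.image φ), t.filter (fun x => φ x ∈ e) ∈ E := by
        intro t ht
        rw [Finset.mem_filter] at ht
        have h1 : (t.filter (fun x => φ x ∈ e)).image φ = e := by
          ext n
          simp only [Finset.mem_image, Finset.mem_filter]
          constructor
          · rintro ⟨x, ⟨_, hx⟩, rfl⟩
            exact hx
          · intro hn
            obtain ⟨x, hx, rfl⟩ := Finset.mem_image.1 (ht.2 hn)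
            exact ⟨x, ⟨hx, hn⟩, rfl⟩
        refine Finset.mem_filter.2 ⟨Finset.mem_univ _, ?_, h1⟩
        have h4 : ((t.filter (fun x => φ x ∈ e)).image φ).card =
            (t.filter (fun x => φ x ∈ e)).card := Finset.card_image_of_injOn
          ((hinjt t (hCF ht.1)).mono (by intro x hx; exact (Finset.mem_filter.1 hx).1))
        rw [h1, he] at h4
        exact h4.symm
      rw [Finset.card_eq_sum_card_fiberwise hmap]
      apply Finset.even_sum
      intro e' he'
      obtain ⟨_, he2, hee⟩ := Finset.mem_filter.1 he'
      suffices hE : (C.filter (fun t => e ⊆ t.image φ)).filter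
          (fun t => t.filter (fun x => φ x ∈ e) = e') = C.filter (fun t => e' ⊆ t) by
        rw [hE]; exact hCe e' he2
      ext t
      simp only [Finset.mem_filter]
      constructor
      · rintro ⟨⟨h1, _⟩, rfl⟩
        exact ⟨h1, Finset.filter_subset _ _⟩
      · rintro ⟨h1, h2⟩
        have h3 : e ⊆ t.image φ := hee ▸ Finset.image_subset_image h2
        refine ⟨⟨h1, h3⟩, ?_⟩
        symm
        apply Finset.eq_of_subset_of_card_le
        · intro x hx
          exact Finset.mem_filter.2 ⟨h2 hx, hee ▸ Finset.mem_image_of_mem _ hx⟩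
        · have := hmap t (Finset.mem_filter.2 ⟨h1, h3⟩)
          rw [(Finset.mem_filter.1 this).2.1, he2]
  have hsub : C.image (fun t => t.image φ) ⊆ Z := by
    rw [← him]; exact Finset.image_subset_image hCF
  have hne : (C.image (fun t => t.image φ)).Nonempty :=
    ⟨_, Finset.mem_image_of_mem _ (Finset.mem_filter.2 ⟨ht0, Relation.ReflTransGen.refl⟩ : t0 ∈ C)⟩
  have heq : C.image (fun t => t.image φ) = Z := by
    by_contra hne'
    exact hZ.2.2 _ (Finset.ssubset_iff_subset_ne.2 ⟨hsub, hne'⟩) hne hcyc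
  intro t' ht'
  have h1 := hmemZ t' ht'
  rw [← heq] at h1
  obtain ⟨s, hs, hst⟩ := Finset.mem_image.1 h1
  have := hinjF (hCF hs) ht' hst
  subst this
  exact (Finset.mem_filter.1 hs).2

lemma exists_surface (f v : ℕ) (Z : Finset (Finset ℕ)) (hZ : IsMinCycle Z) (hf : Z.card = f)
    (hv : Z.biUnion id = Finset.range v) :
    ∃ w ∈ Finset.Icc v (3 * f), ∃ (F : Finset (Finset (Fin w))) (ψ : Fin w → Fin v),
      (IsClosedSurface F ∧ F.card = f) ∧
        F.image (fun t => t.image (fun x => (ψ x : ℕ))) = Z := by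
  classical
  have hsubv : ∀ t ∈ Z, t ⊆ Finset.range v := by
    intro t ht
    rw [← hv]
    exact Finset.subset_biUnion_of_mem id ht
  -- initial cover
  have h0 : ∃ (F : Finset (Finset (Fin v))) (φ : Fin v → ℕ), Cov Z F φ := by
    have hval : Function.Injective (Fin.val : Fin v → ℕ) := Fin.val_injective
    have hlift : ∀ t ⊆ Finset.range v, ∃ s : Finset (Fin v), s.image Fin.val = t := by
      intro t ht
      refine ⟨Finset.univ.filter (fun x => (x : ℕ) ∈ t), ?_⟩
      ext n
      simp only [Finset.mem_image, Finset.mem_filter, Finset.mem_univ, true_and]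
      constructor
      · rintro ⟨x, hx, rfl⟩
        exact hx
      · intro hn
        exact ⟨⟨n, Finset.mem_range.1 (ht hn)⟩, hn, rfl⟩
    let F : Finset (Finset (Fin v)) := Finset.univ.filter (fun t => t.image Fin.val ∈ Z)
    have hF : ∀ t, t ∈ F ↔ t.image Fin.val ∈ Z := by intro t; simp [F]
    have him : F.image (fun t => t.image Fin.val) = Z := by
      ext t
      simp only [Finset.mem_image]
      constructor
      · rintro ⟨s, hs, rfl⟩
        exact (hF s).1 hs
      · intro ht
        obtain ⟨s, rfl⟩ := hlift t (hsubv t ht)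
        exact ⟨s, (hF s).2 ht, rfl⟩
    have hinj : Function.Injective (fun t : Finset (Fin v) => t.image Fin.val) :=
      Finset.image_injective hval
    refine ⟨F, Fin.val, ⟨?_, ?_⟩, him, ?_, ?_⟩
    · intro t ht
      rw [← Finset.card_image_of_injective t hval]
      exact hZ.1.1 _ ((hF t).1 ht)
    · intro e he
      have h1 := hZ.1.2 (e.image Fin.val) (by rw [Finset.card_image_of_injective _ hval, he])
      rw [← him, Finset.filter_image, Finset.card_image_of_injective _ hinj] at h1
      convert h1 using 4
      exact (Finset.image_subset_image_iff hval).symm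
    · rw [← him, Finset.card_image_of_injective _ hinj]
    · intro x
      have hx : (x : ℕ) ∈ Z.biUnion id := by rw [hv]; exact Finset.mem_range.2 x.2
      obtain ⟨t, ht, hxt⟩ := Finset.mem_biUnion.1 hx
      obtain ⟨s, rfl⟩ := hlift t (hsubv t ht)
      refine ⟨s, (hF s).2 ht, ?_⟩
      obtain ⟨y, hy, hyx⟩ := Finset.mem_image.1 hxt
      exact hval hyx ▸ hy
  let P : ℕ → Prop := fun w => ∃ (F : Finset (Finset (Fin w))) (φ : Fin w → ℕ), Cov Z F φ
  have hb : ∀ w, P w → w ≤ 3 * f := by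
    rintro w ⟨F, φ, h⟩
    exact hf ▸ cov_bound h
  set w := Nat.findGreatest P (3 * f) with hw
  have hPw : P w := Nat.findGreatest_spec (hb v h0) h0
  have hvw : v ≤ w := Nat.le_findGreatest (hb v h0) h0
  have hmax : ¬ P (w + 1) := by
    intro h
    have := Nat.le_findGreatest (hb _ h) h
    omega
  refine ⟨w, Finset.mem_Icc.2 ⟨hvw, hb w hPw⟩, ?_⟩
  clear_value w
  obtain ⟨F, φ, h⟩ := hPw
  have hirr : Irred F := by
    by_contra hn
    exact hmax (split_cov h hn)
  have hφ : ∀ x, φ x < v := by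
    intro x
    obtain ⟨t, ht, hx⟩ := h.2.2.2 x
    apply Finset.mem_range.1
    apply hsubv (t.image φ)
    · rw [← h.2.1]; exact Finset.mem_image_of_mem _ ht
    · exact Finset.mem_image_of_mem _ hx
  refine ⟨F, fun x => ⟨φ x, hφ x⟩, ⟨⟨?_, h.1.1, edge_two F h.1 hirr, h.2.2.2,
    link_conn F h.1 hirr, cov_conn hZ h⟩, h.2.2.1.trans hf⟩, h.2.1⟩
  rw [← Finset.card_pos, h.2.2.1]
  exact hZ.2.1.card_pos

lemma iso_transfer {v w : ℕ} {F F' : Finset (Finset (Fin w))} (h : SurfIso F F')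
    (Z : Finset (Finset ℕ)) :
    (∃ ψ : Fin w → Fin v, F.image (fun t => t.image (fun x => (ψ x : ℕ))) = Z) ↔
      (∃ ψ : Fin w → Fin v, F'.image (fun t => t.image (fun x => (ψ x : ℕ))) = Z) := by
  obtain ⟨σ, rfl⟩ := h
  constructor
  · rintro ⟨ψ, rfl⟩
    refine ⟨ψ ∘ σ.symm, ?_⟩
    rw [Finset.image_image]
    apply Finset.image_congr
    intro t _
    simp [Finset.image_image, Function.comp_def]
  · rintro ⟨ψ, rfl⟩
    refine ⟨ψ ∘ σ, ?_⟩
    rw [Finset.image_image]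
    apply Finset.image_congr
    intro t _
    simp [Finset.image_image, Function.comp_def]

abbrev SurfQ (f w : ℕ) : Type :=
  Quot (fun (X Y : {F : Finset (Finset (Fin w)) // IsClosedSurface F ∧ F.card = f}) =>
    SurfIso X.1 Y.1)

/--
**Lemma (cycle counts from surface counts).**
For all positive integers `f` and `v`,
`Z(f,v) ≤ Σ_{w=v}^{3f} |T(f,w)| · v^w`. -/
theorem Zcount_le_sum_Tcount (f v : ℕ) (hf : 0 < f) (hv : 0 < v) :
    Zcount f v ≤ ∑ w ∈ Finset.Icc v (3 * f), Tcount f w * v ^ w := by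

  classical
  let D : Type := Σ w : Finset.Icc v (3 * f), SurfQ f w × (Fin w → Fin v)
  let G : D → Finset (Finset ℕ) := fun d =>
    (Quot.out d.2.1).1.image (fun t => t.image (fun x => (d.2.2 x : ℕ)))
  have hfin : ∀ w : Finset.Icc v (3 * f), Finite (SurfQ f w × (Fin w → Fin v)) := by
    intro w
    have : Finite (SurfQ f w) := Quot.finite _
    infer_instance
  have hex : ∀ Z : {Z : Finset (Finset ℕ) //
      IsMinCycle Z ∧ Z.card = f ∧ Z.biUnion id = Finset.range v}, ∃ d : D, G d = Z.1 := by
    rintro ⟨Z, hZ, hc, hr⟩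
    obtain ⟨w, hw, F, ψ, hF, hψ⟩ := exists_surface f v Z hZ hc hr
    let Q : SurfQ f w → Prop := Quot.lift
      (fun X => ∃ ψ : Fin w → Fin v, X.1.image (fun t => t.image (fun x => (ψ x : ℕ))) = Z)
      (fun X Y h => propext (iso_transfer h Z))
    let q : SurfQ f w := Quot.mk _ ⟨F, hF⟩
    have h1 : Q q := ⟨ψ, hψ⟩
    have h2 : Q (Quot.mk _ q.out) := by rw [Quot.out_eq]; exact h1
    obtain ⟨ψ', hψ'⟩ := h2
    exact ⟨⟨⟨w, hw⟩, q, ψ'⟩, hψ'⟩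
  choose g hg using hex
  have hginj : Function.Injective g := by
    intro Z Z' h
    apply Subtype.ext
    rw [← hg Z, ← hg Z', h]
  have hD : Nat.card D = ∑ w ∈ Finset.Icc v (3 * f), Tcount f w * v ^ w := by
    rw [Nat.card_sigma, ← Finset.sum_coe_sort (Finset.Icc v (3 * f)) (fun w => Tcount f w * v ^ w)]
    apply Finset.sum_congr rfl
    intro w _
    rw [Nat.card_prod, Nat.card_fun]
    simp [Tcount]
  rw [← hD]
  have : Finite D := inferInstanceAs (Finite (Σ w : Finset.Icc v (3 * f), _))
  exact Nat.card_le_card_of_injective g hginj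
end

section
/- For every δ > 0 there exists a constant C_δ such that for all positive integers f and w, |T(f,w)| ≤ C_δ^f · f^{f/2} · w^{−(1−δ)w}. -/
namespace TSurf

/-- Flags: face, corner, and one of the two other corners of the face. -/
abbrev Fl (f : ℕ) := Fin f × Fin 3 × Bool

def nx (k : Fin 3) (b : Bool) : Fin 3 := if b then k + 1 else k + 2

variable {f w : ℕ}

def cc (φ : Fin f → Fin 3 → Fin w) (x : Fl f) : Fin w := φ x.1 x.2.1
def oo (φ : Fin f → Fin 3 → Fin w) (x : Fl f) : Fin w := φ x.1 (nx x.2.1 x.2.2)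
def be (x : Fl f) : Fl f := (x.1, x.2.1, !x.2.2)
def sw (x : Fl f) : Fl f := (x.1, nx x.2.1 x.2.2, !x.2.2)
def MM (φ : Fin f → Fin 3 → Fin w) (x y : Fl f) : Prop :=
  x.1 ≠ y.1 ∧ cc φ x = cc φ y ∧ oo φ x = oo φ y

lemma nx_ex : ∀ k l : Fin 3, k ≠ l → ∃ b, nx k b = l := by decide
lemma nx_inj : ∀ (k : Fin 3) (b b' : Bool), nx k b = nx k b' → b = b' := by decide
lemma nx_ne : ∀ (k : Fin 3) (b : Bool), k ≠ nx k b := by decide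
lemma nx_sw : ∀ (k : Fin 3) (b : Bool), nx (nx k b) (!b) = k := by decide
lemma nx_third : ∀ (k : Fin 3) (b : Bool) (l : Fin 3), k ≠ l → nx k b ≠ l → nx k (!b) = l := by
  decide

lemma cc_sw (φ : Fin f → Fin 3 → Fin w) (x : Fl f) : cc φ (sw x) = oo φ x := rfl
lemma oo_sw (φ : Fin f → Fin 3 → Fin w) (x : Fl f) : oo φ (sw x) = cc φ x := by
  simp [oo, sw, cc, nx_sw]
lemma cc_be (φ : Fin f → Fin 3 → Fin w) (x : Fl f) : cc φ (be x) = cc φ x := rfl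
lemma be_be (x : Fl f) : be (be x) = x := by simp [be]
lemma be_ne (x : Fl f) : be x ≠ x := by
  intro h
  have := congrArg (fun z : Fl f => z.2.2) h
  simp [be] at this
lemma sw_sw (x : Fl f) : sw (sw x) = x := by simp [sw, nx_sw]

lemma MM.symm {φ : Fin f → Fin 3 → Fin w} {x y : Fl f} (h : MM φ x y) : MM φ y x :=
  ⟨h.1.symm, h.2.1.symm, h.2.2.symm⟩
lemma MM.sw {φ : Fin f → Fin 3 → Fin w} {x y : Fl f} (h : MM φ x y) : MM φ (sw x) (sw y) :=
  ⟨h.1, h.2.2, by rw [oo_sw, oo_sw]; exact h.2.1⟩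

structure Good (φ : Fin f → Fin 3 → Fin w) : Prop where
  inj : ∀ i, Function.Injective (φ i)
  mate : ∀ x : Fl f, ∃ y, MM φ x y
  uniq : ∀ x y y', MM φ x y → MM φ x y' → y = y'
  surj : ∀ v, ∃ x : Fl f, cc φ x = v
  link : ∀ x y, cc φ x = cc φ y → ∀ R : Fl f → Prop, R x → (∀ z, R z → R (be z)) →
    (∀ z z', R z → MM φ z z' → R z') → R y
  conn : ∀ R : Fin f → Prop, ∀ i j, R i → (∀ x y, R x.1 → MM φ x y → R y.1) → R j

lemma flag_ext {φ : Fin f → Fin 3 → Fin w} (hi : ∀ i, Function.Injective (φ i)) {x y : Fl f}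
    (h1 : x.1 = y.1) (h2 : cc φ x = cc φ y) (h3 : oo φ x = oo φ y) : x = y := by
  obtain ⟨i, k, b⟩ := x
  obtain ⟨j, l, d⟩ := y
  simp only at h1
  subst h1
  have h4 : k = l := hi i h2
  subst h4
  have h5 : b = d := nx_inj _ _ _ (hi i h3)
  subst h5
  rfl

def Fc (φ : Fin f → Fin 3 → Fin w) (i : Fin f) : Finset (Fin w) := Finset.univ.image (φ i)

lemma mem_Fc {φ : Fin f → Fin 3 → Fin w} {i : Fin f} {v : Fin w} :
    v ∈ Fc φ i ↔ ∃ k, φ i k = v := by simp [Fc]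

lemma ex_flag {φ : Fin f → Fin 3 → Fin w} {i : Fin f} {u v : Fin w}
    (hu : u ∈ Fc φ i) (hv : v ∈ Fc φ i) (h : u ≠ v) : ∃ x : Fl f, x.1 = i ∧ cc φ x = u ∧ oo φ x = v := by
  obtain ⟨k, rfl⟩ := mem_Fc.1 hu
  obtain ⟨l, rfl⟩ := mem_Fc.1 hv
  obtain ⟨b, hb⟩ := nx_ex k l (fun e => h (by rw [e]))
  exact ⟨(i, k, b), rfl, rfl, by simp [oo, hb]⟩

lemma cc_mem (φ : Fin f → Fin 3 → Fin w) (x : Fl f) : cc φ x ∈ Fc φ x.1 := mem_Fc.2 ⟨_, rfl⟩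
lemma oo_mem (φ : Fin f → Fin 3 → Fin w) (x : Fl f) : oo φ x ∈ Fc φ x.1 := mem_Fc.2 ⟨_, rfl⟩

lemma cc_ne_oo {φ : Fin f → Fin 3 → Fin w} (hi : ∀ i, Function.Injective (φ i)) (x : Fl f) :
    cc φ x ≠ oo φ x := fun h => nx_ne _ _ (hi _ h)

lemma good_of_surface {φ : Fin f → Fin 3 → Fin w} (hi : ∀ i, Function.Injective (φ i))
    (hF : Function.Injective (Fc φ)) (hS : IsClosedSurface (Finset.univ.image (Fc φ))) : Good φ := by
  obtain ⟨hne, h3, he, hv, hl, hc⟩ := hS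
  have memF : ∀ i, Fc φ i ∈ Finset.univ.image (Fc φ) := fun i => by simp
  have two : ∀ x : Fl f, ((Finset.univ.image (Fc φ)).filter
      (fun t => ({cc φ x, oo φ x} : Finset (Fin w)) ⊆ t)).card = 2 := by
    intro x
    apply he _ (Finset.card_pair (cc_ne_oo hi x))
    exact ⟨Fc φ x.1, memF _, by
      intro a ha
      simp only [Finset.mem_insert, Finset.mem_singleton] at ha
      rcases ha with rfl | rfl
      · exact cc_mem _ _
      · exact oo_mem _ _⟩
  have inE : ∀ x y : Fl f, cc φ x = cc φ y → oo φ x = oo φ y → Fc φ y.1 ∈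
      ((Finset.univ.image (Fc φ)).filter
      (fun t => ({cc φ x, oo φ x} : Finset (Fin w)) ⊆ t)) := by
    intro x y h1 h2
    rw [Finset.mem_filter]
    refine ⟨memF _, ?_⟩
    intro a ha
    simp only [Finset.mem_insert, Finset.mem_singleton] at ha
    rcases ha with rfl | rfl
    · rw [h1]; exact cc_mem _ _
    · rw [h2]; exact oo_mem _ _
  have close : ∀ (R : Fl f → Prop), (∀ z z', R z → MM φ z z' → R z') → ∀ x y, R x →
      cc φ x = cc φ y → oo φ x = oo φ y → R y := by
    intro R hR x y hx h1 h2
    by_cases h : x.1 = y.1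
    · rwa [← flag_ext hi h h1 h2]
    · exact hR x y hx ⟨h, h1, h2⟩
  refine ⟨hi, ?_, ?_, ?_, ?_, ?_⟩
  · intro x
    have h2 := two x
    obtain ⟨t, ht, htx⟩ := Finset.exists_mem_ne (by rw [h2]; norm_num) (Fc φ x.1)
    rw [Finset.mem_filter] at ht
    obtain ⟨ht, hsub⟩ := ht
    obtain ⟨j, -, rfl⟩ := Finset.mem_image.1 ht
    obtain ⟨y, rfl, h4, h5⟩ := ex_flag (hsub (Finset.mem_insert_self _ _))
      (hsub (Finset.mem_insert_of_mem (Finset.mem_singleton_self _))) (cc_ne_oo hi x)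
    exact ⟨y, fun h => htx (by rw [h]), h4.symm, h5.symm⟩
  · intro x y y' h h'
    have h2 := two x
    have e : y.1 = y'.1 := by
      by_contra hne'
      have : ({Fc φ x.1, Fc φ y.1, Fc φ y'.1} : Finset (Finset (Fin w))).card = 3 := by
        rw [Finset.card_eq_three]
        exact ⟨_, _, _, fun q => h.1 (hF q), fun q => h'.1 (hF q), fun q => hne' (hF q), rfl⟩
      have hle := Finset.card_le_card (s := ({Fc φ x.1, Fc φ y.1, Fc φ y'.1} : Finset (Finset (Fin w))))
        (t := ((Finset.univ.image (Fc φ)).filter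
        (fun t => ({cc φ x, oo φ x} : Finset (Fin w)) ⊆ t))) (by
          intro t ht
          simp only [Finset.mem_insert, Finset.mem_singleton] at ht
          rcases ht with rfl | rfl | rfl
          · exact inE x x rfl rfl
          · exact inE x y h.2.1 h.2.2
          · exact inE x y' h'.2.1 h'.2.2)
      omega
    exact flag_ext hi e (h.2.1.symm.trans h'.2.1) (h.2.2.symm.trans h'.2.2)
  · intro v
    obtain ⟨t, ht, hvt⟩ := hv v
    obtain ⟨j, -, rfl⟩ := Finset.mem_image.1 ht
    obtain ⟨k, rfl⟩ := mem_Fc.1 hvt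
    exact ⟨(j, k, true), rfl⟩
  · intro x y hxy R hx hb hR
    have path := hl (cc φ x) (oo φ x) (oo φ y)
      ⟨_, memF x.1, cc_mem _ _, oo_mem _ _, (cc_ne_oo hi x).symm⟩
      ⟨_, memF y.1, hxy ▸ cc_mem _ _, oo_mem _ _, hxy ▸ (cc_ne_oo hi y).symm⟩
    have key : ∀ b, Relation.ReflTransGen (fun a b => ({cc φ x, a, b} : Finset (Fin w)) ∈
        Finset.univ.image (Fc φ)) (oo φ x) b → ∀ y, cc φ x = cc φ y → oo φ y = b → R y := by
      intro b hp
      induction hp with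
      | refl => intro y h1 h2; exact close R hR x y hx h1 h2.symm
      | @tail a b _ hab ih =>
        intro y h1 h2
        have hcard := h3 _ hab
        obtain ⟨j, -, hj⟩ := Finset.mem_image.1 hab
        have ne1 : cc φ x ≠ a := by
          intro e
          rw [e, Finset.insert_eq_of_mem (by simp)] at hcard
          have := Finset.card_le_two (a := a) (b := b)
          omega
        have ne2 : cc φ x ≠ b := by
          intro e
          rw [e, Finset.insert_eq_of_mem (by simp)] at hcard
          have := Finset.card_le_two (a := a) (b := b)
          omega
        have ne3 : a ≠ b := by
          intro e
          rw [e, Finset.pair_eq_singleton] at hcard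
          have := Finset.card_le_two (a := cc φ x) (b := b)
          omega
        obtain ⟨z, hz1, hz2, hz3⟩ := ex_flag (φ := φ) (i := j) (u := cc φ x) (v := a)
          (by rw [hj]; simp) (by rw [hj]; simp) ne1
        have hRz := hb z (ih z hz2.symm hz3)
        have hbj : b ∈ Fc φ j := by rw [hj]; simp
        obtain ⟨l, hl⟩ := mem_Fc.1 hbj
        have hoz : oo φ (be z) = b := by
          have : nx z.2.1 (!z.2.2) = l := by
            apply nx_third
            · rintro rfl; exact ne2 (by rw [← hz2, ← hl, cc, hz1])
            · rintro rfl; exact ne3 (by rw [← hz3, ← hl, oo, hz1])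
          simp only [oo, be]
          rw [this, hz1, hl]
        exact close R hR (be z) y hRz (by rw [cc_be, hz2, h1]) (by rw [hoz, h2])
    exact key _ path y hxy rfl
  · intro R i j hi0 hR
    have path := hc _ (memF i) _ (memF j)
    have key : ∀ t, Relation.ReflTransGen (fun s s' => s ∈ Finset.univ.image (Fc φ) ∧
        s' ∈ Finset.univ.image (Fc φ) ∧ (s ∩ s').card = 2) (Fc φ i) t → ∀ j, Fc φ j = t → R j := by
      intro t hp
      induction hp with
      | refl => intro j hj; rwa [hF hj]
      | @tail s s' _ hss ih =>
        intro j hj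
        obtain ⟨hs, -, hcard⟩ := hss
        obtain ⟨i', -, hi'⟩ := Finset.mem_image.1 hs
        have hRi := ih i' hi'
        subst hi' hj
        obtain ⟨a, b, hab, hE⟩ := Finset.card_eq_two.1 hcard
        have ha : a ∈ Fc φ i' ∩ Fc φ j := by rw [hE]; simp
        have hb : b ∈ Fc φ i' ∩ Fc φ j := by rw [hE]; simp
        rw [Finset.mem_inter] at ha hb
        by_cases hij : i' = j
        · rwa [← hij]
        obtain ⟨x, rfl, hx2, hx3⟩ := ex_flag ha.1 hb.1 hab
        obtain ⟨y, rfl, hy2, hy3⟩ := ex_flag ha.2 hb.2 hab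
        exact hR x y hRi ⟨hij, hx2.trans hy2.symm, hx3.trans hy3.symm⟩
    exact key _ path j rfl

lemma MM_iff {φ ψ : Fin f → Fin 3 → Fin w} (hφ : Good φ) (hψ : Good ψ)
    (h : ∀ x y, MM φ x y → MM ψ x y) (x y : Fl f) : MM φ x y ↔ MM ψ x y := by
  refine ⟨h x y, fun h' => ?_⟩
  obtain ⟨z, hz⟩ := hφ.mate x
  rwa [hψ.uniq x y z h' (h _ _ hz)]

lemma label_eq {φ ψ : Fin f → Fin 3 → Fin w} (hφ : Good φ)
    (h : ∀ x y, MM φ x y → MM ψ x y) (x y : Fl f) (hxy : cc φ x = cc φ y) : cc ψ x = cc ψ y := by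
  refine hφ.link x y hxy (fun z => cc ψ x = cc ψ z) rfl (fun z hz => hz) ?_
  intro z z' hz hm
  exact hz.trans (h _ _ hm).2.1

lemma exists_perm {φ ψ : Fin f → Fin 3 → Fin w} (hφ : Good φ) (hψ : Good ψ)
    (h : ∀ x y, MM φ x y → MM ψ x y) : ∃ σ : Equiv.Perm (Fin w), ∀ i k, ψ i k = σ (φ i k) := by
  choose a ha using hφ.surj
  have h' : ∀ x y, MM ψ x y → MM φ x y := fun x y => (MM_iff hφ hψ h x y).2
  let s : Fin w → Fin w := fun v => cc ψ (a v)
  have hs : Function.Injective s := by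
    intro u v huv
    have := label_eq hψ h' _ _ huv
    rwa [ha, ha] at this
  refine ⟨Equiv.ofBijective s (Finite.injective_iff_bijective.1 hs), fun i k => ?_⟩
  show ψ i k = cc ψ (a (φ i k))
  exact label_eq hφ h (i, k, true) _ (by rw [ha]; rfl)

lemma dihedral_ne {X : Type*} (α β : X → X) (hα : ∀ x, α (α x) = x) (hα' : ∀ x, α x ≠ x)
    (hβ : ∀ x, β (β x) = x) (hβ' : ∀ x, β x ≠ x) :
    ∀ (j : ℕ) (x : X), β ((fun z => α (β z))^[j] x) ≠ x
  | 0, x => hβ' x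
  | 1, x => by
    intro h
    simp only [Function.iterate_one] at h
    apply hα' (β x)
    rw [← hβ (α (β x)), h]
  | (j+2), x => by
    intro h
    apply dihedral_ne α β hα hα' hβ hβ' j (α (β x))
    rw [Function.iterate_succ_apply', Function.iterate_succ_apply] at h
    have h' := congrArg (fun z => α (β z)) h
    simp only [hβ, hα] at h'
    exact h'

lemma dihedral {X : Type*} [Finite X] (α β : X → X) (hα : ∀ x, α (α x) = x) (hα' : ∀ x, α x ≠ x)
    (hβ : ∀ x, β (β x) = x) (hβ' : ∀ x, β x ≠ x) (x : X) (R : X → Prop) (hx : R x)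
    (hR : ∀ z, R z → β z ≠ x → β z ≠ α x → R (α (β z))) : ∃ z, R z ∧ β z = α x := by
  classical
  set T : X → X := fun z => α (β z) with hT
  have hinj : Function.Injective T := by
    intro a b hab
    have h1 : β a = β b := by rw [← hα (β a), ← hα (β b)]; exact congrArg α hab
    rw [← hβ a, ← hβ b, h1]
  have hper : ∃ n, β (T^[n] x) = α x := by
    obtain ⟨n, hn, hp⟩ := hinj.mem_periodicPts x
    obtain ⟨m, rfl⟩ : ∃ m, n = m + 1 := ⟨n - 1, by omega⟩
    refine ⟨m, ?_⟩
    have h2 : T^[m+1] x = x := hp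
    rw [Function.iterate_succ_apply'] at h2
    rw [← hα (β (T^[m] x))]
    exact congrArg α h2
  have hn := Nat.find_spec hper
  have hmin := fun j => Nat.find_min hper (m := j)
  set n := Nat.find hper
  have key : ∀ j, j ≤ n → R (T^[j] x) := by
    intro j
    induction j with
    | zero => intro _; exact hx
    | succ j ih =>
      intro hj
      rw [Function.iterate_succ_apply']
      exact hR _ (ih (by omega)) (dihedral_ne α β hα hα' hβ hβ' j x) (hmin j (by omega))
  exact ⟨_, key n le_rfl, hn⟩

def IsTree (φ : Fin f → Fin 3 → Fin w) (r : Fin w) (p : Fin w → Fin w) (ht : Fin w → ℕ) : Prop :=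
  ∀ v, v ≠ r → ht (p v) < ht v ∧ ∃ x : Fl f, cc φ x = v ∧ oo φ x = p v

def Up (φ : Fin f → Fin 3 → Fin w) (r : Fin w) (p : Fin w → Fin w) (x : Fl f) : Prop :=
  cc φ x ≠ r ∧ oo φ x = p (cc φ x)

def IsCode (φ : Fin f → Fin 3 → Fin w) (u : Fl f → Prop) (g : Fl f → Option (Fl f)) : Prop :=
  ∃ r p ht, IsTree φ r p ht ∧ (∀ x, u x ↔ Up φ r p x) ∧
    (∀ x y, MM φ x y → x.2.2 = true → ¬ u x → ¬ u (sw x) → x.1 < y.1 → g x = some y) ∧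
    (∀ x y, g x = some y → MM φ x y)

lemma exists_tree {φ : Fin f → Fin 3 → Fin w} (hφ : Good φ) (hf : 0 < f) :
    ∃ r p ht, IsTree φ r p ht := by
  classical
  let i0 : Fin f := ⟨0, hf⟩
  let r : Fin w := φ i0 0
  let D : ℕ → Set (Fin w) := fun n => Nat.rec {r}
    (fun _ S => {v | ∃ x : Fl f, cc φ x = v ∧ oo φ x ∈ S}) n
  have hstep : ∀ i k l, (∃ n, φ i k ∈ D n) → ∃ n, φ i l ∈ D n := by
    intro i k l ⟨n, hn⟩
    by_cases hkl : l = k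
    · exact ⟨n, hkl ▸ hn⟩
    · obtain ⟨b, hb⟩ := nx_ex l k hkl
      exact ⟨n + 1, (i, l, b), rfl, by
        have : oo φ (i, l, b) = φ i k := by simp [oo, hb]
        rw [this]; exact hn⟩
  have hall : ∀ v, ∃ n, v ∈ D n := by
    intro v
    obtain ⟨x, rfl⟩ := hφ.surj v
    have := hφ.conn (fun i => ∀ k, ∃ n, φ i k ∈ D n) i0 x.1
      (fun k => hstep i0 0 k ⟨0, rfl⟩) (by
        intro x y hx hm k
        apply hstep y.1 y.2.1 k
        have := hx x.2.1
        have h2 := hm.2.1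
        unfold cc at h2
        rwa [h2] at this)
    exact this x.2.1
  have hmin : ∀ v, ∃ n, v ∈ D n ∧ ∀ m, v ∈ D m → n ≤ m := fun v => by
    have dp : DecidablePred fun n => v ∈ D n := Classical.decPred _
    exact ⟨@Nat.find _ dp (hall v), @Nat.find_spec _ dp (hall v),
      fun m hm => @Nat.find_min' _ dp (hall v) m hm⟩
  choose ht ht1 ht2 using hmin
  have hp : ∀ v, ∃ q, v ≠ r → ht q < ht v ∧ ∃ x : Fl f, cc φ x = v ∧ oo φ x = q := by
    intro v
    by_cases hv : v = r
    · exact ⟨v, fun h => absurd hv h⟩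
    have hs : v ∈ D (ht v) := ht1 v
    rcases hn : ht v with _ | n
    · rw [hn] at hs
      exact absurd hs hv
    · rw [hn] at hs
      obtain ⟨x, hx, hx2⟩ := hs
      refine ⟨oo φ x, fun _ => ⟨?_, x, hx, rfl⟩⟩
      exact Nat.lt_succ_of_le (ht2 _ _ hx2)
  choose p hp using hp
  exact ⟨r, p, ht, hp⟩

lemma Up_of {φ : Fin f → Fin 3 → Fin w} {r p} {x y : Fl f} (h1 : cc φ x = cc φ y)
    (h2 : oo φ x = oo φ y) (h : Up φ r p x) : Up φ r p y := by
  unfold Up at *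
  rwa [← h1, ← h2]

lemma decode {φ ψ : Fin f → Fin 3 → Fin w} (hφ : Good φ) {u g}
    (cφ : IsCode φ u g) (cψ : IsCode ψ u g) : ∀ x y, MM φ x y → MM ψ x y := by
  obtain ⟨r, p, ht, hT, hu, hg, -⟩ := cφ
  obtain ⟨r', p', ht', hT', hu', -, hg'⟩ := cψ
  have uM : ∀ x y, MM φ x y → u x → u y := fun x y h hx =>
    (hu y).2 (Up_of h.2.1 h.2.2 ((hu x).1 hx))
  have swM : ∀ x y, MM ψ (sw x) (sw y) → MM ψ x y := by
    intro x y h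
    have := h.sw
    rwa [sw_sw, sw_sw] at this
  -- non-tree edges
  have A1 : ∀ x y, MM φ x y → x.1 < y.1 → ¬ u x → ¬ u (sw x) → MM ψ x y := by
    intro x y h hlt h1 h2
    rcases hb : x.2.2 with _ | _
    · apply swM
      apply hg'
      apply hg _ _ h.sw _ h2 _ hlt
      · simp [sw, hb]
      · rwa [sw_sw]
    · exact hg' _ _ (hg x y h hb h1 h2 hlt)
  have A : ∀ x y, MM φ x y → ¬ u x → ¬ u (sw x) → MM ψ x y := by
    intro x y h h1 h2
    rcases lt_or_gt_of_ne h.1 with hlt | hlt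
    · exact A1 x y h hlt h1 h2
    · exact (A1 y x h.symm hlt (fun q => h1 (uM _ _ h.symm q))
        (fun q => h2 (uM _ _ h.symm.sw q))).symm
  choose α hα using hφ.mate
  have hαα : ∀ x, α (α x) = x := fun x => hφ.uniq _ _ _ (hα _) (hα x).symm
  have hαne : ∀ x, α x ≠ x := fun x h => (hα x).1 (by rw [h])
  obtain ⟨N, hN⟩ : ∃ N, ∀ v, ht v ≤ N :=
    ⟨Finset.univ.sup ht, fun v => Finset.le_sup (f := ht) (Finset.mem_univ v)⟩
  have B : ∀ n x y, N - ht (cc φ x) = n → MM φ x y → u x → MM ψ x y := by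
    intro n
    induction n using Nat.strong_induction_on with
    | _ n ih =>
    intro x y hn hxy hux
    have hUx := (hu x).1 hux
    have hy : α x = y := hφ.uniq _ _ _ (hα x) hxy
    obtain ⟨z, ⟨hz1, hz2⟩, hz3⟩ := dihedral α be hαα hαne be_be be_ne x
      (fun z => cc φ z = cc φ x ∧ cc ψ z = cc ψ x) ⟨rfl, rfl⟩ (by
        rintro z ⟨hz1, hz2⟩ hne1 hne2
        have hm := hα (be z)
        have hc : cc φ (be z) = cc φ x := hz1
        have hnu : ¬ u (be z) := by
          intro hub
          have hUb := (hu _).1 hub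
          have ho : oo φ (be z) = oo φ x := by rw [hUb.2, hUx.2, hc]
          by_cases hf : (be z).1 = x.1
          · exact hne1 (flag_ext hφ.inj hf hc ho)
          · exact hne2 (hφ.uniq _ _ _ ⟨fun q => hf q.symm, hc.symm, ho.symm⟩ (hα x))
        have hmψ : MM ψ (be z) (α (be z)) := by
          by_cases hs : u (sw (be z))
          · apply swM
            refine ih _ ?_ _ _ rfl hm.sw hs
            have hUs := (hu _).1 hs
            have h1 := (hT _ hUs.1).1
            rw [← hUs.2, oo_sw, hc] at h1
            have h2 := hN (cc φ (sw (be z)))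
            omega
          · exact A _ _ hm hnu hs
        exact ⟨hm.2.1.symm.trans hc, hmψ.2.1.symm.trans hz2⟩)
    have hyz : be z = y := hz3.trans hy
    have huy : u y := uM _ _ hxy hux
    have hc : cc ψ x = cc ψ y := by rw [← hyz]; exact hz2.symm
    exact ⟨hxy.1, hc, by rw [((hu' _).1 hux).2, ((hu' _).1 huy).2, hc]⟩
  intro x y h
  by_cases h1 : u x
  · exact B _ x y rfl h h1
  by_cases h2 : u (sw x)
  · exact swM _ _ (B _ _ _ rfl h.sw h2)
  · exact A x y h h1 h2

lemma exists_code {φ : Fin f → Fin 3 → Fin w} (hφ : Good φ) (hf : 0 < f) :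
    ∃ (u : Fl f → Prop) (g : Fl f → Option (Fl f)), IsCode φ u g ∧
      2 * {x | g x ≠ none}.ncard + 2 * w ≤ 3 * f + 2 := by
  classical
  obtain ⟨r, p, ht, hT⟩ := exists_tree hφ hf
  choose α hα using hφ.mate
  let P : Fl f → Prop := fun x => x.2.2 = true ∧ ¬ Up φ r p x ∧ ¬ Up φ r p (sw x) ∧ x.1 < (α x).1
  let g : Fl f → Option (Fl f) := fun x => if P x then some (α x) else none
  refine ⟨Up φ r p, g, ⟨r, p, ht, hT, fun x => Iff.rfl, ?_, ?_⟩, ?_⟩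
  · intro x y hm hb h1 h2 hlt
    have hy := hφ.uniq _ _ _ (hα x) hm
    simp only [g]
    rw [if_pos ⟨hb, h1, h2, by rw [hy]; exact hlt⟩, hy]
  · intro x y h
    simp only [g] at h
    split_ifs at h
    rw [← Option.some.inj h]
    exact hα x
  have hset : {x | g x ≠ none} = ((Finset.univ.filter P : Finset (Fl f)) : Set (Fl f)) := by
    ext x
    simp [g]
  rw [hset, Set.ncard_coe_finset]
  set S : Finset (Fl f) := Finset.univ.filter P
  let e : Fl f → Finset (Fin w) := fun x => {cc φ x, oo φ x}
  have hpair : ∀ x y, e x = e y → (cc φ x = cc φ y ∧ oo φ x = oo φ y) ∨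
      (cc φ x = oo φ y ∧ oo φ x = cc φ y) := by
    intro x y h
    have h1 : cc φ x ∈ e y := h ▸ (by simp [e])
    have h2 : oo φ x ∈ e y := h ▸ (by simp [e])
    have hne := cc_ne_oo hφ.inj x
    simp only [e, Finset.mem_insert, Finset.mem_singleton] at h1 h2
    rcases h1 with h1 | h1 <;> rcases h2 with h2 | h2
    · exact absurd (h1.trans h2.symm) hne
    · exact Or.inl ⟨h1, h2⟩
    · exact Or.inr ⟨h1, h2⟩
    · exact absurd (h1.trans h2.symm) hne
  have esw : ∀ x, e (sw x) = e x := by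
    intro x
    simp only [e, cc_sw, oo_sw]
    exact Finset.pair_comm _ _
  have eM : ∀ x y, MM φ x y → e x = e y := by
    intro x y h
    simp only [e, h.2.1, h.2.2]
  have hE : 4 * (Finset.univ.image e).card ≤ 6 * f := by
    have h1 := Finset.mul_card_image_le_card (f := e) (s := (Finset.univ : Finset (Fl f))) (n := 4) (by
      intro a ha
      obtain ⟨x, -, rfl⟩ := Finset.mem_image.1 ha
      have hm := hα x
      have hsub : ({x, sw x, α x, sw (α x)} : Finset (Fl f)) ⊆
          Finset.univ.filter (fun y => e y = e x) := by
        intro y hy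
        simp only [Finset.mem_insert, Finset.mem_singleton] at hy
        simp only [Finset.mem_filter, Finset.mem_univ, true_and]
        rcases hy with rfl | rfl | rfl | rfl
        · rfl
        · exact esw _
        · exact (eM _ _ hm).symm
        · rw [esw]; exact (eM _ _ hm).symm
      refine le_trans (le_of_eq ?_) (Finset.card_le_card hsub)
      have swne : ∀ z : Fl f, z ≠ sw z := by
        intro z h
        have := congrArg (fun z : Fl f => z.2.2) h
        simp [sw] at this
      have n1 : ∀ z z' : Fl f, z.1 ≠ z'.1 → z ≠ z' := fun z z' h q => h (by rw [q])
      rw [Finset.card_insert_of_notMem, Finset.card_insert_of_notMem, Finset.card_pair (swne _)]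
      · simp only [Finset.mem_insert, Finset.mem_singleton, not_or]
        exact ⟨n1 _ _ hm.1, n1 _ _ hm.1⟩
      · simp only [Finset.mem_insert, Finset.mem_singleton, not_or]
        exact ⟨swne _, n1 _ _ hm.1, n1 _ _ hm.1⟩)
    simp only [Finset.card_univ, Fintype.card_prod, Fintype.card_fin, Fintype.card_bool] at h1
    omega
  choose t ht1 ht2 using fun v : {v : Fin w // v ≠ r} => (hT v.1 v.2).2
  let V : Finset {v : Fin w // v ≠ r} := Finset.univ
  have tUp : ∀ v, Up φ r p (t v) := fun v => ⟨by rw [ht1]; exact v.2, by rw [ht1, ht2]⟩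
  have hVc : V.card + 1 = w := by
    have : V.card = w - 1 := by simp [V]
    have := r.2
    omega
  have hVi : (V.image (fun v => e (t v))).card = V.card := by
    apply Finset.card_image_of_injective
    intro v v' h
    rcases hpair _ _ h with ⟨h1, -⟩ | ⟨h1, h2⟩
    · rw [ht1, ht1] at h1
      exact Subtype.ext h1
    · rw [ht1, ht2] at h1
      rw [ht1, ht2] at h2
      have q1 := (hT v.1 v.2).1
      have q2 := (hT v'.1 v'.2).1
      rw [h2] at q1
      rw [← h1] at q2
      omega
  have hSi : (S.image e).card = S.card := by
    apply Finset.card_image_of_injOn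
    intro x hx y hy h
    have hx' := (Finset.mem_filter.1 (Finset.mem_coe.1 hx)).2
    have hy' := (Finset.mem_filter.1 (Finset.mem_coe.1 hy)).2
    have nM : ¬ MM φ x y := by
      intro hm
      have e1 := hφ.uniq _ _ _ (hα x) hm
      have e2 := hφ.uniq _ _ _ (hα y) hm.symm
      have l1 := hx'.2.2.2
      have l2 := hy'.2.2.2
      rw [e1] at l1
      rw [e2] at l2
      exact lt_asymm l1 l2
    have nM2 : ¬ MM φ x (sw y) := by
      intro hm
      have e1 := hφ.uniq _ _ _ (hα x) hm
      have hm2 := hm.symm.sw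
      rw [sw_sw] at hm2
      have e2 := hφ.uniq _ _ _ (hα y) hm2
      have l1 := hx'.2.2.2
      have l2 := hy'.2.2.2
      rw [e1] at l1
      rw [e2] at l2
      exact lt_asymm l1 l2
    by_cases hf : x.1 = y.1
    · rcases hpair _ _ h with ⟨h1, h2⟩ | ⟨h1, h2⟩
      · exact flag_ext hφ.inj hf h1 h2
      · have := flag_ext hφ.inj (x := x) (y := sw y) hf h1 (by rw [oo_sw]; exact h2)
        have q := hx'.1
        rw [this] at q
        simp [sw, hy'.1] at q
    · rcases hpair _ _ h with ⟨h1, h2⟩ | ⟨h1, h2⟩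
      · exact absurd ⟨hf, h1, h2⟩ nM
      · exact absurd ⟨hf, h1, by rw [oo_sw]; exact h2⟩ nM2
  have hdis : Disjoint (S.image e) (V.image (fun v => e (t v))) := by
    rw [Finset.disjoint_left]
    intro a ha hb
    obtain ⟨x, hx, rfl⟩ := Finset.mem_image.1 ha
    obtain ⟨v, -, hv⟩ := Finset.mem_image.1 hb
    have hx' := (Finset.mem_filter.1 hx).2
    rcases hpair _ _ hv with ⟨h1, h2⟩ | ⟨h1, h2⟩
    · exact hx'.2.1 (Up_of h1 h2 (tUp v))
    · exact hx'.2.2.1 (Up_of h1 (by rw [oo_sw]; exact h2) (tUp v))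
  have hun := Finset.card_le_card (s := S.image e ∪ V.image (fun v => e (t v)))
    (t := Finset.univ.image e) (by
      apply Finset.union_subset
      · exact Finset.image_subset_image (Finset.subset_univ _)
      · intro a ha
        obtain ⟨v, -, rfl⟩ := Finset.mem_image.1 ha
        exact Finset.mem_image_of_mem _ (Finset.mem_univ _))
  rw [Finset.card_union_of_disjoint hdis, hSi, hVi] at hun
  omega

lemma card_partial {X : Type*} [Fintype X] [Nonempty X] (M : ℕ) :
    Nat.card {g : X → Option X // {x | g x ≠ none}.ncard ≤ M} ≤
      Fintype.card X ^ M * 2 ^ Fintype.card X := by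
  classical
  rw [Nat.card_eq_fintype_card, Fintype.card_subtype]
  set G : Finset (X → Option X) := Finset.univ.filter (fun g => {x | g x ≠ none}.ncard ≤ M)
  let sp : (X → Option X) → Finset X := fun g => Finset.univ.filter (fun x => g x ≠ none)
  have hsp : ∀ g, {x | g x ≠ none}.ncard = (sp g).card := by
    intro g
    rw [← Set.ncard_coe_finset]
    congr 1
    ext x
    simp [sp]
  have h := Finset.card_le_mul_card_image (f := sp) G (Fintype.card X ^ M) (by
    intro A hA
    obtain ⟨g0, hg0, hgA⟩ := Finset.mem_image.1 hA
    have hcard : A.card ≤ M := by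
      rw [← hgA, ← hsp]
      exact (Finset.mem_filter.1 hg0).2
    let d : X := Classical.arbitrary X
    have hle : (G.filter (fun g => sp g = A)).card ≤ (Finset.univ : Finset (A → X)).card := by
      apply Finset.card_le_card_of_injOn (fun g (a : A) => (g a).getD d) (fun _ _ => Finset.mem_coe.2 (Finset.mem_univ _))
      intro g hg g' hg' hgg
      have h1 : sp g = A := (Finset.mem_filter.1 (Finset.mem_coe.1 hg)).2
      have h2 : sp g' = A := (Finset.mem_filter.1 (Finset.mem_coe.1 hg')).2
      funext x
      by_cases hx : x ∈ A
      · have q := congrFun hgg ⟨x, hx⟩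
        have m1 : g x ≠ none := by rw [← h1] at hx; exact (Finset.mem_filter.1 hx).2
        have m2 : g' x ≠ none := by rw [← h2] at hx; exact (Finset.mem_filter.1 hx).2
        obtain ⟨a, ha⟩ := Option.ne_none_iff_exists'.1 m1
        obtain ⟨b, hb⟩ := Option.ne_none_iff_exists'.1 m2
        simp only [ha, hb, Option.getD_some] at q
        rw [ha, hb, q]
      · have m1 : g x = none := by
          by_contra hc
          exact hx (by rw [← h1]; exact Finset.mem_filter.2 ⟨Finset.mem_univ _, hc⟩)
        have m2 : g' x = none := by
          by_contra hc
          exact hx (by rw [← h2]; exact Finset.mem_filter.2 ⟨Finset.mem_univ _, hc⟩)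
        rw [m1, m2]
    refine hle.trans ?_
    rw [Finset.card_univ, Fintype.card_fun, Fintype.card_coe]
    exact Nat.pow_le_pow_right Fintype.card_pos hcard)
  refine h.trans (Nat.mul_le_mul_left _ ?_)
  refine (Finset.card_le_univ _).trans ?_
  rw [Fintype.card_finset]

abbrev Surf (f w : ℕ) := {F : Finset (Finset (Fin w)) // IsClosedSurface F ∧ F.card = f}

lemma exists_param (X : Surf f w) : ∃ φ : Fin f → Fin 3 → Fin w,
    (∀ i, Function.Injective (φ i)) ∧ Function.Injective (Fc φ) ∧ Finset.univ.image (Fc φ) = X.1 := by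
  classical
  obtain ⟨F, hF, hc⟩ := X
  let e := (Finset.equivFinOfCardEq hc).symm
  have h3 : ∀ i, (e i).1.card = 3 := fun i => hF.2.1 _ (e i).2
  let φ : Fin f → Fin 3 → Fin w := fun i k => ((Finset.equivFinOfCardEq (h3 i)).symm k).1
  have hFc : ∀ i, Fc φ i = (e i).1 := by
    intro i
    ext v
    rw [mem_Fc]
    constructor
    · rintro ⟨k, rfl⟩
      exact ((Finset.equivFinOfCardEq (h3 i)).symm k).2
    · intro hv
      exact ⟨Finset.equivFinOfCardEq (h3 i) ⟨v, hv⟩, by simp [φ]⟩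
  refine ⟨φ, ?_, ?_, ?_⟩
  · intro i k l h
    exact (Finset.equivFinOfCardEq (h3 i)).symm.injective (Subtype.ext h)
  · intro i j h
    rw [hFc, hFc] at h
    exact e.injective (Subtype.ext h)
  · ext t
    simp only [Finset.mem_image, Finset.mem_univ, true_and, hFc]
    constructor
    · rintro ⟨i, rfl⟩
      exact (e i).2
    · intro ht
      exact ⟨e.symm ⟨t, ht⟩, by simp⟩

lemma good_perm {φ : Fin f → Fin 3 → Fin w} (hi : ∀ i, Function.Injective (φ i))
    (hF : Function.Injective (Fc φ)) (hS : IsClosedSurface (Finset.univ.image (Fc φ)))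
    (π : Equiv.Perm (Fin f)) : Good (fun i => φ (π i)) := by
  have h : Fc (fun i => φ (π i)) = Fc φ ∘ π := rfl
  apply good_of_surface (fun i => hi (π i))
  · rw [h]; exact hF.comp π.injective
  · rw [h]
    have : Finset.univ.image (Fc φ ∘ π) = Finset.univ.image (Fc φ) := by
      rw [← Finset.image_image, Finset.image_univ_equiv]
    rwa [this]

lemma rigid {φ : Fin f → Fin 3 → Fin w} (hi : ∀ i, Function.Injective (φ i))
    (hG : Good φ) (π τ : Equiv.Perm (Fin f)) (hπ : Good (fun i => φ (π i)))
    (h : ∀ x y, MM (fun i => φ (π i)) x y → MM (fun i => φ (τ i)) x y) (i0 : Fin f)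
    (h0 : π i0 = τ i0) : π = τ := by
  ext1 j
  refine hπ.conn (fun i => π i = τ i) i0 j h0 ?_
  intro x y hx hm
  have hm' := h x y hm
  let lf : Equiv.Perm (Fin f) → Fl f → Fl f := fun ρ x => (ρ x.1, x.2)
  have l1 : MM φ (lf π x) (lf π y) := ⟨fun q => hm.1 (π.injective q), hm.2.1, hm.2.2⟩
  have l2 : MM φ (lf τ x) (lf τ y) := ⟨fun q => hm.1 (τ.injective q), hm'.2.1, hm'.2.2⟩
  have l3 : lf τ x = lf π x := by
    show (τ x.1, x.2) = (π x.1, x.2)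
    rw [hx]
  rw [l3] at l2
  exact congrArg Prod.fst (hG.uniq _ _ _ l1 l2)

lemma count (hf : 0 < f) :
    Tcount f w * f.factorial ≤ 2 ^ (6 * f) *
      (((6 * f) ^ ((3 * f + 2 - 2 * w) / 2) * 2 ^ (6 * f)) * f) := by
  classical
  let M := (3 * f + 2 - 2 * w) / 2
  let rel : Surf f w → Surf f w → Prop := fun X Y => SurfIso X.1 Y.1
  let Q := Quot rel
  choose Φ h1 h2 h3 using (exists_param (f := f) (w := w))
  have hS : ∀ X, IsClosedSurface (Finset.univ.image (Fc (Φ X))) := fun X => by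
    rw [h3]; exact X.2.1
  have hG : ∀ X (π : Equiv.Perm (Fin f)), Good (fun i => Φ X (π i)) := fun X π =>
    good_perm (h1 X) (h2 X) (hS X) π
  choose U G hC hM using fun X π => exists_code (hG X π) hf
  let i0 : Fin f := ⟨0, hf⟩
  let code : Q × Equiv.Perm (Fin f) → (Fl f → Prop) ×
      ({g : Fl f → Option (Fl f) // {x | g x ≠ none}.ncard ≤ M} × Fin f) :=
    fun q => (U q.1.out q.2, ⟨G q.1.out q.2, by have := hM q.1.out q.2; simp only [M]; omega⟩,
      q.2.symm i0)
  have hinj : Function.Injective code := by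
    rintro ⟨q, π⟩ ⟨q', τ⟩ h
    have e1 : U q.out π = U q'.out τ := congrArg (fun z => z.1) h
    have e2 : G q.out π = G q'.out τ := congrArg (fun z => z.2.1.1) h
    have e3 : π.symm i0 = τ.symm i0 := congrArg (fun z => z.2.2) h
    have c1 := hC q.out π
    have c2 := hC q'.out τ
    rw [← e1, ← e2] at c2
    have hMM := decode (hG q.out π) c1 c2
    obtain ⟨σ, hσ⟩ := exists_perm (hG q.out π) (hG q'.out τ) hMM
    have hq : q = q' := by
      rw [← Quot.out_eq q, ← Quot.out_eq q']
      apply Quot.sound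
      refine ⟨σ, ?_⟩
      rw [← h3 q.out, ← h3 q'.out]
      have hface : ∀ i, (Fc (Φ q.out) (π i)).image σ = Fc (Φ q'.out) (τ i) := by
        intro i
        simp only [Fc, Finset.image_image]
        congr 1
        funext k
        exact (hσ i k).symm
      ext t
      simp only [Finset.mem_image, Finset.mem_univ, true_and]
      constructor
      · rintro ⟨_, ⟨i, rfl⟩, rfl⟩
        exact ⟨τ (π.symm i), by rw [← hface]; simp⟩
      · rintro ⟨i, rfl⟩
        exact ⟨_, ⟨π (τ.symm i), rfl⟩, by rw [hface]; simp⟩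
    subst hq
    have hr := rigid (h1 q.out) (by simpa using hG q.out 1) π τ (hG _ π) hMM (π.symm i0)
      (by rw [Equiv.apply_symm_apply, e3, Equiv.apply_symm_apply])
    rw [hr]
  have hcard := Nat.card_le_card_of_injective code hinj
  haveI : Nonempty (Fl f) := ⟨(i0, 0, true)⟩
  have hFl : Fintype.card (Fl f) = 6 * f := by
    simp only [Fintype.card_prod, Fintype.card_fin, Fintype.card_bool]
    ring
  have hp := card_partial (X := Fl f) M
  rw [hFl] at hp
  have hQ : Nat.card Q = Tcount f w := rfl
  rw [Nat.card_prod, Nat.card_prod, Nat.card_prod, hQ, Nat.card_perm, Nat.card_fin] at hcard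
  have hU : Nat.card (Fl f → Prop) = 2 ^ (6 * f) := by
    rw [Nat.card_eq_fintype_card, Fintype.card_fun, Fintype.card_prop, hFl]
  rw [hU] at hcard
  exact hcard.trans (Nat.mul_le_mul_left _ (Nat.mul_le_mul_right _ hp))

lemma size_bounds (hf : 0 < f) (h : Tcount f w ≠ 0) : 2 * w ≤ 3 * f + 2 ∧ w ≤ 3 * f := by
  have hne : Nonempty (Surf f w) := by
    by_contra hc
    rw [not_nonempty_iff] at hc
    apply h
    unfold Tcount
    haveI : IsEmpty (Quot (fun (X Y : Surf f w) => SurfIso X.1 Y.1)) :=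
      ⟨fun q => hc.false q.out⟩
    exact Nat.card_of_isEmpty
  obtain ⟨X⟩ := hne
  obtain ⟨φ, h1, h2, h3⟩ := exists_param X
  have hG : Good φ := good_of_surface h1 h2 (by rw [h3]; exact X.2.1)
  obtain ⟨u, g, -, hb⟩ := exists_code hG hf
  refine ⟨by omega, ?_⟩
  have hs : Function.Surjective (fun z : Fin f × Fin 3 => φ z.1 z.2) := by
    intro v
    obtain ⟨x, hx⟩ := hG.surj v
    exact ⟨(x.1, x.2.1), hx⟩
  have := Fintype.card_le_of_surjective _ hs
  simp only [Fintype.card_prod, Fintype.card_fin] at this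
  omega

end TSurf

/-- **Theorem (counting triangulated surfaces).**
For every `δ > 0` there is a constant `C_δ` such that for all positive integers `f`
and `w`, `|T(f,w)| ≤ C_δ^f · f^(f/2) · w^(-(1-δ)w)`. -/
theorem Tcount_upper_bound (δ : ℝ) (hδ : 0 < δ) :
    ∃ C : ℝ, 0 < C ∧ ∀ f w : ℕ, 0 < f → 0 < w →
      (Tcount f w : ℝ) ≤ C ^ f * (f : ℝ) ^ ((f : ℝ) / 2) * (w : ℝ) ^ (-(1 - δ) * w) := by
  refine ⟨2 ^ 12 * 6 ^ 3 * 3 * 4 * 27, by norm_num, ?_⟩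
  intro f w hf hw
  by_cases h0 : Tcount f w = 0
  · rw [h0]; push_cast; positivity
  obtain ⟨hb1, hb2⟩ := TSurf.size_bounds hf h0
  have hc := TSurf.count (w := w) hf
  set M := (3 * f + 2 - 2 * w) / 2 with hMdef
  have hM1 : 2 * M + 2 * w ≤ 3 * f + 2 := by omega
  have hM2 : M ≤ 3 * f := by omega
  have hfR : (1 : ℝ) ≤ f := by exact_mod_cast hf
  have hwR : (1 : ℝ) ≤ w := by exact_mod_cast hw
  have hf0 : (0 : ℝ) < f := by linarith
  have hw0 : (0 : ℝ) < w := by linarith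
  have hcR : (Tcount f w : ℝ) * f.factorial ≤
      2 ^ (6 * f) * (((6 * f : ℝ) ^ M * 2 ^ (6 * f)) * f) := by exact_mod_cast hc
  -- factorial
  have hfac : (f : ℝ) ^ f ≤ 3 ^ f * f.factorial := by
    have h1 := Real.pow_div_factorial_le_exp (f : ℝ) hf0.le f
    have h2 : Real.exp f ≤ 3 ^ f := by
      have h3 : Real.exp (f : ℝ) = Real.exp 1 ^ f := by rw [← Real.exp_nat_mul, mul_one]
      rw [h3]
      exact pow_le_pow_left₀ (Real.exp_pos _).le (by linarith [Real.exp_one_lt_d9]) _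
    rw [div_le_iff₀ (by positivity)] at h1
    exact h1.trans (mul_le_mul_of_nonneg_right h2 (by positivity))
  have hsq : (f : ℝ) ^ 2 ≤ 4 ^ f := by
    have h1 : (f : ℝ) ≤ 2 ^ f := by exact_mod_cast Nat.lt_two_pow_self.le
    calc (f : ℝ) ^ 2 ≤ (2 ^ f) ^ 2 := pow_le_pow_left₀ hf0.le h1 2
      _ = 4 ^ f := by rw [← pow_mul, mul_comm, pow_mul]; norm_num
  have h6 : (6 : ℝ) ^ M ≤ (6 ^ 3) ^ f := by
    rw [← pow_mul]
    exact pow_le_pow_right₀ (by norm_num) hM2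
  have hfM : (f : ℝ) ^ M ≤ (f : ℝ) ^ f * f * (f : ℝ) ^ ((f : ℝ) / 2) * (f : ℝ) ^ (-(w : ℝ)) := by
    have e : (f : ℝ) ^ f * f * (f : ℝ) ^ ((f : ℝ) / 2) * (f : ℝ) ^ (-(w : ℝ)) =
        (f : ℝ) ^ ((f : ℝ) + 1 + (f : ℝ) / 2 + -(w : ℝ)) := by
      rw [Real.rpow_add hf0, Real.rpow_add hf0, Real.rpow_add hf0, Real.rpow_one,
        Real.rpow_natCast]
    rw [e, ← Real.rpow_natCast]
    apply Real.rpow_le_rpow_of_exponent_le hfR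
    have : (2 * M + 2 * w : ℝ) ≤ 3 * f + 2 := by exact_mod_cast hM1
    linarith
  have hfw : (f : ℝ) ^ (-(w : ℝ)) ≤ 27 ^ f * (w : ℝ) ^ (-(1 - δ) * w) := by
    have h1 : (f : ℝ) ^ (-(w : ℝ)) ≤ (w / 3 : ℝ) ^ (-(w : ℝ)) := by
      apply Real.rpow_le_rpow_of_nonpos (by positivity)
      · have : (w : ℝ) ≤ 3 * f := by exact_mod_cast hb2
        linarith
      · linarith
    have h2 : (w / 3 : ℝ) ^ (-(w : ℝ)) = 3 ^ w * (w : ℝ) ^ (-(w : ℝ)) := by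
      rw [Real.div_rpow hw0.le (by norm_num), Real.rpow_neg (by norm_num : (0:ℝ) ≤ 3),
        Real.rpow_natCast, div_inv_eq_mul, mul_comm]
    have h3 : (3 : ℝ) ^ w ≤ 27 ^ f := by
      have : (27 : ℝ) = 3 ^ 3 := by norm_num
      rw [this, ← pow_mul]
      exact pow_le_pow_right₀ (by norm_num) hb2
    have h4 : (w : ℝ) ^ (-(w : ℝ)) ≤ (w : ℝ) ^ (-(1 - δ) * w) := by
      apply Real.rpow_le_rpow_of_exponent_le hwR
      nlinarith [mul_pos hδ hw0]
    rw [h2] at h1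
    exact h1.trans (mul_le_mul h3 h4 (by positivity) (by positivity))
  set A := (f : ℝ) ^ ((f : ℝ) / 2) with hA
  set B := (w : ℝ) ^ (-(1 - δ) * w) with hB
  have hA0 : 0 < A := by positivity
  have hB0 : 0 < B := by positivity
  have hff : (0 : ℝ) < (f : ℝ) ^ f := by positivity
  have hfin : (Tcount f w : ℝ) * (f : ℝ) ^ f ≤
      ((2 ^ 12 * 6 ^ 3 * 3 * 4 * 27) ^ f * A * B) * (f : ℝ) ^ f := by
    calc (Tcount f w : ℝ) * (f : ℝ) ^ f
        ≤ (Tcount f w : ℝ) * (3 ^ f * f.factorial) := by gcongr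
      _ = 3 ^ f * ((Tcount f w : ℝ) * f.factorial) := by ring
      _ ≤ 3 ^ f * (2 ^ (6 * f) * (((6 * f : ℝ) ^ M * 2 ^ (6 * f)) * f)) := by gcongr
      _ = 3 ^ f * (2 ^ 12) ^ f * 6 ^ M * f * (f : ℝ) ^ M := by
          rw [mul_pow, ← pow_mul (2 : ℝ) 12 f, show 12 * f = 6 * f + 6 * f by ring, pow_add]
          ring
      _ ≤ 3 ^ f * (2 ^ 12) ^ f * (6 ^ 3) ^ f * f *
          ((f : ℝ) ^ f * f * A * (27 ^ f * B)) := by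
          gcongr
          exact hfM.trans (by gcongr)
      _ = 3 ^ f * (2 ^ 12) ^ f * (6 ^ 3) ^ f * (f : ℝ) ^ 2 * 27 ^ f * A * B * (f : ℝ) ^ f := by ring
      _ ≤ 3 ^ f * (2 ^ 12) ^ f * (6 ^ 3) ^ f * 4 ^ f * 27 ^ f * A * B * (f : ℝ) ^ f := by gcongr
      _ = _ := by simp only [mul_pow]; ring
  exact le_of_mul_le_mul_right hfin hff
end
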